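/- arXiv:1908.00514 — 2 statements merged into one kernel-verified Lean document; each statement's English description precedes it below -/
import Mathlib

section
/- For all constants L > 0, γ > 1, μ > 0, ρ̄ > 0, ℓ₀ > 0, J̲ > 0, J̄ > 0, m₀ ≥ 0, P₀ ≥ 0, E₀ ≥ 0, K₀ ≥ 0, D₀ ≥ 0, T > 0 there exists a constant C > 0 with the following property. Let ρ₀ ∈ C¹([0,L]) with 0 < ρ₀ ≤ ρ̄, and let (J, v, π) be a sufficiently smooth classical solution of (E1)–(E3) on [0,L]×[0,T] with boundary condition v(0,t) = v(L,t) = 0, such that π₀ ≥ 0, ‖π₀‖_∞ ≤ P₀, J̲ ≤ J₀ ≤ J̄, ∫₀ᴸ J₀ dy = ℓ₀, ∫₀ᴸ ρ₀ dy = m₀, ∫₀ᴸ ( ρ₀ v₀²/2 + J₀ π₀/(γ−1) ) dy = E₀, ‖G₀‖₂ ≤ K₀ where G₀ := μ(∂_y v₀)/J₀ − π₀, and ‖∂_y J₀‖₂ + ‖∂_y π₀‖₂ ≤ D₀. Then: sup_{0≤t≤T} ( ‖∂_t J(·,t)‖₂² + ‖∂_y v(·,t)‖₂² ) + ∫₀ᵀ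 ( ‖√ρ₀ ∂_t v(·,t)‖₂² + ‖∂_y² v(·,t)‖₂² + ‖∂_y ∂_t J(·,t)‖₂² + ‖∂_t π(·,t)‖_∞² + ‖∂_y ∂_t π(·,t)‖₂^{4/3} ) dt ≤ C. -/
open Set MeasureTheory

/-- A classical solution `(J, v, π)` of the Lagrangian 1D non-heat-conductive compressible
Navier–Stokes system (E1)–(E3) on `[0,L] × [0,T]`, together with its partial derivatives
`Jt = ∂ₜJ`, `vy = ∂_y v`, `vt = ∂ₜv`, `w = ∂_y((∂_y v)/J)`, `πy = ∂_y π`, `πt = ∂ₜπ`,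
all continuous on `[0,L] × [0,T]`, and `J > 0` everywhere. -/
structure ClassicalSolution (L T μ γ : ℝ) (ρ₀ : ℝ → ℝ)
    (J v π Jt vy vt w πy πt : ℝ → ℝ → ℝ) : Prop where
  Jpos : ∀ y ∈ Set.Icc (0:ℝ) L, ∀ t ∈ Set.Icc (0:ℝ) T, 0 < J y t
  contJ : ContinuousOn (fun p : ℝ × ℝ => J p.1 p.2) (Set.Icc 0 L ×ˢ Set.Icc 0 T)
  contv : ContinuousOn (fun p : ℝ × ℝ => v p.1 p.2) (Set.Icc 0 L ×ˢ Set.Icc 0 T)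
  contPi : ContinuousOn (fun p : ℝ × ℝ => π p.1 p.2) (Set.Icc 0 L ×ˢ Set.Icc 0 T)
  hJt : ∀ y ∈ Set.Icc (0:ℝ) L, ∀ t ∈ Set.Icc (0:ℝ) T,
    HasDerivWithinAt (fun s => J y s) (Jt y t) (Set.Icc 0 T) t
  hvy : ∀ y ∈ Set.Icc (0:ℝ) L, ∀ t ∈ Set.Icc (0:ℝ) T,
    HasDerivWithinAt (fun x => v x t) (vy y t) (Set.Icc 0 L) y
  hvt : ∀ y ∈ Set.Icc (0:ℝ) L, ∀ t ∈ Set.Icc (0:ℝ) T,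
    HasDerivWithinAt (fun s => v y s) (vt y t) (Set.Icc 0 T) t
  hw : ∀ y ∈ Set.Icc (0:ℝ) L, ∀ t ∈ Set.Icc (0:ℝ) T,
    HasDerivWithinAt (fun x => vy x t / J x t) (w y t) (Set.Icc 0 L) y
  hPiy : ∀ y ∈ Set.Icc (0:ℝ) L, ∀ t ∈ Set.Icc (0:ℝ) T,
    HasDerivWithinAt (fun x => π x t) (πy y t) (Set.Icc 0 L) y
  hPit : ∀ y ∈ Set.Icc (0:ℝ) L, ∀ t ∈ Set.Icc (0:ℝ) T,
    HasDerivWithinAt (fun s => π y s) (πt y t) (Set.Icc 0 T) t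
  contJt : ContinuousOn (fun p : ℝ × ℝ => Jt p.1 p.2) (Set.Icc 0 L ×ˢ Set.Icc 0 T)
  contvy : ContinuousOn (fun p : ℝ × ℝ => vy p.1 p.2) (Set.Icc 0 L ×ˢ Set.Icc 0 T)
  contvt : ContinuousOn (fun p : ℝ × ℝ => vt p.1 p.2) (Set.Icc 0 L ×ˢ Set.Icc 0 T)
  contw : ContinuousOn (fun p : ℝ × ℝ => w p.1 p.2) (Set.Icc 0 L ×ˢ Set.Icc 0 T)
  contPiy : ContinuousOn (fun p : ℝ × ℝ => πy p.1 p.2) (Set.Icc 0 L ×ˢ Set.Icc 0 T)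
  contPit : ContinuousOn (fun p : ℝ × ℝ => πt p.1 p.2) (Set.Icc 0 L ×ˢ Set.Icc 0 T)
  eq1 : ∀ y ∈ Set.Icc (0:ℝ) L, ∀ t ∈ Set.Icc (0:ℝ) T, Jt y t = vy y t
  eq2 : ∀ y ∈ Set.Icc (0:ℝ) L, ∀ t ∈ Set.Icc (0:ℝ) T,
    ρ₀ y * vt y t - μ * w y t + πy y t = 0
  eq3 : ∀ y ∈ Set.Icc (0:ℝ) L, ∀ t ∈ Set.Icc (0:ℝ) T,
    πt y t + γ * (vy y t / J y t) * π y t = μ * (γ - 1) * (vy y t / J y t) ^ 2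


lemma aux_mono {T : ℝ} {f f' : ℝ → ℝ}
    (hf : ∀ t ∈ Icc (0:ℝ) T, HasDerivWithinAt f (f' t) (Icc 0 T) t)
    (h : ∀ t ∈ Icc (0:ℝ) T, f' t ≤ 0) {t : ℝ} (ht : t ∈ Icc (0:ℝ) T) : f t ≤ f 0 := by
  have hanti : AntitoneOn f (Icc 0 T) := by
    apply antitoneOn_of_deriv_nonpos (convex_Icc 0 T)
    · exact fun x hx => (hf x hx).continuousWithinAt
    · intro x hx
      rw [interior_Icc] at hx ⊢
      exact ((hf x (Ioo_subset_Icc_self hx)).mono Ioo_subset_Icc_self).differentiableWithinAt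
    · intro x hx
      rw [interior_Icc] at hx
      have := (hf x (Ioo_subset_Icc_self hx)).hasDerivAt (Icc_mem_nhds hx.1 hx.2)
      rw [this.deriv]
      exact h x (Ioo_subset_Icc_self hx)
  exact hanti ⟨le_rfl, ht.1.trans ht.2⟩ ht ht.1

lemma aux_const {T : ℝ} {f f' : ℝ → ℝ}
    (hf : ∀ t ∈ Icc (0:ℝ) T, HasDerivWithinAt f (f' t) (Icc 0 T) t)
    (h : ∀ t ∈ Icc (0:ℝ) T, f' t = 0) {t : ℝ} (ht : t ∈ Icc (0:ℝ) T) : f t = f 0 := by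
  apply le_antisymm
  · exact aux_mono hf (fun t ht => (h t ht).le) ht
  · have := aux_mono (f := fun t => - f t) (f' := fun t => - f' t) (fun t ht => (hf t ht).neg)
      (fun t ht => by simp [h t ht]) ht
    simpa using this

lemma aux_bound {L T : ℝ} {k : ℝ → ℝ → ℝ} (hk : Continuous (Function.uncurry k)) :
    ∃ M : ℝ, 0 ≤ M ∧ ∀ y ∈ Icc (0:ℝ) L, ∀ t ∈ Icc (0:ℝ) T, |k y t| ≤ M := by
  obtain ⟨M, hM⟩ := (isCompact_Icc (a := (0:ℝ)) (b := L)).prod (isCompact_Icc (a := (0:ℝ)) (b := T))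
    |>.exists_bound_of_continuousOn hk.continuousOn
  refine ⟨max M 0, le_max_right _ _, fun y hy t ht => ?_⟩
  exact (hM (y, t) ⟨hy, ht⟩).trans (le_max_left _ _)

lemma par_deriv {L T : ℝ} (hL : 0 ≤ L) {f ft k : ℝ → ℝ → ℝ}
    (cf : Continuous (Function.uncurry f)) (cft : Continuous (Function.uncurry ft))
    (ck : Continuous (Function.uncurry k))
    (hf : ∀ y ∈ Icc (0:ℝ) L, ∀ t ∈ Icc (0:ℝ) T,
      HasDerivWithinAt (fun s => f y s) (ft y t) (Icc 0 T) t)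
    {t : ℝ} (ht : t ∈ Icc (0:ℝ) T) :
    HasDerivWithinAt (fun s => ∫ y in (0:ℝ)..L, (f y s - f y t) * k y s)
      (∫ y in (0:ℝ)..L, ft y t * k y t) (Icc 0 T) t := by
  obtain ⟨M, hM0, hM⟩ := aux_bound (L := L) (T := T) cft
  obtain ⟨K, hK0, hK⟩ := aux_bound (L := L) (T := T) ck
  rw [hasDerivWithinAt_iff_tendsto_slope]
  have e : slope (fun s => ∫ y in (0:ℝ)..L, (f y s - f y t) * k y s) t =
      fun s => ∫ y in (0:ℝ)..L, slope (f y) t s * k y s := by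
    funext s
    simp only [slope, sub_self, zero_mul, intervalIntegral.integral_zero, vsub_eq_sub, sub_zero,
      smul_eq_mul]
    rw [← intervalIntegral.integral_const_mul]
    congr 1; funext y; ring
  rw [e]
  apply intervalIntegral.tendsto_integral_filter_of_dominated_convergence (fun _ => M * K)
  · refine Filter.Eventually.of_forall fun s => ?_
    apply Continuous.aestronglyMeasurable
    simp only [slope, vsub_eq_sub, smul_eq_mul]
    fun_prop
  · filter_upwards [self_mem_nhdsWithin] with s hs
    refine Filter.Eventually.of_forall fun y hy => ?_
    rw [uIoc_of_le hL] at hy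
    have hy' : y ∈ Icc 0 L := Ioc_subset_Icc_self hy
    rw [norm_mul]
    refine mul_le_mul ?_ (hK y hy' s hs.1) (norm_nonneg _) hM0
    have := (convex_Icc (0:ℝ) T).norm_image_sub_le_of_norm_hasDerivWithin_le
      (fun x hx => hf y hy' x hx) (fun x hx => hM y hy' x hx) ht hs.1
    simp only [slope, vsub_eq_sub, smul_eq_mul, norm_mul, norm_inv]
    have hne : 0 < ‖s - t‖ := norm_pos_iff.2 (sub_ne_zero.2 hs.2)
    rw [inv_mul_le_iff₀ hne]
    linarith
  · simp
  · refine Filter.Eventually.of_forall fun y hy => ?_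
    rw [uIoc_of_le hL] at hy
    have hy' : y ∈ Icc 0 L := Ioc_subset_Icc_self hy
    refine Filter.Tendsto.mul ?_ ?_
    · exact hasDerivWithinAt_iff_tendsto_slope.1 (hf y hy' t ht)
    · have : Continuous (fun s => k y s) := by fun_prop
      exact this.continuousAt.continuousWithinAt

lemma par_deriv1 {L T : ℝ} (hL : 0 ≤ L) {f ft : ℝ → ℝ → ℝ}
    (cf : Continuous (Function.uncurry f)) (cft : Continuous (Function.uncurry ft))
    (hf : ∀ y ∈ Icc (0:ℝ) L, ∀ t ∈ Icc (0:ℝ) T,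
      HasDerivWithinAt (fun s => f y s) (ft y t) (Icc 0 T) t)
    {t : ℝ} (ht : t ∈ Icc (0:ℝ) T) :
    HasDerivWithinAt (fun s => ∫ y in (0:ℝ)..L, f y s)
      (∫ y in (0:ℝ)..L, ft y t) (Icc 0 T) t := by
  have h := (par_deriv hL cf cft (k := fun _ _ => 1) (by fun_prop) hf ht).add_const
    (∫ y in (0:ℝ)..L, f y t)
  simp only [mul_one] at h
  refine h.congr_of_mem (fun s _ => ?_) ht
  rw [intervalIntegral.integral_sub]
  · ring
  · apply Continuous.intervalIntegrable; fun_prop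
  · apply Continuous.intervalIntegrable; fun_prop

/-- FTC with one-sided derivatives -/
lemma aux_ftc {L : ℝ} {f f' : ℝ → ℝ} (hf' : Continuous f')
    (hf : ∀ y ∈ Icc (0:ℝ) L, HasDerivWithinAt f (f' y) (Icc 0 L) y)
    {a b : ℝ} (ha : a ∈ Icc (0:ℝ) L) (hb : b ∈ Icc (0:ℝ) L) :
    ∫ y in a..b, f' y = f b - f a := by
  have key : ∀ a b : ℝ, a ∈ Icc (0:ℝ) L → b ∈ Icc (0:ℝ) L → a ≤ b →
      ∫ y in a..b, f' y = f b - f a := by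
    intro a b ha hb hab
    have hsub : Icc a b ⊆ Icc 0 L := Icc_subset_Icc ha.1 hb.2
    apply intervalIntegral.integral_eq_sub_of_hasDerivAt_of_le hab
    · exact fun x hx => ((hf x (hsub hx)).continuousWithinAt).mono hsub
    · intro x hx
      exact (hf x (hsub (Ioo_subset_Icc_self hx))).hasDerivAt
        (Icc_mem_nhds (ha.1.trans_lt hx.1) (hx.2.trans_le hb.2))
    · exact hf'.intervalIntegrable _ _
  rcases le_total a b with hab | hab
  · exact key a b ha hb hab
  · rw [intervalIntegral.integral_symm, key b a hb ha hab]; ring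

lemma par_cont {L : ℝ} {f : ℝ → ℝ → ℝ} (cf : Continuous (Function.uncurry f)) :
    Continuous (fun t => ∫ y in (0:ℝ)..L, f y t) := by
  apply intervalIntegral.continuous_parametric_intervalIntegral_of_continuous'
  have : Continuous (fun p : ℝ × ℝ => f p.2 p.1) := by fun_prop
  exact this

lemma prim_deriv {q : ℝ → ℝ} (cq : Continuous q) (s : Set ℝ) (t : ℝ) :
    HasDerivWithinAt (fun t => ∫ r in (0:ℝ)..t, q r) (q t) s t :=
  (cq.integral_hasStrictDerivAt 0 t).hasDerivAt.hasDerivWithinAt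

lemma int_mono {L : ℝ} (hL : 0 ≤ L) {f g : ℝ → ℝ} (hf : Continuous f) (hg : Continuous g)
    (h : ∀ y ∈ Icc (0:ℝ) L, f y ≤ g y) : ∫ y in (0:ℝ)..L, f y ≤ ∫ y in (0:ℝ)..L, g y :=
  intervalIntegral.integral_mono_on hL (hf.intervalIntegrable _ _) (hg.intervalIntegrable _ _) h

lemma int_nonneg {L : ℝ} (hL : 0 ≤ L) {f : ℝ → ℝ} 
    (h : ∀ y ∈ Icc (0:ℝ) L, 0 ≤ f y) : 0 ≤ ∫ y in (0:ℝ)..L, f y :=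
  intervalIntegral.integral_nonneg hL h

lemma int_congr {L : ℝ} (hL : 0 ≤ L) {f g : ℝ → ℝ} 
    (h : ∀ y ∈ Icc (0:ℝ) L, f y = g y) : ∫ y in (0:ℝ)..L, f y = ∫ y in (0:ℝ)..L, g y := by
  apply intervalIntegral.integral_congr
  rwa [uIcc_of_le hL]

lemma int_add {L : ℝ} {f g : ℝ → ℝ} (hf : Continuous f) (hg : Continuous g) :
    ∫ y in (0:ℝ)..L, (f y + g y) = (∫ y in (0:ℝ)..L, f y) + ∫ y in (0:ℝ)..L, g y :=
  intervalIntegral.integral_add (hf.intervalIntegrable _ _) (hg.intervalIntegrable _ _)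

lemma int_cmul {L : ℝ} (c : ℝ) (f : ℝ → ℝ) :
    ∫ y in (0:ℝ)..L, (c * f y) = c * ∫ y in (0:ℝ)..L, f y :=
  intervalIntegral.integral_const_mul _ _


structure Sol (L T γ μ ρb ℓ Jl Jb P E K D : ℝ) (ρ : ℝ → ℝ)
    (J v π vy vt πt Jy πy vyy πyt G : ℝ → ℝ → ℝ) : Prop where
  hL : 0 < L
  hT : 0 < T
  hγ : 1 < γ
  hμ : 0 < μ
  hρb : 0 < ρb
  hℓ : 0 < ℓ
  hJl : 0 < Jl
  hJb : 0 < Jb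
  hP : 0 ≤ P
  hE : 0 ≤ E
  cρ : Continuous ρ
  cJ : Continuous (Function.uncurry J)
  cv : Continuous (Function.uncurry v)
  cπ : Continuous (Function.uncurry π)
  cvy : Continuous (Function.uncurry vy)
  cvt : Continuous (Function.uncurry vt)
  cπt : Continuous (Function.uncurry πt)
  cJy : Continuous (Function.uncurry Jy)
  cπy : Continuous (Function.uncurry πy)
  cvyy : Continuous (Function.uncurry vyy)
  cπyt : Continuous (Function.uncurry πyt)
  cG : Continuous (Function.uncurry G)
  ρpos : ∀ y, 0 < ρ y
  ρle : ∀ y, ρ y ≤ ρb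
  Jpos : ∀ y t, 0 < J y t
  dJ : ∀ y ∈ Icc (0:ℝ) L, ∀ t ∈ Icc (0:ℝ) T, HasDerivWithinAt (fun s => J y s) (vy y t) (Icc 0 T) t
  dvt : ∀ y ∈ Icc (0:ℝ) L, ∀ t ∈ Icc (0:ℝ) T, HasDerivWithinAt (fun s => v y s) (vt y t) (Icc 0 T) t
  dπt : ∀ y ∈ Icc (0:ℝ) L, ∀ t ∈ Icc (0:ℝ) T, HasDerivWithinAt (fun s => π y s) (πt y t) (Icc 0 T) t
  dJy : ∀ y ∈ Icc (0:ℝ) L, ∀ t ∈ Icc (0:ℝ) T,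
    HasDerivWithinAt (fun s => Jy y s) (vyy y t) (Icc 0 T) t
  dπy : ∀ y ∈ Icc (0:ℝ) L, ∀ t ∈ Icc (0:ℝ) T,
    HasDerivWithinAt (fun s => πy y s) (πyt y t) (Icc 0 T) t
  dvy : ∀ y ∈ Icc (0:ℝ) L, ∀ t ∈ Icc (0:ℝ) T, HasDerivWithinAt (fun x => v x t) (vy y t) (Icc 0 L) y
  dG : ∀ y ∈ Icc (0:ℝ) L, ∀ t ∈ Icc (0:ℝ) T,
    HasDerivWithinAt (fun x => G x t) (ρ y * vt y t) (Icc 0 L) y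
  evy : ∀ y t, vy y t = J y t * (G y t + π y t) / μ
  eπt : ∀ y t, πt y t = (-(π y t)^2 + (γ - 2) * π y t * G y t + (γ - 1) * (G y t)^2) / μ
  evyy : ∀ y ∈ Icc (0:ℝ) L, ∀ t ∈ Icc (0:ℝ) T,
    vyy y t = (Jy y t * (G y t + π y t) + J y t * (ρ y * vt y t + πy y t)) / μ
  eπyt : ∀ y ∈ Icc (0:ℝ) L, ∀ t ∈ Icc (0:ℝ) T,
    πyt y t = (-(2 * π y t * πy y t) + (γ - 2) * (πy y t * G y t + π y t * (ρ y * vt y t))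
      + (γ - 1) * (2 * G y t * (ρ y * vt y t))) / μ
  v0 : ∀ t ∈ Icc (0:ℝ) T, v 0 t = 0
  vL : ∀ t ∈ Icc (0:ℝ) T, v L t = 0
  π0 : ∀ y ∈ Icc (0:ℝ) L, 0 ≤ π y 0 ∧ π y 0 ≤ P
  J0 : ∀ y ∈ Icc (0:ℝ) L, Jl ≤ J y 0 ∧ J y 0 ≤ Jb
  iℓ : (∫ y in (0:ℝ)..L, J y 0) = ℓ
  iE : (∫ y in (0:ℝ)..L, (ρ y * (v y 0) ^ 2 / 2 + J y 0 * π y 0 / (γ - 1))) = E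
  iK : (∫ y in (0:ℝ)..L, (G y 0) ^ 2) ≤ K ^ 2
  iDJ : (∫ y in (0:ℝ)..L, (Jy y 0) ^ 2) ≤ D ^ 2
  iDπ : (∫ y in (0:ℝ)..L, (πy y 0) ^ 2) ≤ D ^ 2

section
variable {L T γ μ ρb ℓ Jl Jb P E K D : ℝ} {ρ : ℝ → ℝ}
    {J v π vy vt πt Jy πy vyy πyt G : ℝ → ℝ → ℝ}

lemma Sol.massJ (h : Sol L T γ μ ρb ℓ Jl Jb P E K D ρ J v π vy vt πt Jy πy vyy πyt G)
    {t : ℝ} (ht : t ∈ Icc (0:ℝ) T) : (∫ y in (0:ℝ)..L, J y t) = ℓ := by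
  rw [← h.iℓ]
  have cvy := h.cvy
  refine aux_const (f := fun t => ∫ y in (0:ℝ)..L, J y t) (fun t ht => par_deriv1 h.hL.le h.cJ h.cvy h.dJ ht) ?_ ht
  intro t ht
  rw [aux_ftc (f := fun x => v x t) (by fun_prop) (fun y hy => h.dvy y hy t ht)
    ⟨le_rfl, h.hL.le⟩ ⟨h.hL.le, le_rfl⟩]
  simp [h.v0 t ht, h.vL t ht]

lemma Sol.dJπ (h : Sol L T γ μ ρb ℓ Jl Jb P E K D ρ J v π vy vt πt Jy πy vyy πyt G)
    {y : ℝ} (hy : y ∈ Icc (0:ℝ) L) {t : ℝ} (ht : t ∈ Icc (0:ℝ) T) :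
    HasDerivWithinAt (fun s => J y s * π y s) ((γ - 1) * (vy y t * G y t)) (Icc 0 T) t := by
  refine ((h.dJ y hy t ht).mul (h.dπt y hy t ht)).congr_deriv ?_
  have := h.hμ.ne'
  rw [h.evy, h.eπt]
  field_simp
  ring

lemma Sol.energy (h : Sol L T γ μ ρb ℓ Jl Jb P E K D ρ J v π vy vt πt Jy πy vyy πyt G)
    {t : ℝ} (ht : t ∈ Icc (0:ℝ) T) :
    (∫ y in (0:ℝ)..L, (ρ y * (v y t) ^ 2 / 2 + J y t * π y t / (γ - 1))) = E := by
  rw [← h.iE]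
  have hγ : γ - 1 ≠ 0 := by have := h.hγ; linarith
  have cvy := h.cvy
  have cvt := h.cvt
  have cv := h.cv
  have cJ := h.cJ
  have cπ := h.cπ
  have cG := h.cG
  have cρ := h.cρ
  refine aux_const (f := fun t => ∫ y in (0:ℝ)..L, (ρ y * (v y t) ^ 2 / 2 + J y t * π y t / (γ - 1)))
    (f' := fun t => ∫ y in (0:ℝ)..L, (vy y t * G y t + v y t * (ρ y * vt y t)))
    (fun t ht => par_deriv1 (f := fun y t => (ρ y * (v y t) ^ 2 / 2 + J y t * π y t / (γ - 1))) 
     (ft := fun y t => vy y t * G y t + v y t * (ρ y * vt y t)) h.hL.le 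
      (by fun_prop) (by fun_prop) ?_ ht) ?_ ht
  · intro y hy t ht
    refine ((((h.dvt y hy t ht).pow 2).const_mul (ρ y)).div_const 2 |>.add 
      ((h.dJπ hy ht).div_const (γ - 1))).congr_deriv ?_
    field_simp
    ring
  · intro t ht
    rw [aux_ftc (f := fun x => v x t * G x t) (by fun_prop) (fun y hy => (h.dvy y hy t ht).mul (h.dG y hy t ht))
      ⟨le_rfl, h.hL.le⟩ ⟨h.hL.le, le_rfl⟩]
    simp [h.v0 t ht, h.vL t ht]

lemma Sol.πnn (h : Sol L T γ μ ρb ℓ Jl Jb P E K D ρ J v π vy vt πt Jy πy vyy πyt G)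
    {y : ℝ} (hy : y ∈ Icc (0:ℝ) L) {t : ℝ} (ht : t ∈ Icc (0:ℝ) T) : 0 ≤ π y t := by
  have hμ := h.hμ
  have hγ := h.hγ
  have key : -(J y t ^ γ * π y t) ≤ -(J y 0 ^ γ * π y 0) := by
    refine aux_mono (f := fun t => -(J y t ^ γ * π y t))
      (f' := fun t => - (J y t ^ γ * (μ * (γ - 1) * ((G y t + π y t) / μ) ^ 2))) ?_ ?_ ht
    · intro t ht
      refine (((h.dJ y hy t ht).rpow_const (p := γ) (Or.inl (h.Jpos y t).ne')).mul
        (h.dπt y hy t ht)).neg.congr_deriv ?_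
      rw [h.evy, h.eπt, Real.rpow_sub_one (h.Jpos y t).ne']
      have := (h.Jpos y t).ne'
      field_simp
      ring
    · intro t ht
      have h1 : 0 ≤ γ - 1 := by linarith
      have := Real.rpow_nonneg (h.Jpos y t).le γ
      simp only [Left.neg_nonpos_iff]
      positivity
  have h0 : 0 ≤ J y 0 ^ γ * π y 0 := mul_nonneg (Real.rpow_nonneg (h.Jpos y 0).le γ) (h.π0 y hy).1
  have : 0 ≤ J y t ^ γ * π y t := by linarith
  exact nonneg_of_mul_nonneg_right this (Real.rpow_pos_of_pos (h.Jpos y t) γ)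

lemma Sol.intJπ (h : Sol L T γ μ ρb ℓ Jl Jb P E K D ρ J v π vy vt πt Jy πy vyy πyt G)
    {t : ℝ} (ht : t ∈ Icc (0:ℝ) T) : (∫ y in (0:ℝ)..L, J y t * π y t) ≤ (γ - 1) * E := by
  have hγ : 0 < γ - 1 := by have := h.hγ; linarith
  have cv := h.cv
  have cJ := h.cJ
  have cπ := h.cπ
  have cρ := h.cρ
  rw [← h.energy ht, ← int_cmul]
  refine int_mono h.hL.le (by fun_prop) (by fun_prop) fun y hy => ?_
  have := (h.ρpos y).le
  have e : (γ - 1) * (ρ y * v y t ^ 2 / 2 + J y t * π y t / (γ - 1)) = 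
    (γ - 1) * (ρ y * v y t ^ 2 / 2) + J y t * π y t := by field_simp
  rw [e]
  have : 0 ≤ (γ - 1) * (ρ y * v y t ^ 2 / 2) := by positivity
  linarith

lemma Sol.intρv (h : Sol L T γ μ ρb ℓ Jl Jb P E K D ρ J v π vy vt πt Jy πy vyy πyt G)
    {t : ℝ} (ht : t ∈ Icc (0:ℝ) T) : (∫ y in (0:ℝ)..L, |ρ y * v y t|) ≤ ρb * L / 2 + E := by
  have hγ : 0 < γ - 1 := by have := h.hγ; linarith
  have cv := h.cv
  have cJ := h.cJ
  have cπ := h.cπ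
  have cρ := h.cρ
  have e : ρb * L / 2 = ∫ y in (0:ℝ)..L, ρb / 2 := by simp; ring
  rw [← h.energy ht, e, ← int_add (by fun_prop) (by fun_prop)]
  refine int_mono h.hL.le (by fun_prop) (by fun_prop) fun y hy => ?_
  have h1 := (h.ρpos y).le
  have h2 := h.ρle y
  have h3 : 0 ≤ J y t * π y t / (γ - 1) := by
    have := h.πnn hy ht
    have := (h.Jpos y t).le
    positivity
  rw [abs_mul, abs_of_nonneg h1]
  nlinarith [mul_nonneg h1 (sq_nonneg (|v y t| - 1)), sq_abs (v y t)]

lemma int_abs_le {L : ℝ} {f : ℝ → ℝ} (cf : Continuous f) {a b : ℝ} (ha : a ∈ Icc 0 L)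
    (hb : b ∈ Icc 0 L) :
    |∫ x in a..b, f x| ≤ ∫ x in (0:ℝ)..L, |f x| := by
  have key : ∀ a b : ℝ, a ∈ Icc (0:ℝ) L → b ∈ Icc (0:ℝ) L → a ≤ b →
      |∫ x in a..b, f x| ≤ ∫ x in (0:ℝ)..L, |f x| := by
    intro a b ha hb hab
    refine (intervalIntegral.abs_integral_le_integral_abs hab).trans ?_
    exact intervalIntegral.integral_mono_interval ha.1 hab hb.2
      (Filter.Eventually.of_forall fun x => abs_nonneg _) (cf.abs.intervalIntegrable _ _)
  rcases le_total a b with hab | hab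
  · exact key a b ha hb hab
  · rw [intervalIntegral.integral_symm, abs_neg]
    exact key b a hb ha hab

end

section
variable {L T γ μ ρb ℓ Jl Jb P E K D : ℝ} {ρ : ℝ → ℝ}
    {J v π vy vt πt Jy πy vyy πyt G : ℝ → ℝ → ℝ}

lemma Sol.Jform (h : Sol L T γ μ ρb ℓ Jl Jb P E K D ρ J v π vy vt πt Jy πy vyy πyt G) :
    ∃ k : ℝ → ℝ, ∃ b : ℝ → ℝ → ℝ, (∀ y ∈ Icc (0:ℝ) L, ∀ t ∈ Icc (0:ℝ) T,
      |b y t| ≤ ρb * L + 2 * E ∧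
      J y t = J y 0 * Real.exp ((k t + b y t) / μ) * Real.exp ((∫ s in (0:ℝ)..t, π y s) / μ)) := by
  have hμ := h.hμ
  have cv := h.cv
  have cvt := h.cvt
  have cJ := h.cJ
  have cπ := h.cπ
  have cρ := h.cρ
  have h0L : (0:ℝ) ∈ Icc (0:ℝ) L := ⟨le_rfl, h.hL.le⟩
  have h0T : (0:ℝ) ∈ Icc (0:ℝ) T := ⟨le_rfl, h.hT.le⟩
  refine ⟨fun t => μ * Real.log (J 0 t) - μ * Real.log (J 0 0) - ∫ s in (0:ℝ)..t, π 0 s,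
    fun y t => (∫ x in (0:ℝ)..y, ρ x * v x t) - ∫ x in (0:ℝ)..y, ρ x * v x 0, ?_⟩
  intro y hy t ht
  constructor
  · have h1 := (int_abs_le (f := fun x => ρ x * v x t) (by fun_prop) h0L hy).trans (h.intρv ht)
    have h2 := (int_abs_le (f := fun x => ρ x * v x 0) (by fun_prop) h0L hy).trans (h.intρv h0T)
    refine (abs_sub _ _).trans ?_
    linarith
  · have dlog : ∀ y ∈ Icc (0:ℝ) L, ∀ t ∈ Icc (0:ℝ) T,
        HasDerivWithinAt (fun t => μ * Real.log (J y t) - ∫ s in (0:ℝ)..t, π y s) (G y t)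
          (Icc 0 T) t := by
      intro y hy t ht
      refine ((((h.dJ y hy t ht).log (h.Jpos y t).ne').const_mul μ).sub
        (prim_deriv (q := fun s => π y s) (by fun_prop) _ t)).congr_deriv ?_
      rw [h.evy]
      have := (h.Jpos y t).ne'
      field_simp
      ring
    have hy2 : Icc 0 y ⊆ Icc 0 L := Icc_subset_Icc le_rfl hy.2
    have key := aux_const
      (f := fun t => (μ * Real.log (J y t) - ∫ s in (0:ℝ)..t, π y s)
        - (μ * Real.log (J 0 t) - ∫ s in (0:ℝ)..t, π 0 s) - ∫ x in (0:ℝ)..y, ρ x * v x t)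
      (f' := fun t => G y t - G 0 t - ∫ x in (0:ℝ)..y, ρ x * vt x t)
      (fun t ht => ((dlog y hy t ht).sub (dlog 0 h0L t ht)).sub
        (par_deriv1 (f := fun x t => ρ x * v x t) (ft := fun x t => ρ x * vt x t) hy.1
          (by fun_prop) (by fun_prop)
          (fun x hx t ht => (h.dvt x (hy2 hx) t ht).const_mul (ρ x)) ht))
      (fun t ht => by
        rw [aux_ftc (f := fun x => G x t) (by fun_prop) (fun y hy => h.dG y hy t ht) h0L hy]
        ring) ht
    simp only [intervalIntegral.integral_same] at key
    rw [mul_assoc, ← Real.exp_add, ← add_div]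
    have e : (μ * Real.log (J 0 t) - μ * Real.log (J 0 0) - (∫ s in (0:ℝ)..t, π 0 s) +
        ((∫ x in (0:ℝ)..y, ρ x * v x t) - ∫ x in (0:ℝ)..y, ρ x * v x 0) +
        ∫ s in (0:ℝ)..t, π y s) / μ = Real.log (J y t) - Real.log (J y 0) := by
      rw [div_eq_iff hμ.ne']
      linarith
    rw [e, Real.exp_sub, Real.exp_log (h.Jpos y t), Real.exp_log (h.Jpos y 0)]
    have := (h.Jpos y 0).ne'
    field_simp

lemma Sol.Jlower (h : Sol L T γ μ ρb ℓ Jl Jb P E K D ρ J v π vy vt πt Jy πy vyy πyt G)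
    {B κ : ℝ} (hB : B = ρb * L + 2 * E)
    (hκ : κ = Real.exp (2 * B / μ) * ((γ - 1) * E) / (μ * ℓ))
    {y : ℝ} (hy : y ∈ Icc (0:ℝ) L) {t : ℝ} (ht : t ∈ Icc (0:ℝ) T) :
    Jl * Real.exp (- (2 * B / μ + κ * T)) ≤ J y t := by
  have hμ := h.hμ
  have hℓ := h.hℓ
  have hE := h.hE
  have cJ := h.cJ
  have cπ := h.cπ
  have hγ : 0 < γ - 1 := by have := h.hγ; linarith
  have h0L : (0:ℝ) ∈ Icc (0:ℝ) L := ⟨le_rfl, h.hL.le⟩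
  have h0T : (0:ℝ) ∈ Icc (0:ℝ) T := ⟨le_rfl, h.hT.le⟩
  obtain ⟨k, b, hkb⟩ := h.Jform
  rw [← hB] at hkb
  set H : ℝ → ℝ → ℝ := fun y t => Real.exp ((∫ s in (0:ℝ)..t, π y s) / μ) with hH
  have cH : Continuous (Function.uncurry H) := by
    have := intervalIntegral.continuous_parametric_primitive_of_continuous (μ := volume) (a₀ := 0) cπ
    exact Real.continuous_exp.comp (this.div_const μ)
  have Hpos : ∀ y t, 0 < H y t := fun y t => Real.exp_pos _
  -- lower bound on exp k in terms of N
  have hk : ∀ t ∈ Icc (0:ℝ) T, Real.exp (-(k t) / μ) ≤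
      Real.exp (B / μ) * (∫ y in (0:ℝ)..L, J y 0 * H y t) / ℓ := by
    intro t ht
    have : ℓ ≤ Real.exp ((k t + B) / μ) * ∫ y in (0:ℝ)..L, J y 0 * H y t := by
      rw [← h.massJ ht, ← int_cmul]
      refine int_mono h.hL.le (by fun_prop) (by fun_prop) fun y hy => ?_
      obtain ⟨h1, h2⟩ := hkb y hy t ht
      rw [h2]
      have h3 : Real.exp ((k t + b y t) / μ) ≤ Real.exp ((k t + B) / μ) := by
        gcongr
        exact (abs_le.1 h1).2
      have := mul_le_mul_of_nonneg_right h3 (mul_pos (h.Jpos y 0) (Hpos y t)).le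
      simp only [hH] at this ⊢
      linarith
    rw [le_div_iff₀ hℓ]
    calc _ ≤ Real.exp (-(k t) / μ) * (Real.exp ((k t + B) / μ) * ∫ y in (0:ℝ)..L, J y 0 * H y t) := by
            gcongr
      _ = _ := by
            rw [← mul_assoc, ← Real.exp_add]
            congr 2
            ring
  have dH : ∀ y ∈ Icc (0:ℝ) L, ∀ t ∈ Icc (0:ℝ) T,
      HasDerivWithinAt (fun t => J y 0 * H y t) (J y 0 * (H y t * (π y t / μ))) (Icc 0 T) t := by
    intro y hy t ht
    exact (((prim_deriv (q := fun s => π y s) (by fun_prop) _ t).div_const μ).exp).const_mul _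
  have hN : (∫ y in (0:ℝ)..L, J y 0 * H y t) * Real.exp (-(κ * t)) ≤
      (∫ y in (0:ℝ)..L, J y 0 * H y 0) * Real.exp (-(κ * 0)) := by
    refine aux_mono (f := fun t => (∫ y in (0:ℝ)..L, J y 0 * H y t) * Real.exp (-(κ * t)))
      (fun t ht => (par_deriv1 h.hL.le (by fun_prop) (by fun_prop) dH ht).mul
        (((hasDerivAt_id' t).const_mul κ).neg.exp.hasDerivWithinAt)) ?_ ht
    intro t ht
    have : (∫ y in (0:ℝ)..L, J y 0 * (H y t * (π y t / μ))) ≤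
        κ * (∫ y in (0:ℝ)..L, J y 0 * H y t) := by
      calc _ ≤ ∫ y in (0:ℝ)..L, (Real.exp (B / μ) * Real.exp (-(k t)/μ) / μ) * (J y t * π y t) := by
            refine int_mono h.hL.le (by fun_prop) (by fun_prop) fun y hy => ?_
            obtain ⟨h1, h2⟩ := hkb y hy t ht
            have h3 : (1:ℝ) ≤ Real.exp (B / μ) * Real.exp (-(k t)/μ) * Real.exp ((k t + b y t) / μ) := by
              rw [← Real.exp_add, ← Real.exp_add, Real.one_le_exp_iff]
              have : B / μ + -(k t)/μ + (k t + b y t) / μ = (B + b y t) / μ := by ring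
              rw [this]
              have := (abs_le.1 h1).1
              apply div_nonneg _ hμ.le
              linarith
            have h4 : 0 ≤ J y 0 * (H y t * (π y t / μ)) := by
              have := (h.Jpos y 0).le
              have := (Hpos y t).le
              have := h.πnn hy ht
              positivity
            have := mul_le_mul_of_nonneg_right h3 h4
            rw [one_mul] at this
            refine this.trans (le_of_eq ?_)
            rw [h2]
            simp only [hH]
            ring
        _ = (Real.exp (B / μ) * Real.exp (-(k t)/μ) / μ) * (∫ y in (0:ℝ)..L, J y t * π y t) := int_cmul _ _
        _ ≤ (Real.exp (B / μ) * (Real.exp (B / μ) * (∫ y in (0:ℝ)..L, J y 0 * H y t) / ℓ) / μ) * ((γ - 1) * E) := by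
            have h5 : 0 ≤ ∫ y in (0:ℝ)..L, J y t * π y t :=
              int_nonneg h.hL.le fun y hy => mul_nonneg (h.Jpos y t).le (h.πnn hy ht)
            have h6 : 0 ≤ ∫ y in (0:ℝ)..L, J y 0 * H y t :=
              int_nonneg h.hL.le fun y hy => mul_nonneg (h.Jpos y 0).le (Hpos y t).le
            have := h.intJπ ht
            have := hk t ht
            gcongr
        _ = _ := by
            rw [hκ, two_mul, add_div, Real.exp_add]
            field_simp
    have h7 := mul_le_mul_of_nonneg_right this (Real.exp_pos (-(κ * t))).le
    simp only [Pi.neg_apply]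
    nlinarith
  have hN0 : (∫ y in (0:ℝ)..L, J y 0 * H y 0) = ℓ := by
    simp [hH, h.iℓ]
  rw [hN0] at hN
  obtain ⟨h1, h2⟩ := hkb y hy t ht
  have hκ0 : 0 ≤ κ := by rw [hκ]; positivity
  have hN' : (∫ y in (0:ℝ)..L, J y 0 * H y t) ≤ ℓ * Real.exp (κ * T) := by
    have h8 : Real.exp (-(κ * t)) * Real.exp (κ * t) = 1 := by rw [← Real.exp_add]; simp
    have h9 : Real.exp (κ * t) ≤ Real.exp (κ * T) := by have := ht.2; gcongr
    have := mul_le_mul_of_nonneg_right hN (Real.exp_pos (κ * t)).le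
    rw [mul_assoc, h8] at this
    simp only [mul_zero, neg_zero, Real.exp_zero, mul_one] at this
    nlinarith
  have hk2 : Real.exp (-(k t) / μ) ≤ Real.exp (B / μ + κ * T) := by
    refine (hk t ht).trans ?_
    rw [div_le_iff₀ hℓ, Real.exp_add]
    have := mul_le_mul_of_nonneg_left hN' (Real.exp_pos (B/μ)).le
    linarith
  rw [Real.exp_le_exp] at hk2
  have h10 : 1 ≤ H y t := by
    simp only [hH]
    rw [Real.one_le_exp_iff]
    apply div_nonneg _ hμ.le
    apply intervalIntegral.integral_nonneg ht.1
    intro s hs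
    exact h.πnn hy ⟨hs.1, hs.2.trans ht.2⟩
  have h11 : Real.exp (-(2 * B / μ + κ * T)) ≤ Real.exp ((k t + b y t) / μ) := by
    gcongr
    have h12 : -B / μ ≤ b y t / μ := by
      have := (abs_le.1 h1).1
      gcongr
    rw [add_div]
    have e1 : -(k t)/μ = -(k t / μ) := by ring
    have e2 : -B/μ = -(B / μ) := by ring
    have e3 : 2 * B / μ = 2 * (B / μ) := by ring
    rw [e1] at hk2
    rw [e2] at h12
    rw [e3]
    linarith
  have hJl := h.hJl
  have hJ0 := (h.J0 y hy).1
  have := h.Jpos y 0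
  calc Jl * Real.exp (- (2 * B / μ + κ * T)) ≤ J y 0 * Real.exp ((k t + b y t) / μ) := by gcongr
    _ = J y 0 * Real.exp ((k t + b y t) / μ) * 1 := by ring
    _ ≤ J y 0 * Real.exp ((k t + b y t) / μ) * H y t := by gcongr
    _ = J y t := h2.symm

end

section
variable {L T γ μ ρb ℓ Jl Jb P E K D : ℝ} {ρ : ℝ → ℝ}
    {J v π vy vt πt Jy πy vyy πyt G : ℝ → ℝ → ℝ}

lemma Sol.dX (h : Sol L T γ μ ρb ℓ Jl Jb P E K D ρ J v π vy vt πt Jy πy vyy πyt G)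
    {t : ℝ} (ht : t ∈ Icc (0:ℝ) T) :
    HasDerivWithinAt (fun s => ∫ y in (0:ℝ)..L, J y s * (G y s) ^ 2)
      (-(2 * μ) * (∫ y in (0:ℝ)..L, ρ y * (vt y t) ^ 2)
        - (2 * γ - 1) * ∫ y in (0:ℝ)..L, vy y t * (G y t) ^ 2) (Icc 0 T) t := by
  have hμ := h.hμ
  have cvy := h.cvy
  have cv := h.cv
  have cvt := h.cvt
  have cJ := h.cJ
  have cπ := h.cπ
  have cρ := h.cρ
  have cG := h.cG
  have d1 := (par_deriv h.hL.le h.cv h.cvt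
    (k := fun y s => ρ y * vt y s + ρ y * vt y t) (by fun_prop) h.dvt ht).const_mul (-μ)
  have d2 := (par_deriv (f := fun y s => J y s * π y s) (ft := fun y t => (γ - 1) * (vy y t * G y t))
    h.hL.le (by fun_prop) (by fun_prop)
    (k := fun y s => G y s + G y t) (by fun_prop) (fun y hy t ht => h.dJπ hy ht) ht).const_mul (-1)
  have d3 := (par_deriv h.hL.le h.cJ h.cvy
    (k := fun y s => G y s * G y t) (by fun_prop) h.dJ ht).const_mul (-1)
  have d := ((d1.add d2).add d3).add_const (∫ y in (0:ℝ)..L, J y t * (G y t) ^ 2)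
  refine (d.congr_of_mem (fun s hs => ?_) ht).congr_deriv ?_
  · simp only [Pi.add_apply]
    have ibp : ∫ y in (0:ℝ)..L, ((vy y s - vy y t) * (G y s + G y t) +
        (v y s - v y t) * (ρ y * vt y s + ρ y * vt y t)) = 0 := by
      rw [aux_ftc (f := fun y => (v y s - v y t) * (G y s + G y t))
        (f' := fun y => ((vy y s - vy y t) * (G y s + G y t) +
        (v y s - v y t) * (ρ y * vt y s + ρ y * vt y t))) (by fun_prop)
        (fun y hy => ((h.dvy y hy s hs).sub (h.dvy y hy t ht)).mul
          ((h.dG y hy s hs).add (h.dG y hy t ht))) ⟨le_rfl, h.hL.le⟩ ⟨h.hL.le, le_rfl⟩]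
      simp [h.v0 t ht, h.vL t ht, h.v0 s hs, h.vL s hs]
    have ibp' : μ * ∫ y in (0:ℝ)..L, ((vy y s - vy y t) * (G y s + G y t) +
        (v y s - v y t) * (ρ y * vt y s + ρ y * vt y t)) = 0 := by rw [ibp, mul_zero]
    refine Eq.trans ?_ ((congrArg (HAdd.hAdd _) ibp').trans (add_zero _))
    rw [← int_cmul, ← int_cmul, ← int_cmul, ← int_cmul,
      ← int_add (by fun_prop) (by fun_prop), ← int_add (by fun_prop) (by fun_prop),
      ← int_add (by fun_prop) (by fun_prop), ← int_add (by fun_prop) (by fun_prop)]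
    refine int_congr h.hL.le fun y hy => ?_
    have e1 := h.evy y s
    have e2 := h.evy y t
    rw [e1, e2]
    field_simp
    ring
  · have e : ∀ A B : ℝ, -(2 * μ) * A - (2 * γ - 1) * B = -(2 * μ) * A + (-(2 * γ - 1)) * B := by
      intros; ring
    rw [e, ← int_cmul, ← int_cmul, ← int_cmul, ← int_cmul, ← int_cmul,
      ← int_add (by fun_prop) (by fun_prop),
      ← int_add (by fun_prop) (by fun_prop), ← int_add (by fun_prop) (by fun_prop)]
    refine int_congr h.hL.le fun y hy => ?_
    ring

lemma Sol.Gsup (h : Sol L T γ μ ρb ℓ Jl Jb P E K D ρ J v π vy vt πt Jy πy vyy πyt G)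
    {a c : ℝ} (ha : 0 < a) (ha1 : 1 ≤ a * ℓ) (ha2 : ρb ≤ a * c)
    (hJc : ∀ y ∈ Icc (0:ℝ) L, ∀ t ∈ Icc (0:ℝ) T, c ≤ J y t) {lam : ℝ} (hlam : 0 < lam)
    {y : ℝ} (hy : y ∈ Icc (0:ℝ) L) {t : ℝ} (ht : t ∈ Icc (0:ℝ) T) :
    (G y t) ^ 2 ≤ a * (1 + lam) * (∫ y in (0:ℝ)..L, J y t * (G y t) ^ 2)
      + (∫ y in (0:ℝ)..L, ρ y * (vt y t) ^ 2) / lam := by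
  have cvt := h.cvt
  have cJ := h.cJ
  have cρ := h.cρ
  have cG := h.cG
  have hℓ := h.hℓ
  set X := ∫ y in (0:ℝ)..L, J y t * (G y t) ^ 2 with hX
  set Y := ∫ y in (0:ℝ)..L, ρ y * (vt y t) ^ 2 with hY
  set R := ∫ y in (0:ℝ)..L, |2 * G y t * (ρ y * vt y t)| with hR
  have hX0 : 0 ≤ X := int_nonneg h.hL.le fun y hy => mul_nonneg (h.Jpos y t).le (sq_nonneg _)
  have h1 : R ≤ lam * a * X + Y / lam := by
    rw [hX, hY, div_eq_inv_mul, ← int_cmul, ← int_cmul, ← int_add (by fun_prop) (by fun_prop)]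
    refine int_mono h.hL.le (by fun_prop) (by fun_prop) fun y hy => ?_
    have hρ := (h.ρpos y).le
    have h2 : ρ y ≤ a * J y t := ((h.ρle y).trans ha2).trans (by have := hJc y hy t ht; gcongr)
    have h3 : |2 * G y t * (ρ y * vt y t)| ≤ lam * (ρ y * (G y t)^2) + lam⁻¹ * (ρ y * (vt y t)^2) := by
      have e : |2 * G y t * (ρ y * vt y t)| = ρ y * (2 * |G y t| * |vt y t|) := by
        simp only [abs_mul, abs_of_nonneg hρ, abs_two]; ring
      have e2 : lam * (ρ y * (G y t)^2) + lam⁻¹ * (ρ y * (vt y t)^2) = 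
        ρ y * (lam * |G y t|^2 + lam⁻¹ * |vt y t|^2) := by simp only [sq_abs]; ring
      rw [e, e2]
      gcongr
      have : lam * |G y t|^2 + lam⁻¹ * |vt y t|^2 - 2 * |G y t| * |vt y t| = 
        lam⁻¹ * (lam * |G y t| - |vt y t|)^2 := by field_simp; ring
      have : 0 ≤ lam⁻¹ * (lam * |G y t| - |vt y t|)^2 := by positivity
      linarith
    have h4 : lam * (ρ y * (G y t)^2) ≤ lam * a * (J y t * (G y t)^2) := by
      have := mul_le_mul_of_nonneg_left (mul_le_mul_of_nonneg_right h2 (sq_nonneg (G y t))) hlam.le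
      linarith
    linarith
  have h5 : ∀ z ∈ Icc (0:ℝ) L, (G y t)^2 ≤ (G z t)^2 + R := by
    intro z hz
    have h6 := aux_ftc (f := fun x => (G x t)^2) (f' := fun x => 2 * G x t * (ρ x * vt x t))
      (by fun_prop) (fun x hx => ((h.dG x hx t ht).pow 2).congr_deriv (by ring)) hz hy
    have h7 := int_abs_le (f := fun x => 2 * G x t * (ρ x * vt x t)) (by fun_prop) hz hy
    have := le_abs_self (∫ x in z..y, 2 * G x t * (ρ x * vt x t))
    linarith
  have h8 : (G y t)^2 * ℓ ≤ X + R * ℓ := by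
    rw [← h.massJ ht, hX, ← int_cmul, ← int_cmul, ← int_add (by fun_prop) (by fun_prop)]
    refine int_mono h.hL.le (by fun_prop) (by fun_prop) fun z hz => ?_
    have := mul_le_mul_of_nonneg_left (h5 z hz) (h.Jpos z t).le
    linarith
  have h9 : X ≤ a * X * ℓ := by nlinarith
  have h10 : (G y t)^2 * ℓ ≤ (a * X + R) * ℓ := by linarith
  have := le_of_mul_le_mul_right h10 hℓ
  nlinarith

lemma Sol.X' (h : Sol L T γ μ ρb ℓ Jl Jb P E K D ρ J v π vy vt πt Jy πy vyy πyt G)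
    {a c κ lam C1 : ℝ} (ha : 0 < a) (ha1 : 1 ≤ a * ℓ) (ha2 : ρb ≤ a * c)
    (hJc : ∀ y ∈ Icc (0:ℝ) L, ∀ t ∈ Icc (0:ℝ) T, c ≤ J y t) 
    (hκ : κ = (2 * γ - 1) / μ) (hlam : lam = κ / (2 * μ)) 
    (hC1 : C1 = κ / 2 * (1 + a * (1 + lam)))
    {t : ℝ} (ht : t ∈ Icc (0:ℝ) T) :
    (-(2 * μ) * (∫ y in (0:ℝ)..L, ρ y * (vt y t) ^ 2)
        - (2 * γ - 1) * ∫ y in (0:ℝ)..L, vy y t * (G y t) ^ 2) ≤ 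
    - μ * (∫ y in (0:ℝ)..L, ρ y * (vt y t) ^ 2) + 
      C1 * (1 + ∫ y in (0:ℝ)..L, J y t * (G y t) ^ 2) ^ 2 := by
  have hμ := h.hμ
  have hγ := h.hγ
  have cvt := h.cvt
  have cvy := h.cvy
  have cJ := h.cJ
  have cρ := h.cρ
  have cG := h.cG
  have hκ0 : 0 < κ := by rw [hκ]; apply div_pos _ hμ; linarith
  have hlam0 : 0 < lam := by rw [hlam]; positivity
  have hG := fun y hy => h.Gsup ha ha1 ha2 hJc hlam0 (y := y) hy ht
  set X := ∫ y in (0:ℝ)..L, J y t * (G y t) ^ 2 with hX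
  set Y := ∫ y in (0:ℝ)..L, ρ y * (vt y t) ^ 2 with hY
  have hX0 : 0 ≤ X := int_nonneg h.hL.le fun y hy => mul_nonneg (h.Jpos y t).le (sq_nonneg _)
  have hY0 : 0 ≤ Y := int_nonneg h.hL.le fun y hy => mul_nonneg (h.ρpos y).le (sq_nonneg _)
  set g2 := a * (1 + lam) * X + Y / lam with hg2
  have hg20 : 0 ≤ g2 := by positivity
  have h1 : -(2 * γ - 1) * ∫ y in (0:ℝ)..L, vy y t * (G y t) ^ 2 ≤ 
     κ * ((g2 / (1 + X) + (1 + X)) / 2) * X := by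
    rw [hX, ← int_cmul, ← int_cmul]
    rw [← hX]
    refine int_mono h.hL.le (by fun_prop) (by fun_prop) fun y hy => ?_
    have h2 : |G y t| ≤ (g2 / (1 + X) + (1 + X)) / 2 := by
      have h3 := hG y hy
      rw [← sq_abs] at h3
      have h4 : |G y t|^2 / (1 + X) ≤ g2 / (1 + X) := by gcongr
      have h5 : |G y t|^2 / (1 + X) + (1 + X) - 2 * |G y t| = (|G y t| - (1 + X))^2 / (1 + X) := by
        field_simp; ring
      have h6 : 0 ≤ (|G y t| - (1 + X))^2 / (1 + X) := by positivity
      linarith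
    rw [h.evy]
    have e : -(2 * γ - 1) * (J y t * (G y t + π y t) / μ * G y t ^ 2) = 
      κ * (-(G y t) - π y t) * (J y t * G y t ^ 2) := by rw [hκ]; ring
    rw [e]
    have := h.πnn hy ht
    have := neg_abs_le (G y t)
    have := (h.Jpos y t).le
    have : -(G y t) - π y t ≤ (g2 / (1 + X) + (1 + X)) / 2 := by linarith
    gcongr
  have h2 : κ * ((g2 / (1 + X) + (1 + X)) / 2) * X ≤ κ / 2 * (g2 + (1 + X)^2) := by
    have : g2 / (1 + X) * X ≤ g2 := by
      rw [div_mul_eq_mul_div, div_le_iff₀ (by positivity)]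
      nlinarith
    have : (1 + X) * X ≤ (1 + X)^2 := by nlinarith
    have : (g2 / (1 + X) + (1 + X)) * X ≤ g2 + (1 + X)^2 := by linarith
    have := mul_le_mul_of_nonneg_left this (by positivity : 0 ≤ κ / 2)
    linarith
  have h3 : κ / 2 * (Y / lam) = μ * Y := by rw [hlam]; field_simp
  have h4 : κ / 2 * (g2 + (1 + X)^2) ≤ μ * Y + C1 * (1 + X)^2 := by
    have h5 : X ≤ (1 + X)^2 := by nlinarith
    have h6 : κ / 2 * (a * (1 + lam) * X) ≤ κ / 2 * (a * (1 + lam) * (1 + X)^2) := by gcongr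
    rw [hg2, hC1]
    linarith
  linarith

lemma Sol.F' (h : Sol L T γ μ ρb ℓ Jl Jb P E K D ρ J v π vy vt πt Jy πy vyy πyt G)
    {a c Fb ε lam : ℝ} (ha : 0 < a) (ha1 : 1 ≤ a * ℓ) (ha2 : ρb ≤ a * c)
    (hJc : ∀ y ∈ Icc (0:ℝ) L, ∀ t ∈ Icc (0:ℝ) T, c ≤ J y t) 
    (hFb : Fb = (γ - 1) * E) (hε : ε = 1 / (2 * (Fb + 1))) (hlam : 0 < lam)
    {t : ℝ} (ht : t ∈ Icc (0:ℝ) T) :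
    1 + (∫ y in (0:ℝ)..L, J y t * (G y t) ^ 2) ≤ 
      2 * (μ / (γ - 1) * (∫ y in (0:ℝ)..L, (γ - 1) * (vy y t * G y t)) + 1 
        + Fb * a * (1 + lam) / (4 * ε) + Fb / (4 * ε * lam) * 
        ((∫ y in (0:ℝ)..L, ρ y * (vt y t) ^ 2) / (1 + (∫ y in (0:ℝ)..L, J y t * (G y t) ^ 2)))) := by
  have hμ := h.hμ
  have hE := h.hE
  have hγ : 0 < γ - 1 := by have := h.hγ; linarith
  have cvt := h.cvt
  have cvy := h.cvy
  have cJ := h.cJ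
  have cπ := h.cπ
  have cρ := h.cρ
  have cG := h.cG
  have hF := h.intJπ ht
  rw [← hFb] at hF
  have hFb0 : 0 ≤ Fb := by rw [hFb]; positivity
  have hε0 : 0 < ε := by rw [hε]; positivity
  have hG := fun y hy => h.Gsup ha ha1 ha2 hJc hlam (y := y) hy ht
  set X := ∫ y in (0:ℝ)..L, J y t * (G y t) ^ 2 with hX
  set Y := ∫ y in (0:ℝ)..L, ρ y * (vt y t) ^ 2 with hY
  have hX0 : 0 ≤ X := int_nonneg h.hL.le fun y hy => mul_nonneg (h.Jpos y t).le (sq_nonneg _)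
  have hY0 : 0 ≤ Y := int_nonneg h.hL.le fun y hy => mul_nonneg (h.ρpos y).le (sq_nonneg _)
  set g := ε * (1 + X) + a * (1 + lam) / (4 * ε) + Y / (1 + X) / (4 * ε * lam) with hg
  have hg0 : 0 ≤ g := by positivity
  have h1 : ∀ y ∈ Icc (0:ℝ) L, |G y t| ≤ g := by
    intro y hy
    have h3 := hG y hy
    rw [← sq_abs] at h3
    have h4 : |G y t|^2 / (4 * ε * (1 + X)) ≤ (a * (1 + lam) * X + Y / lam) / (4 * ε * (1 + X)) := by
      gcongr
    have h5 : ε * (1 + X) + |G y t|^2 / (4 * ε * (1 + X)) - |G y t| = 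
        (2 * ε * (1 + X) - |G y t|)^2 / (4 * ε * (1 + X)) := by
      field_simp; ring
    have h6 : 0 ≤ (2 * ε * (1 + X) - |G y t|)^2 / (4 * ε * (1 + X)) := by positivity
    have h7 : (a * (1 + lam) * X + Y / lam) / (4 * ε * (1 + X)) ≤ 
        (a * (1 + lam) * (1 + X) + Y / lam) / (4 * ε * (1 + X)) := by
      gcongr; linarith
    have h8 : (a * (1 + lam) * (1 + X) + Y / lam) / (4 * ε * (1 + X)) = 
      a * (1 + lam) / (4 * ε) + Y / (1 + X) / (4 * ε * lam) := by field_simp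
    rw [hg]; linarith
  have h2 : X - g * Fb ≤ μ / (γ - 1) * ∫ y in (0:ℝ)..L, (γ - 1) * (vy y t * G y t) := by
    have h3 : X + -g * (∫ y in (0:ℝ)..L, J y t * π y t) ≤ 
        μ / (γ - 1) * ∫ y in (0:ℝ)..L, (γ - 1) * (vy y t * G y t) := by
      rw [hX, ← int_cmul, ← int_cmul, ← int_add (by fun_prop) (by fun_prop)]
      refine int_mono h.hL.le (by fun_prop) (by fun_prop) fun y hy => ?_
      rw [h.evy]
      have e : μ / (γ - 1) * ((γ - 1) * (J y t * (G y t + π y t) / μ * G y t)) = 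
        J y t * G y t ^ 2 + J y t * π y t * G y t := by field_simp
      rw [e]
      have h4 : 0 ≤ J y t * π y t := mul_nonneg (h.Jpos y t).le (h.πnn hy ht)
      have h5 : -g ≤ G y t := (abs_le.1 (h1 y hy)).1
      nlinarith
    have := mul_le_mul_of_nonneg_left hF hg0
    linarith
  have h3 : ε * (1 + X) * Fb ≤ (1 + X) / 2 := by
    have : ε * Fb ≤ 1 / 2 := by
      rw [hε, div_mul_eq_mul_div, div_le_iff₀ (by positivity)]; linarith
    nlinarith
  have h4 : g * Fb = ε * (1 + X) * Fb + (Fb * a * (1 + lam) / (4 * ε) + Fb / (4 * ε * lam) * 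
        (Y / (1 + X))) := by rw [hg]; ring
  linarith
end

section
variable {L T γ μ ρb ℓ Jl Jb P E K D : ℝ} {ρ : ℝ → ℝ}
    {J v π vy vt πt Jy πy vyy πyt G : ℝ → ℝ → ℝ}

lemma Sol.cY (h : Sol L T γ μ ρb ℓ Jl Jb P E K D ρ J v π vy vt πt Jy πy vyy πyt G) :
    Continuous fun t => ∫ y in (0:ℝ)..L, ρ y * (vt y t) ^ 2 := by
  have cvt := h.cvt
  have cρ := h.cρ
  exact par_cont (f := fun y t => ρ y * (vt y t) ^ 2) (by fun_prop)

lemma Sol.Y0 (h : Sol L T γ μ ρb ℓ Jl Jb P E K D ρ J v π vy vt πt Jy πy vyy πyt G) (t : ℝ) :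
    0 ≤ ∫ y in (0:ℝ)..L, ρ y * (vt y t) ^ 2 :=
  int_nonneg h.hL.le fun y _ => mul_nonneg (h.ρpos y).le (sq_nonneg _)

lemma Sol.X0 (h : Sol L T γ μ ρb ℓ Jl Jb P E K D ρ J v π vy vt πt Jy πy vyy πyt G) (t : ℝ) :
    0 ≤ ∫ y in (0:ℝ)..L, J y t * (G y t) ^ 2 :=
  int_nonneg h.hL.le fun y _ => mul_nonneg (h.Jpos y t).le (sq_nonneg _)

lemma Sol.Xbd (h : Sol L T γ μ ρb ℓ Jl Jb P E K D ρ J v π vy vt πt Jy πy vyy πyt G)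
    {a c κ lam C1 Fb ε lam2 C5 C6 Xb : ℝ} (ha : 0 < a) (ha1 : 1 ≤ a * ℓ) (ha2 : ρb ≤ a * c)
    (hJc : ∀ y ∈ Icc (0:ℝ) L, ∀ t ∈ Icc (0:ℝ) T, c ≤ J y t)
    (hκ : κ = (2 * γ - 1) / μ) (hlam : lam = κ / (2 * μ))
    (hC1 : C1 = κ / 2 * (1 + a * (1 + lam)))
    (hFb : Fb = (γ - 1) * E) (hε : ε = 1 / (2 * (Fb + 1)))
    (hlam2 : lam2 = C1 * Fb / (2 * ε * μ) + 1)
    (hC5 : C5 = 2 * C1 * (μ / (γ - 1)))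
    (hC6 : C6 = 2 * C1 * (1 + Fb * a * (1 + lam2) / (4 * ε)))
    (hXb : Xb = Real.exp (Real.log (1 + Jb * K ^ 2) + C5 * Fb + C6 * T)) :
    (∀ t ∈ Icc (0:ℝ) T, (∫ y in (0:ℝ)..L, J y t * (G y t) ^ 2) ≤ Xb) ∧
    (∫ t in (0:ℝ)..T, ∫ y in (0:ℝ)..L, ρ y * (vt y t) ^ 2) ≤ (Xb + C1 * (1 + Xb) ^ 2 * T) / μ := by
  have hμ := h.hμ
  have hE := h.hE
  have hJb := h.hJb
  have hγ : 0 < γ - 1 := by have := h.hγ; linarith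
  have cvy := h.cvy
  have cJ := h.cJ
  have cπ := h.cπ
  have cG := h.cG
  have h0T : (0:ℝ) ∈ Icc (0:ℝ) T := ⟨le_rfl, h.hT.le⟩
  have hTT : T ∈ Icc (0:ℝ) T := ⟨h.hT.le, le_rfl⟩
  have hκ0 : 0 < κ := by rw [hκ]; apply div_pos _ hμ; linarith
  have hlam0 : 0 < lam := by rw [hlam]; positivity
  have hC10 : 0 < C1 := by rw [hC1]; positivity
  have hFb0 : 0 ≤ Fb := by rw [hFb]; positivity
  have hε0 : 0 < ε := by rw [hε]; positivity
  have hlam20 : 0 < lam2 := by rw [hlam2]; positivity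
  have hC50 : 0 < C5 := by rw [hC5]; positivity
  have hC60 : 0 < C6 := by rw [hC6]; positivity
  have dF : ∀ t ∈ Icc (0:ℝ) T, HasDerivWithinAt (fun t => ∫ y in (0:ℝ)..L, J y t * π y t)
      (∫ y in (0:ℝ)..L, (γ - 1) * (vy y t * G y t)) (Icc 0 T) t := fun t ht =>
    par_deriv1 (f := fun y s => J y s * π y s) (ft := fun y t => (γ - 1) * (vy y t * G y t))
      h.hL.le (by fun_prop) (by fun_prop) (fun y hy t ht => h.dJπ hy ht) ht
  have hX' := fun t ht => h.X' ha ha1 ha2 hJc hκ hlam hC1 (t := t) ht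
  have hF' := fun t ht => h.F' ha ha1 ha2 hJc hFb hε hlam20 (t := t) ht
  have dX := fun t ht => h.dX (t := t) ht
  have cY := h.cY
  have hX0 := h.X0
  have hY0 := h.Y0
  have hXi : (∫ y in (0:ℝ)..L, J y 0 * (G y 0) ^ 2) ≤ Jb * K ^ 2 := by
    calc _ ≤ ∫ y in (0:ℝ)..L, Jb * (G y 0) ^ 2 := by
          refine int_mono h.hL.le (by fun_prop) (by fun_prop) fun y hy => ?_
          have := (h.J0 y hy).2
          gcongr
      _ ≤ _ := by rw [int_cmul]; have := h.iK; gcongr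
  have hF0 : 0 ≤ ∫ y in (0:ℝ)..L, J y 0 * π y 0 :=
    int_nonneg h.hL.le fun y hy => mul_nonneg (h.Jpos y 0).le (h.π0 y hy).1
  have hFle := fun t ht => h.intJπ (t := t) ht
  rw [← hFb] at hFle
  set X := fun t => ∫ y in (0:ℝ)..L, J y t * (G y t) ^ 2 with hX
  set Y := fun t => ∫ y in (0:ℝ)..L, ρ y * (vt y t) ^ 2 with hY
  set F := fun t => ∫ y in (0:ℝ)..L, J y t * π y t with hF
  set X' := fun t => (-(2 * μ) * (∫ y in (0:ℝ)..L, ρ y * (vt y t) ^ 2)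
        - (2 * γ - 1) * ∫ y in (0:ℝ)..L, vy y t * (G y t) ^ 2) with hX'd
  set F' := fun t => ∫ y in (0:ℝ)..L, (γ - 1) * (vy y t * G y t) with hF'd
  change ∀ t ∈ Icc (0:ℝ) T, HasDerivWithinAt X (X' t) (Icc 0 T) t at dX
  change ∀ t ∈ Icc (0:ℝ) T, HasDerivWithinAt F (F' t) (Icc 0 T) t at dF
  change ∀ t ∈ Icc (0:ℝ) T, X' t ≤ - μ * Y t + C1 * (1 + X t) ^ 2 at hX'
  change ∀ t ∈ Icc (0:ℝ) T, 1 + X t ≤ 2 * (μ / (γ - 1) * F' t + 1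
        + Fb * a * (1 + lam2) / (4 * ε) + Fb / (4 * ε * lam2) * (Y t / (1 + X t))) at hF'
  change ∀ t, 0 ≤ X t at hX0
  change ∀ t, 0 ≤ Y t at hY0
  change X 0 ≤ _ at hXi
  change 0 ≤ F 0 at hF0
  change ∀ t ∈ Icc (0:ℝ) T, F t ≤ Fb at hFle
  have hbd : ∀ t ∈ Icc (0:ℝ) T, X t ≤ Xb := by
    intro t ht
    have key := aux_mono (f := fun t => Real.log (1 + X t) - C5 * F t - C6 * t)
      (f' := fun t => X' t / (1 + X t) - C5 * F' t - C6 * 1)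
      (fun t ht => ((((dX t ht).const_add 1).log (by have := hX0 t; positivity)).sub
        ((dF t ht).const_mul C5)).sub ((hasDerivWithinAt_id t _).const_mul C6))
      (fun t ht => by
        have h1 := hX' t ht
        have h2 := hF' t ht
        have hx := hX0 t
        have hy := hY0 t
        have h3 : X' t / (1 + X t) ≤ -μ * (Y t / (1 + X t)) + C1 * (1 + X t) := by
          rw [div_le_iff₀ (by positivity)]
          refine h1.trans (le_of_eq ?_)
          field_simp
        have hD : 0 ≤ Y t / (1 + X t) := by positivity
        generalize Y t / (1 + X t) = Dt at *
        have h4 := mul_le_mul_of_nonneg_left h2 hC10.le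
        have h5 : 2 * C1 * (Fb / (4 * ε * lam2)) ≤ μ := by
          have : 2 * C1 * (Fb / (4 * ε * lam2)) = (C1 * Fb / (2 * ε * μ)) * μ / lam2 := by
            field_simp; ring
          rw [this, div_le_iff₀ hlam20, hlam2]
          nlinarith
        have h6 := mul_le_mul_of_nonneg_right h5 hD
        rw [hC5, hC6]
        linarith) ht
    simp only [mul_zero, sub_zero] at key
    have h1 : Real.log (1 + X 0) ≤ Real.log (1 + Jb * K ^ 2) := by
      apply Real.log_le_log
      · have := hX0 0; positivity
      · linarith
    have h2 : C5 * F t ≤ C5 * Fb := by have := hFle t ht; gcongr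
    have h3 : C6 * t ≤ C6 * T := by have := ht.2; gcongr
    have h4 : 0 ≤ C5 * F 0 := by positivity
    have h5 : Real.log (1 + X t) ≤ Real.log (1 + Jb * K ^ 2) + C5 * Fb + C6 * T := by linarith
    have h6 : 1 + X t ≤ Xb := by
      rw [hXb, ← Real.log_le_iff_le_exp (by have := hX0 t; positivity)]
      exact h5
    linarith
  refine ⟨hbd, ?_⟩
  have key := aux_mono (f := fun t => X t + μ * (∫ r in (0:ℝ)..t, Y r) - C1 * (1 + Xb) ^ 2 * t)
    (f' := fun t => X' t + μ * Y t - C1 * (1 + Xb) ^ 2 * 1)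
    (fun t ht => ((dX t ht).add ((prim_deriv cY _ t).const_mul μ)).sub
      ((hasDerivWithinAt_id t _).const_mul _))
    (fun t ht => by
      have h1 := hX' t ht
      have h2 : C1 * (1 + X t) ^ 2 ≤ C1 * (1 + Xb) ^ 2 := by
        have := hX0 t
        have := hbd t ht
        gcongr
      linarith) hTT
  simp only [intervalIntegral.integral_same, mul_zero, sub_zero, add_zero] at key
  rw [le_div_iff₀ hμ]
  have h1 := hbd 0 h0T
  have h2 := hX0 T
  change (∫ t in (0:ℝ)..T, Y t) * μ ≤ _
  linarith

lemma Sol.π_up (h : Sol L T γ μ ρb ℓ Jl Jb P E K D ρ J v π vy vt πt Jy πy vyy πyt G)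
    {q : ℝ → ℝ} {Q : ℝ} (cq : Continuous q) (hq0 : ∀ t, 0 ≤ q t)
    (hq : ∀ y ∈ Icc (0:ℝ) L, ∀ t ∈ Icc (0:ℝ) T, (G y t) ^ 2 ≤ q t)
    (hQ : ∫ t in (0:ℝ)..T, q t ≤ Q) {y : ℝ} (hy : y ∈ Icc (0:ℝ) L) {t : ℝ} (ht : t ∈ Icc (0:ℝ) T) :
    π y t ≤ P + γ ^ 2 / (4 * μ) * Q ∧
    J y t ≤ Jb * Real.exp ((Q + (1 + (P + γ ^ 2 / (4 * μ) * Q)) * T) / μ) := by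
  have hμ := h.hμ
  have hQt : ∀ t ∈ Icc (0:ℝ) T, ∫ r in (0:ℝ)..t, q r ≤ Q := fun t ht =>
    (intervalIntegral.integral_mono_interval le_rfl ht.1 ht.2
      (Filter.Eventually.of_forall hq0) (cq.intervalIntegrable _ _)).trans hQ
  have hQ0 : 0 ≤ Q := by simpa using hQt 0 ⟨le_rfl, h.hT.le⟩
  have hπ : ∀ t ∈ Icc (0:ℝ) T, π y t ≤ P + γ ^ 2 / (4 * μ) * Q := by
    intro t ht
    have key := aux_mono (f := fun t => π y t - γ ^ 2 / (4 * μ) * ∫ r in (0:ℝ)..t, q r)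
      (fun t ht => (h.dπt y hy t ht).sub ((prim_deriv cq _ t).const_mul _))
      (fun t ht => by
        have h1 := hq y hy t ht
        have h2 : γ ^ 2 / (4 * μ) * (G y t) ^ 2 ≤ γ ^ 2 / (4 * μ) * q t := by gcongr
        have h3 : πt y t ≤ γ ^ 2 / (4 * μ) * (G y t) ^ 2 := by
          rw [h.eπt, div_le_iff₀ hμ]
          have : γ ^ 2 / (4 * μ) * G y t ^ 2 * μ = γ ^ 2 * G y t ^ 2 / 4 := by field_simp
          rw [this]
          nlinarith [sq_nonneg (π y t - (γ - 2) / 2 * G y t)]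
        linarith) ht
    simp only [intervalIntegral.integral_same, mul_zero, sub_zero] at key
    have h1 := (h.π0 y hy).2
    have h2 : γ ^ 2 / (4 * μ) * (∫ r in (0:ℝ)..t, q r) ≤ γ ^ 2 / (4 * μ) * Q := by
      have := hQt t ht; gcongr
    linarith
  refine ⟨hπ t ht, ?_⟩
  set M := P + γ ^ 2 / (4 * μ) * Q with hM
  have hM0 : 0 ≤ M := by have := h.hP; positivity
  have key := aux_mono (f := fun t => Real.log (J y t) - ((∫ r in (0:ℝ)..t, q r) + (1 + M) * t) / μ)
    (fun t ht => ((h.dJ y hy t ht).log (h.Jpos y t).ne').sub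
      (((prim_deriv cq _ t).add ((hasDerivWithinAt_id t _).const_mul (1 + M))).div_const μ))
    (fun t ht => by
      have h1 := hq y hy t ht
      have h2 := hπ t ht
      have e : vy y t / J y t = (G y t + π y t) / μ := by
        rw [h.evy]; have := (h.Jpos y t).ne'; field_simp
      rw [e, sub_nonpos]
      have h3 : G y t + π y t ≤ q t + (1 + M) * 1 := by
        have := hq0 t
        nlinarith [sq_nonneg (G y t - 1)]
      exact div_le_div_of_nonneg_right h3 hμ.le) ht
  simp only [intervalIntegral.integral_same, mul_zero, add_zero, zero_div, sub_zero] at key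
  have h1 : ((∫ r in (0:ℝ)..t, q r) + (1 + M) * t) / μ ≤ (Q + (1 + M) * T) / μ := by
    have := hQt t ht
    have := ht.2
    gcongr
  have h2 : Real.log (J y 0) ≤ Real.log Jb := Real.log_le_log (h.Jpos y 0) (h.J0 y hy).2
  have h3 : Real.log (J y t) ≤ Real.log Jb + (Q + (1 + M) * T) / μ := by linarith
  rw [Real.log_le_iff_le_exp (h.Jpos y t), Real.exp_add, Real.exp_log h.hJb] at h3
  exact h3

end


lemma alg_S {γ μ M J π g j p r q : ℝ} (hγ : 1 < γ) (hμ : 0 < μ) (hM : 0 ≤ M) (hJ : 0 ≤ J) (hJM : J ≤ M)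
    (hπ : 0 ≤ π) (hπM : π ≤ M) (hq : g ^ 2 ≤ q) :
    2 * j * ((j * (g + π) + J * (r + p)) / μ) +
    2 * p * ((-(2 * π * p) + (γ - 2) * (p * g + π * r) + (γ - 1) * (2 * g * r)) / μ) ≤
    (2 * (2 * (1 + γ) * (1 + M)) / μ) * ((1 + q) * (j ^ 2 + p ^ 2) + r ^ 2) := by
  have hq0 : 0 ≤ q := (sq_nonneg g).trans hq
  have hg : g ≤ 1 + q := by nlinarith [sq_nonneg (g - 1)]
  have hγg : (γ - 2) * g ≤ γ * (1 + q) := by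
    have : (γ - 2) * g ≤ γ * (1 + g ^ 2) / 2 := by
      nlinarith [mul_nonneg (sub_nonneg.2 hγ.le) (sq_nonneg (g - 1)), sq_nonneg (g + 1)]
    nlinarith
  have e1 : j ^ 2 * (g + π) ≤ j ^ 2 * (1 + q + M) := by
    apply mul_le_mul_of_nonneg_left _ (sq_nonneg _); linarith
  have e2 : J * (j * r) ≤ M / 2 * (j ^ 2 + r ^ 2) := by
    have : J * (j * r) ≤ J * ((j ^ 2 + r ^ 2) / 2) := by
      apply mul_le_mul_of_nonneg_left _ hJ; nlinarith [sq_nonneg (j - r)]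
    have : J * ((j ^ 2 + r ^ 2) / 2) ≤ M * ((j ^ 2 + r ^ 2) / 2) := by gcongr
    linarith
  have e3 : J * (j * p) ≤ M / 2 * (j ^ 2 + p ^ 2) := by
    have : J * (j * p) ≤ J * ((j ^ 2 + p ^ 2) / 2) := by
      apply mul_le_mul_of_nonneg_left _ hJ; nlinarith [sq_nonneg (j - p)]
    have : J * ((j ^ 2 + p ^ 2) / 2) ≤ M * ((j ^ 2 + p ^ 2) / 2) := by gcongr
    linarith
  have e4 : (γ - 2) * g * p ^ 2 ≤ γ * (1 + q) * p ^ 2 := by gcongr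
  have e5 : π * ((γ - 2) * (r * p)) ≤ γ * M / 2 * (r ^ 2 + p ^ 2) := by
    have : π * ((γ - 2) * (r * p)) ≤ π * (γ * ((r ^ 2 + p ^ 2) / 2)) := by
      apply mul_le_mul_of_nonneg_left _ hπ
      nlinarith [mul_nonneg (sub_nonneg.2 hγ.le) (sq_nonneg (r - p)), sq_nonneg (r + p)]
    have : π * (γ * ((r ^ 2 + p ^ 2) / 2)) ≤ M * (γ * ((r ^ 2 + p ^ 2) / 2)) := by gcongr
    linarith
  have e6 : (γ - 1) * (2 * (g * p) * r) ≤ γ * (q * p ^ 2 + r ^ 2) := by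
    have h1 : (γ - 1) * (2 * (g * p) * r) ≤ (γ - 1) * (g ^ 2 * p ^ 2 + r ^ 2) := by
      apply mul_le_mul_of_nonneg_left _ (by linarith); nlinarith [sq_nonneg (g * p - r)]
    have h2 : (γ - 1) * (g ^ 2 * p ^ 2 + r ^ 2) ≤ γ * (q * p ^ 2 + r ^ 2) := by gcongr; linarith
    linarith
  have e7 : 0 ≤ π * p ^ 2 := by positivity
  have n1 : 0 ≤ γ * M := by positivity
  have n2 : 0 ≤ q * M := by positivity
  have n3 : 0 ≤ γ * q := by positivity
  have n4 : 0 ≤ γ * q * M := by positivity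
  have c1 : (1 + q + 2 * M) * j ^ 2 ≤ (2 * (1 + γ) * (1 + M)) * (1 + q) * j ^ 2 := by
    gcongr; nlinarith
  have c2 : (M / 2 + γ * (1 + q) + γ * M / 2 + γ * q) * p ^ 2 ≤
      (2 * (1 + γ) * (1 + M)) * (1 + q) * p ^ 2 := by
    gcongr; nlinarith
  have c3 : (M / 2 + γ * M / 2 + γ) * r ^ 2 ≤ (2 * (1 + γ) * (1 + M)) * r ^ 2 := by
    gcongr; nlinarith
  have key : j * (j * (g + π) + J * (r + p)) +
    p * (-(2 * π * p) + (γ - 2) * (p * g + π * r) + (γ - 1) * (2 * g * r)) ≤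
    (2 * (1 + γ) * (1 + M)) * ((1 + q) * (j ^ 2 + p ^ 2) + r ^ 2) := by
    linarith
  have := mul_le_mul_of_nonneg_left key (div_pos two_pos hμ).le
  calc _ = 2 / μ * (j * (j * (g + π) + J * (r + p)) +
    p * (-(2 * π * p) + (γ - 2) * (p * g + π * r) + (γ - 1) * (2 * g * r))) := by
        field_simp
    _ ≤ _ := this
    _ = _ := by ring

section
variable {L T γ μ ρb ℓ Jl Jb P E K D : ℝ} {ρ : ℝ → ℝ}
    {J v π vy vt πt Jy πy vyy πyt G : ℝ → ℝ → ℝ}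

lemma Sol.r2 (h : Sol L T γ μ ρb ℓ Jl Jb P E K D ρ J v π vy vt πt Jy πy vyy πyt G) (y t : ℝ) :
    (ρ y * vt y t) ^ 2 ≤ ρb * (ρ y * (vt y t) ^ 2) := by
  have h1 := h.ρpos y
  have h2 := h.ρle y
  calc _ = ρ y * (ρ y * (vt y t) ^ 2) := by ring
    _ ≤ _ := by gcongr

lemma Sol.Sbd (h : Sol L T γ μ ρb ℓ Jl Jb P E K D ρ J v π vy vt πt Jy πy vyy πyt G)
    {q : ℝ → ℝ} {Q M A Yb : ℝ} (cq : Continuous q) (hq0 : ∀ t, 0 ≤ q t)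
    (hq : ∀ y ∈ Icc (0:ℝ) L, ∀ t ∈ Icc (0:ℝ) T, (G y t) ^ 2 ≤ q t)
    (hQ : ∫ t in (0:ℝ)..T, q t ≤ Q)
    (hY : (∫ t in (0:ℝ)..T, ∫ y in (0:ℝ)..L, ρ y * (vt y t) ^ 2) ≤ Yb) (hM : 0 ≤ M)
    (hJM : ∀ y ∈ Icc (0:ℝ) L, ∀ t ∈ Icc (0:ℝ) T, J y t ≤ M)
    (hπM : ∀ y ∈ Icc (0:ℝ) L, ∀ t ∈ Icc (0:ℝ) T, π y t ≤ M)
    (hA : A = 2 * (2 * (1 + γ) * (1 + M)) / μ)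
    {t : ℝ} (ht : t ∈ Icc (0:ℝ) T) :
    (∫ y in (0:ℝ)..L, ((Jy y t) ^ 2 + (πy y t) ^ 2)) ≤
      Real.exp (A * (T + Q)) * (2 * D ^ 2 + A * ρb * Yb) := by
  have hμ := h.hμ
  have hρb := h.hρb
  have hγ := h.hγ
  have cvt := h.cvt
  have cρ := h.cρ
  have cJy := h.cJy
  have cπy := h.cπy
  have cvyy := h.cvyy
  have cπyt := h.cπyt
  have cY := h.cY
  have hY0 := h.Y0
  have hA0 : 0 ≤ A := by rw [hA]; positivity
  have dS : ∀ t ∈ Icc (0:ℝ) T, HasDerivWithinAt (fun t => ∫ y in (0:ℝ)..L, ((Jy y t) ^ 2 + (πy y t) ^ 2))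
      (∫ y in (0:ℝ)..L, (2 * Jy y t * vyy y t + 2 * πy y t * πyt y t)) (Icc 0 T) t := fun t ht =>
    par_deriv1 (f := fun y s => (Jy y s) ^ 2 + (πy y s) ^ 2)
      (ft := fun y t => (2 * Jy y t * vyy y t + 2 * πy y t * πyt y t))
      h.hL.le (by fun_prop) (by fun_prop) (fun y hy t ht => by
        refine (((h.dJy y hy t ht).pow 2).add ((h.dπy y hy t ht).pow 2)).congr_deriv ?_
        simp) ht
  have hS' : ∀ t ∈ Icc (0:ℝ) T, (∫ y in (0:ℝ)..L, (2 * Jy y t * vyy y t + 2 * πy y t * πyt y t)) ≤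
      A * (1 + q t) * (∫ y in (0:ℝ)..L, ((Jy y t) ^ 2 + (πy y t) ^ 2)) +
      A * ρb * ∫ y in (0:ℝ)..L, ρ y * (vt y t) ^ 2 := by
    intro t ht
    rw [← int_cmul, ← int_cmul, ← int_add (by fun_prop) (by fun_prop)]
    refine int_mono h.hL.le (by fun_prop) (by fun_prop) fun y hy => ?_
    rw [h.evyy y hy t ht, h.eπyt y hy t ht]
    refine (alg_S hγ hμ hM (h.Jpos y t).le (hJM y hy t ht) (h.πnn hy ht)
      (hπM y hy t ht) (hq y hy t ht)).trans ?_
    rw [← hA]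
    have := mul_le_mul_of_nonneg_left (h.r2 y t) hA0
    linarith
  have hS0 : ∀ t, 0 ≤ ∫ y in (0:ℝ)..L, ((Jy y t) ^ 2 + (πy y t) ^ 2) := fun t =>
    int_nonneg h.hL.le fun y _ => by positivity
  have hSi : (∫ y in (0:ℝ)..L, ((Jy y 0) ^ 2 + (πy y 0) ^ 2)) ≤ 2 * D ^ 2 := by
    rw [int_add (by fun_prop) (by fun_prop)]
    have := h.iDJ
    have := h.iDπ
    linarith
  set S := fun t => ∫ y in (0:ℝ)..L, ((Jy y t) ^ 2 + (πy y t) ^ 2) with hS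
  set S' := fun t => ∫ y in (0:ℝ)..L, (2 * Jy y t * vyy y t + 2 * πy y t * πyt y t) with hS'd
  set Y := fun t => ∫ y in (0:ℝ)..L, ρ y * (vt y t) ^ 2 with hYd
  change ∀ t ∈ Icc (0:ℝ) T, HasDerivWithinAt S (S' t) (Icc 0 T) t at dS
  change ∀ t ∈ Icc (0:ℝ) T, S' t ≤ A * (1 + q t) * S t + A * ρb * Y t at hS'
  change ∀ t, 0 ≤ S t at hS0
  change ∀ t, 0 ≤ Y t at hY0
  change S 0 ≤ _ at hSi
  change S t ≤ _
  change (∫ t in (0:ℝ)..T, Y t) ≤ Yb at hY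
  have hR0 : ∀ t ∈ Icc (0:ℝ) T, 0 ≤ ∫ r in (0:ℝ)..t, (1 + q r) := fun t ht =>
    int_nonneg ht.1 fun r _ => by have := hq0 r; positivity
  have cq1 : Continuous fun r => 1 + q r := by fun_prop
  have key := aux_mono (f := fun t => S t * Real.exp (-(A * ∫ r in (0:ℝ)..t, (1 + q r)))
      - A * ρb * ∫ r in (0:ℝ)..t, Y r)
    (fun t ht => ((dS t ht).mul (((prim_deriv cq1 _ t).const_mul A).neg.exp)).sub
      ((prim_deriv cY _ t).const_mul _))
    (fun t ht => by
      have h1 := hS' t ht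
      have h0 := hR0 t ht
      have he : Real.exp (-(A * ∫ r in (0:ℝ)..t, (1 + q r))) ≤ 1 := by
        apply Real.exp_le_one_iff.2
        have := mul_nonneg hA0 h0
        linarith
      have he0 := Real.exp_pos (-(A * ∫ r in (0:ℝ)..t, (1 + q r)))
      generalize Real.exp (-(A * ∫ r in (0:ℝ)..t, (1 + q r))) = e at *
      have h2 := mul_le_mul_of_nonneg_right h1 he0.le
      have h3 : A * ρb * Y t * e ≤ A * ρb * Y t * 1 := by
        have := hY0 t; gcongr
      linarith) ht
  simp only [intervalIntegral.integral_same, mul_zero, neg_zero, Real.exp_zero, mul_one,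
    sub_zero] at key
  have hYt : ∫ r in (0:ℝ)..t, Y r ≤ Yb :=
    (intervalIntegral.integral_mono_interval le_rfl ht.1 ht.2
      (Filter.Eventually.of_forall hY0) (cY.intervalIntegrable _ _)).trans hY
  have hRt : ∫ r in (0:ℝ)..t, (1 + q r) ≤ T + Q := by
    refine (intervalIntegral.integral_mono_interval (c := 0) (d := T) le_rfl ht.1 ht.2
      (Filter.Eventually.of_forall fun r => ?_) (cq1.intervalIntegrable _ _)).trans ?_
    · have := hq0 r; simp only [Pi.zero_apply]; positivity
    · rw [int_add (by fun_prop) cq]; simpa using hQ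
  have h4 : S t * Real.exp (-(A * ∫ r in (0:ℝ)..t, (1 + q r))) ≤ 2 * D ^ 2 + A * ρb * Yb := by
    have : A * ρb * (∫ r in (0:ℝ)..t, Y r) ≤ A * ρb * Yb := by gcongr
    linarith
  have hN : 0 ≤ 2 * D ^ 2 + A * ρb * Yb := le_trans (mul_nonneg (hS0 t) (Real.exp_pos _).le) h4
  rw [Real.exp_neg, ← div_eq_mul_inv, div_le_iff₀ (Real.exp_pos _)] at h4
  refine h4.trans ?_
  rw [mul_comm]
  gcongr

end


lemma Sol.ex1 (L T γ μ ρb ℓ Jl Jb P E K D : ℝ) (hT : 0 < T) (hγ : 1 < γ) (hμ : 0 < μ) (hρb : 0 < ρb)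
    (hℓ : 0 < ℓ) (hJl : 0 < Jl) (hJb : 0 < Jb) (hP : 0 ≤ P) :
    ∃ k M Yb Sb : ℝ, 0 < k ∧ 0 < M ∧ 0 < Yb ∧ 0 ≤ Sb ∧ 
    ∀ (ρ : ℝ → ℝ) (J v π vy vt πt Jy πy vyy πyt G : ℝ → ℝ → ℝ),
    Sol L T γ μ ρb ℓ Jl Jb P E K D ρ J v π vy vt πt Jy πy vyy πyt G →
    (∫ t in (0:ℝ)..T, ∫ y in (0:ℝ)..L, ρ y * (vt y t) ^ 2) ≤ Yb ∧
    ∀ t ∈ Icc (0:ℝ) T, (∫ y in (0:ℝ)..L, J y t * (G y t) ^ 2) ≤ k ∧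
      (∫ y in (0:ℝ)..L, ((Jy y t) ^ 2 + (πy y t) ^ 2)) ≤ Sb ∧
      ∀ y ∈ Icc (0:ℝ) L, 0 ≤ π y t ∧ π y t ≤ M ∧ J y t ≤ M ∧
        (G y t) ^ 2 ≤ k * Real.sqrt (1 + ∫ y in (0:ℝ)..L, ρ y * (vt y t) ^ 2) := by
  by_cases hE : 0 ≤ E
  swap
  · refine ⟨1, 1, 1, 1, one_pos, one_pos, one_pos, zero_le_one, ?_⟩
    intro ρ J v π vy vt πt Jy πy vyy πyt G h
    exact absurd h.hE hE
  obtain ⟨B, hB⟩ : ∃ B, B = ρb * L + 2 * E := ⟨_, rfl⟩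
  obtain ⟨κ', hκ'⟩ : ∃ κ, κ = Real.exp (2 * B / μ) * ((γ - 1) * E) / (μ * ℓ) := ⟨_, rfl⟩
  obtain ⟨c, hc⟩ : ∃ c, c = Jl * Real.exp (- (2 * B / μ + κ' * T)) := ⟨_, rfl⟩
  have hc0 : 0 < c := by rw [hc]; positivity
  obtain ⟨a, ha⟩ : ∃ a, a = 1 / ℓ + ρb / c := ⟨_, rfl⟩
  have ha0 : 0 < a := by rw [ha]; positivity
  have ha1 : 1 ≤ a * ℓ := by
    have : a * ℓ = 1 + ρb / c * ℓ := by rw [ha]; field_simp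
    rw [this]
    have : 0 ≤ ρb / c * ℓ := by positivity
    linarith
  have ha2 : ρb ≤ a * c := by
    have : a * c = 1 / ℓ * c + ρb := by rw [ha]; field_simp
    rw [this]
    have : 0 ≤ 1 / ℓ * c := by positivity
    linarith
  obtain ⟨κ, hκ⟩ : ∃ κ, κ = (2 * γ - 1) / μ := ⟨_, rfl⟩
  obtain ⟨lam, hlam⟩ : ∃ lam, lam = κ / (2 * μ) := ⟨_, rfl⟩
  obtain ⟨C1, hC1⟩ : ∃ C1, C1 = κ / 2 * (1 + a * (1 + lam)) := ⟨_, rfl⟩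
  obtain ⟨Fb, hFb⟩ : ∃ Fb, Fb = (γ - 1) * E := ⟨_, rfl⟩
  obtain ⟨ε, hε⟩ : ∃ ε, ε = 1 / (2 * (Fb + 1)) := ⟨_, rfl⟩
  obtain ⟨lam2, hlam2⟩ : ∃ lam2, lam2 = C1 * Fb / (2 * ε * μ) + 1 := ⟨_, rfl⟩
  obtain ⟨C5, hC5⟩ : ∃ C5, C5 = 2 * C1 * (μ / (γ - 1)) := ⟨_, rfl⟩
  obtain ⟨C6, hC6⟩ : ∃ C6, C6 = 2 * C1 * (1 + Fb * a * (1 + lam2) / (4 * ε)) := ⟨_, rfl⟩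
  obtain ⟨Xb, hXb⟩ : ∃ Xb, Xb = Real.exp (Real.log (1 + Jb * K ^ 2) + C5 * Fb + C6 * T) := ⟨_, rfl⟩
  obtain ⟨Yb, hYb⟩ : ∃ Yb, Yb = (Xb + C1 * (1 + Xb) ^ 2 * T) / μ := ⟨_, rfl⟩
  have hκ0 : 0 < κ := by rw [hκ]; apply div_pos _ hμ; linarith
  have hlam0 : 0 < lam := by rw [hlam]; positivity
  have hC10 : 0 < C1 := by rw [hC1]; positivity
  have hXb0 : 0 < Xb := by rw [hXb]; positivity
  have hYb0 : 0 < Yb := by rw [hYb]; positivity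
  obtain ⟨Q, hQ⟩ : ∃ Q, Q = 2 * a * Xb * T + Yb := ⟨_, rfl⟩
  have hQ0 : 0 < Q := by rw [hQ]; positivity
  obtain ⟨M1, hM1⟩ : ∃ M1, M1 = P + γ ^ 2 / (4 * μ) * Q := ⟨_, rfl⟩
  obtain ⟨M2, hM2⟩ : ∃ M2, M2 = Jb * Real.exp ((Q + (1 + M1) * T) / μ) := ⟨_, rfl⟩
  have hM10 : 0 < M1 := by rw [hM1]; positivity
  have hM20 : 0 < M2 := by rw [hM2]; positivity
  obtain ⟨A, hA⟩ : ∃ A, A = 2 * (2 * (1 + γ) * (1 + (M1 + M2))) / μ := ⟨_, rfl⟩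
  have hA0 : 0 < A := by rw [hA]; positivity
  refine ⟨Xb + (2 * a * Xb + 1), M1 + M2, Yb, Real.exp (A * (T + Q)) * (2 * D ^ 2 + A * ρb * Yb),
    by positivity, by positivity, by positivity, by positivity, ?_⟩
  intro ρ J v π vy vt πt Jy πy vyy πyt G h
  have hJc : ∀ y ∈ Icc (0:ℝ) L, ∀ t ∈ Icc (0:ℝ) T, c ≤ J y t := fun y hy t ht => by
    rw [hc]; exact h.Jlower hB hκ' hy ht
  obtain ⟨hX, hY⟩ := h.Xbd ha0 ha1 ha2 hJc hκ hlam hC1 hFb hε hlam2 hC5 hC6 hXb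
  rw [← hYb] at hY
  have hG := fun (lam : ℝ) (hlam : 0 < lam) y hy t ht =>
    h.Gsup ha0 ha1 ha2 hJc hlam (y := y) hy (t := t) ht
  have cY := h.cY
  have hY0 := h.Y0
  obtain ⟨q, hq⟩ : ∃ q : ℝ → ℝ, q = fun t => 2 * a * Xb + ∫ y in (0:ℝ)..L, ρ y * (vt y t) ^ 2 := ⟨_, rfl⟩
  have cq : Continuous q := by rw [hq]; fun_prop
  have hq0 : ∀ t, 0 ≤ q t := fun t => by
    rw [hq]; have := hY0 t; positivity
  have hGq : ∀ y ∈ Icc (0:ℝ) L, ∀ t ∈ Icc (0:ℝ) T, (G y t) ^ 2 ≤ q t := by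
    intro y hy t ht
    have h1 := hG 1 one_pos y hy t ht
    have h2 := mul_le_mul_of_nonneg_left (hX t ht) ha0.le
    rw [hq]
    simp only [div_one] at h1
    linarith
  have hqQ : ∫ t in (0:ℝ)..T, q t ≤ Q := by
    rw [hq, int_add (by fun_prop) cY, hQ]
    simp only [intervalIntegral.integral_const, sub_zero, smul_eq_mul]
    linarith
  have hup := fun y hy t ht => h.π_up cq hq0 hGq hqQ (y := y) hy (t := t) ht
  rw [← hM1, ← hM2] at hup
  refine ⟨hY, fun t ht => ⟨?_, ?_, fun y hy => ⟨h.πnn hy ht, ?_, ?_, ?_⟩⟩⟩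
  · have := hX t ht
    have : 0 ≤ 2 * a * Xb + 1 := by positivity
    linarith
  · exact h.Sbd cq hq0 hGq hqQ hY (by positivity) (fun y hy t ht => by
      have := (hup y hy t ht).2; linarith) (fun y hy t ht => by
      have := (hup y hy t ht).1; linarith) hA ht
  · have := (hup y hy t ht).1; linarith
  · have := (hup y hy t ht).2; linarith
  · have hy0 := hY0 t
    have hx := hX t ht
    have hs1 : 1 ≤ Real.sqrt (1 + ∫ y in (0:ℝ)..L, ρ y * (vt y t) ^ 2) := by
      rw [Real.one_le_sqrt]; linarith
    have hss := Real.mul_self_sqrt (x := 1 + ∫ y in (0:ℝ)..L, ρ y * (vt y t) ^ 2) (by positivity)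
    have h1 := hG _ (one_pos.trans_le hs1) y hy t ht
    set s := Real.sqrt (1 + ∫ y in (0:ℝ)..L, ρ y * (vt y t) ^ 2) with hs
    have h2 : (∫ y in (0:ℝ)..L, ρ y * (vt y t) ^ 2) / s ≤ s := by
      rw [div_le_iff₀ (by linarith)]; linarith
    have h3 : a * (1 + s) * (∫ y in (0:ℝ)..L, J y t * (G y t) ^ 2) ≤ a * (1 + s) * Xb := by
      gcongr
    have h4 : a * (1 + s) * Xb ≤ a * (s + s) * Xb := by gcongr
    have h5 : 0 ≤ Xb * s := by positivity
    linarith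

lemma alg_vy {μ M J π g : ℝ} (hμ : 0 < μ) (hJ : 0 ≤ J) (hJM : J ≤ M)
    (hπ : 0 ≤ π) (hπM : π ≤ M) :
    (J * (g + π) / μ) ^ 2 ≤ 2 * M / μ ^ 2 * (J * g ^ 2) + 2 * M ^ 4 / μ ^ 2 := by
  have hM : 0 ≤ M := hJ.trans hJM
  have h1 : (J * (g + π)) ^ 2 ≤ 2 * M * (J * g ^ 2) + 2 * M ^ 4 := by
    calc (J * (g + π)) ^ 2 = J ^ 2 * (g + π) ^ 2 := by ring
      _ ≤ J ^ 2 * (2 * g ^ 2 + 2 * π ^ 2) := by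
        gcongr; nlinarith [sq_nonneg (g - π)]
      _ = 2 * J * (J * g ^ 2) + 2 * J ^ 2 * π ^ 2 := by ring
      _ ≤ 2 * M * (J * g ^ 2) + 2 * M ^ 2 * M ^ 2 := by gcongr
      _ = _ := by ring
  rw [div_pow]
  calc _ ≤ (2 * M * (J * g ^ 2) + 2 * M ^ 4) / μ ^ 2 := by gcongr
    _ = _ := by ring

lemma alg_vyy {μ M J π g j p r q : ℝ} (hμ : 0 < μ) (hJ : 0 ≤ J) (hJM : J ≤ M)
    (hπ : 0 ≤ π) (hπM : π ≤ M) (hq : g ^ 2 ≤ q) :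
    ((j * (g + π) + J * (r + p)) / μ) ^ 2 ≤ 
      4 / μ ^ 2 * ((q + M ^ 2) * j ^ 2 + M ^ 2 * (r ^ 2 + p ^ 2)) := by
  have h1 : (j * (g + π) + J * (r + p)) ^ 2 ≤ 4 * ((q + M ^ 2) * j ^ 2 + M ^ 2 * (r ^ 2 + p ^ 2)) := by
    calc (j * (g + π) + J * (r + p)) ^ 2 ≤ 2 * ((j * (g + π)) ^ 2 + (J * (r + p)) ^ 2) := by
          nlinarith [sq_nonneg ((j * (g + π)) - (J * (r + p)))]
      _ = 2 * ((g + π) ^ 2 * j ^ 2 + J ^ 2 * (r + p) ^ 2) := by ring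
      _ ≤ 2 * ((2 * (g ^ 2 + π ^ 2)) * j ^ 2 + J ^ 2 * (2 * (r ^ 2 + p ^ 2))) := by
        gcongr
        · nlinarith [sq_nonneg (g - π)]
        · nlinarith [sq_nonneg (r - p)]
      _ ≤ 2 * ((2 * (q + M ^ 2)) * j ^ 2 + M ^ 2 * (2 * (r ^ 2 + p ^ 2))) := by gcongr
      _ = _ := by ring
  rw [div_pow]
  calc _ ≤ (4 * ((q + M ^ 2) * j ^ 2 + M ^ 2 * (r ^ 2 + p ^ 2))) / μ ^ 2 := by gcongr
    _ = _ := by ring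

lemma alg_πt {γ μ M π g q : ℝ} (hγ : 1 < γ) (hμ : 0 < μ)
    (hπ : 0 ≤ π) (hπM : π ≤ M) (hq : g ^ 2 ≤ q) :
    |(-π ^ 2 + (γ - 2) * π * g + (γ - 1) * g ^ 2) / μ| ≤ 
      (1 + γ) * (M ^ 2 + 2 * q) / μ := by
  rw [abs_div, abs_of_pos hμ]
  have h1 : π ^ 2 ≤ M ^ 2 := by gcongr
  have h2 := mul_nonneg (sub_nonneg.2 hγ.le) (sq_nonneg (π - g))
  have h3 := mul_nonneg (sub_nonneg.2 hγ.le) (sq_nonneg (π + g))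
  have h4 := mul_le_mul_of_nonneg_left h1 (by linarith : 0 ≤ γ)
  have h5 := mul_le_mul_of_nonneg_left hq (by linarith : 0 ≤ γ)
  gcongr
  rw [abs_le]
  constructor <;> nlinarith [sq_nonneg (π - g), sq_nonneg (π + g), sq_nonneg π, sq_nonneg g]

lemma alg_πyt {γ μ M π g p r q : ℝ} (hγ : 1 < γ) (hμ : 0 < μ)
    (hπ : 0 ≤ π) (hπM : π ≤ M) (hq : g ^ 2 ≤ q) :
    ((-(2 * π * p) + (γ - 2) * (p * g + π * r) + (γ - 1) * (2 * g * r)) / μ) ^ 2 ≤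
     16 * (2 + γ) ^ 2 * (M ^ 2 + q) / μ ^ 2 * (p ^ 2 + r ^ 2) := by
  have hg2 : (γ - 2) ^ 2 ≤ (2 + γ) ^ 2 := by nlinarith
  have hg1 : (γ - 1) ^ 2 ≤ (2 + γ) ^ 2 := by nlinarith
  have hg3 : 1 ≤ (2 + γ) ^ 2 := by nlinarith
  have four : ∀ a b c d : ℝ, (a + b + c + d) ^ 2 ≤ 4 * (a ^ 2 + b ^ 2 + c ^ 2 + d ^ 2) := by
    intro a b c d
    nlinarith [sq_nonneg (a - b), sq_nonneg (a - c), sq_nonneg (a - d), sq_nonneg (b - c),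
      sq_nonneg (b - d), sq_nonneg (c - d)]
  have hN : 0 ≤ (2 + γ) ^ 2 := by positivity
  have hq0 : 0 ≤ q := (sq_nonneg g).trans hq
  have h1 : (-(2 * π * p) + (γ - 2) * (p * g + π * r) + (γ - 1) * (2 * g * r)) ^ 2 ≤
      16 * (2 + γ) ^ 2 * (M ^ 2 + q) * (p ^ 2 + r ^ 2) := by
    calc _ = (-(2 * π * p) + (γ - 2) * (p * g) + (γ - 2) * (π * r) + (γ - 1) * (2 * g * r)) ^ 2 := by
          ring
      _ ≤ _ := four _ _ _ _
      _ = 4 * (1 * (4 * π ^ 2 * p ^ 2) + (γ - 2) ^ 2 * (g ^ 2 * p ^ 2) + (γ - 2) ^ 2 * (π ^ 2 * r ^ 2)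
          + (γ - 1) ^ 2 * (4 * g ^ 2 * r ^ 2)) := by ring
      _ ≤ 4 * ((2 + γ) ^ 2 * (4 * M ^ 2 * p ^ 2) + (2 + γ) ^ 2 * (q * p ^ 2)
          + (2 + γ) ^ 2 * (M ^ 2 * r ^ 2) + (2 + γ) ^ 2 * (4 * q * r ^ 2)) := by
          gcongr
      _ ≤ 4 * ((2 + γ) ^ 2 * (4 * M ^ 2 * p ^ 2) + (2 + γ) ^ 2 * (4 * q * p ^ 2)
          + (2 + γ) ^ 2 * (4 * M ^ 2 * r ^ 2) + (2 + γ) ^ 2 * (4 * q * r ^ 2)) := by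
          gcongr
          · linarith
          · nlinarith [sq_nonneg M]
      _ = _ := by ring
  rw [div_pow]
  calc _ ≤ (16 * (2 + γ) ^ 2 * (M ^ 2 + q) * (p ^ 2 + r ^ 2)) / μ ^ 2 := by gcongr
    _ = _ := by ring

lemma Sol.ex3 (L T γ μ ρb ℓ Jl Jb P E K D : ℝ) (hL : 0 < L) (hT : 0 < T) (hγ : 1 < γ) (hμ : 0 < μ)
    (hρb : 0 < ρb) (hℓ : 0 < ℓ) (hJl : 0 < Jl) (hJb : 0 < Jb) (hP : 0 ≤ P) :
    ∃ C > 0,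
    ∀ (ρ : ℝ → ℝ) (J v π vy vt πt Jy πy vyy πyt G : ℝ → ℝ → ℝ),
    Sol L T γ μ ρb ℓ Jl Jb P E K D ρ J v π vy vt πt Jy πy vyy πyt G →
    (∫ t in (0:ℝ)..T, ∫ y in (0:ℝ)..L, ρ y * (vt y t) ^ 2) ≤ C ∧
    ∀ t ∈ Icc (0:ℝ) T, (∫ y in (0:ℝ)..L, (vy y t) ^ 2) ≤ C ∧
      ∀ z, z = 1 + (∫ y in (0:ℝ)..L, ρ y * (vt y t) ^ 2) →
      (∫ y in (0:ℝ)..L, (vyy y t) ^ 2) ≤ C * z ∧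
      (∀ y ∈ Icc (0:ℝ) L, |πt y t| ≤ C * Real.sqrt z) ∧
      (∫ y in (0:ℝ)..L, (πyt y t) ^ 2) ≤ C * (Real.sqrt z * z) := by
  obtain ⟨k, M, Yb, Sb, hk, hM, hYb, hSb, H⟩ := Sol.ex1 L T γ μ ρb ℓ Jl Jb P E K D hT hγ hμ hρb
    hℓ hJl hJb hP
  obtain ⟨c1, hc1⟩ : ∃ c, c = 2 * M / μ ^ 2 * k + 2 * M ^ 4 / μ ^ 2 * L := ⟨_, rfl⟩
  obtain ⟨c2, hc2⟩ : ∃ c, c = 4 / μ ^ 2 * ((k + M ^ 2) * Sb + M ^ 2 * (ρb + Sb)) := ⟨_, rfl⟩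
  obtain ⟨c3, hc3⟩ : ∃ c, c = (1 + γ) * (M ^ 2 + 2 * k) / μ := ⟨_, rfl⟩
  obtain ⟨c4, hc4⟩ : ∃ c, c = 16 * (2 + γ) ^ 2 * (M ^ 2 + k) / μ ^ 2 * (Sb + ρb) := ⟨_, rfl⟩
  have h1 : 0 < c1 := by rw [hc1]; positivity
  have h2 : 0 < c2 := by rw [hc2]; positivity
  have h3 : 0 < c3 := by rw [hc3]; positivity
  have h4 : 0 < c4 := by rw [hc4]; positivity
  refine ⟨Yb + c1 + c2 + c3 + c4, by positivity, ?_⟩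
  intro ρ J v π vy vt πt Jy πy vyy πyt G h
  obtain ⟨hY, H⟩ := H ρ J v π vy vt πt Jy πy vyy πyt G h
  refine ⟨by linarith, fun t ht => ?_⟩
  obtain ⟨hX, hS, H⟩ := H t ht
  have cJ := h.cJ
  have cG := h.cG
  have cπ := h.cπ
  have cvy := h.cvy
  have cvt := h.cvt
  have cρ := h.cρ
  have cJy := h.cJy
  have cπy := h.cπy
  have cvyy := h.cvyy
  have cπyt := h.cπyt
  refine ⟨?_, ?_⟩
  · have : (∫ y in (0:ℝ)..L, (vy y t) ^ 2) ≤ c1 := by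
      calc _ ≤ ∫ y in (0:ℝ)..L, (2 * M / μ ^ 2 * (J y t * (G y t) ^ 2) + 2 * M ^ 4 / μ ^ 2) := by
            refine int_mono h.hL.le (by fun_prop) (by fun_prop) fun y hy => ?_
            rw [h.evy]
            obtain ⟨a1, a2, a3, a4⟩ := H y hy
            exact alg_vy hμ (h.Jpos y t).le a3 a1 a2
        _ = 2 * M / μ ^ 2 * (∫ y in (0:ℝ)..L, (J y t * (G y t) ^ 2)) + 2 * M ^ 4 / μ ^ 2 * L := by
            rw [int_add (by fun_prop) (by fun_prop), int_cmul]
            simp only [intervalIntegral.integral_const, sub_zero, smul_eq_mul]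
            ring
        _ ≤ _ := by rw [hc1]; gcongr
    linarith
  intro z hz
  have hY0 := h.Y0 t
  rw [← hz] at H
  have hz1 : 1 ≤ z := by linarith
  have hs1 : 1 ≤ Real.sqrt z := by rwa [Real.one_le_sqrt]
  have hss := Real.mul_self_sqrt (x := z) (by positivity)
  set s := Real.sqrt z with hs
  have hsz : s ≤ z := by nlinarith
  have hYz : (∫ y in (0:ℝ)..L, ρ y * (vt y t) ^ 2) ≤ z := by linarith
  have hJy : (∫ y in (0:ℝ)..L, (Jy y t) ^ 2) ≤ Sb := by
    refine le_trans (int_mono h.hL.le (by fun_prop) (by fun_prop) fun y hy => ?_) hS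
    have := sq_nonneg (πy y t)
    linarith
  have hπy : (∫ y in (0:ℝ)..L, (πy y t) ^ 2) ≤ Sb := by
    refine le_trans (int_mono h.hL.le (by fun_prop) (by fun_prop) fun y hy => ?_) hS
    have := sq_nonneg (Jy y t)
    linarith
  have hr : (∫ y in (0:ℝ)..L, (ρ y * vt y t) ^ 2) ≤ ρb * z := by
    refine le_trans (int_mono (g := fun y => ρb * (ρ y * (vt y t) ^ 2)) h.hL.le (by fun_prop)
      (by fun_prop) fun y hy => h.r2 y t) ?_
    rw [int_cmul]
    gcongr
  refine ⟨?_, ?_, ?_⟩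
  · have : (∫ y in (0:ℝ)..L, (vyy y t) ^ 2) ≤ c2 * z := by
      calc _ ≤ ∫ y in (0:ℝ)..L, 4 / μ ^ 2 * ((k * s + M ^ 2) * (Jy y t) ^ 2 + M ^ 2 * ((ρ y * vt y t) ^ 2 + (πy y t) ^ 2)) := by
            refine int_mono h.hL.le (by fun_prop) (by fun_prop) fun y hy => ?_
            rw [h.evyy y hy t ht]
            obtain ⟨a1, a2, a3, a4⟩ := H y hy
            exact alg_vyy hμ (h.Jpos y t).le a3 a1 a2 a4
        _ = 4 / μ ^ 2 * ((k * s + M ^ 2) * (∫ y in (0:ℝ)..L, (Jy y t) ^ 2) + M ^ 2 *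
            ((∫ y in (0:ℝ)..L, (ρ y * vt y t) ^ 2) + (∫ y in (0:ℝ)..L, (πy y t) ^ 2))) := by
            rw [int_cmul, int_add (by fun_prop) (by fun_prop), int_cmul, int_cmul,
              int_add (by fun_prop) (by fun_prop)]
        _ ≤ 4 / μ ^ 2 * ((k * s + M ^ 2) * Sb + M ^ 2 * (ρb * z + Sb)) := by gcongr
        _ ≤ 4 / μ ^ 2 * ((k * z + M ^ 2 * z) * Sb + M ^ 2 * (ρb * z + Sb * z)) := by
            gcongr
            · exact le_mul_of_one_le_right (by positivity) hz1
            · exact le_mul_of_one_le_right (by positivity) hz1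
        _ = _ := by rw [hc2]; ring
    refine this.trans ?_
    gcongr
    linarith
  · intro y hy
    obtain ⟨a1, a2, a3, a4⟩ := H y hy
    rw [h.eπt]
    refine (alg_πt hγ hμ a1 a2 a4).trans ?_
    calc (1 + γ) * (M ^ 2 + 2 * (k * s)) / μ ≤ (1 + γ) * (M ^ 2 * s + 2 * (k * s)) / μ := by
          gcongr
          exact le_mul_of_one_le_right (by positivity) hs1
      _ = c3 * s := by rw [hc3]; ring
      _ ≤ _ := by gcongr; linarith
  · have : (∫ y in (0:ℝ)..L, (πyt y t) ^ 2) ≤ c4 * (s * z) := by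
      calc _ ≤ ∫ y in (0:ℝ)..L, 16 * (2 + γ) ^ 2 * (M ^ 2 + k * s) / μ ^ 2 * ((πy y t) ^ 2 + (ρ y * vt y t) ^ 2) := by
            refine int_mono h.hL.le (by fun_prop) (by fun_prop) fun y hy => ?_
            rw [h.eπyt y hy t ht]
            obtain ⟨a1, a2, a3, a4⟩ := H y hy
            exact alg_πyt hγ hμ a1 a2 a4
        _ = 16 * (2 + γ) ^ 2 * (M ^ 2 + k * s) / μ ^ 2 * 
            ((∫ y in (0:ℝ)..L, (πy y t) ^ 2) + (∫ y in (0:ℝ)..L, (ρ y * vt y t) ^ 2)) := by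
            rw [int_cmul, int_add (by fun_prop) (by fun_prop)]
        _ ≤ 16 * (2 + γ) ^ 2 * (M ^ 2 * s + k * s) / μ ^ 2 * (Sb * z + ρb * z) := by
            have i1 : 0 ≤ ∫ y in (0:ℝ)..L, (πy y t) ^ 2 :=
              int_nonneg hL.le fun y _ => sq_nonneg _
            have i2 : 0 ≤ ∫ y in (0:ℝ)..L, (ρ y * vt y t) ^ 2 :=
              int_nonneg hL.le fun y _ => sq_nonneg _
            have i3 : M ^ 2 ≤ M ^ 2 * s := le_mul_of_one_le_right (by positivity) hs1
            gcongr
            · exact hπy.trans (le_mul_of_one_le_right (by positivity) hz1)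
        _ = _ := by rw [hc4]; ring
    refine this.trans ?_
    gcongr
    linarith


noncomputable def cl (L y : ℝ) : ℝ := max 0 (min L y)

lemma cl_mem {L : ℝ} (hL : 0 ≤ L) (y : ℝ) : cl L y ∈ Icc (0:ℝ) L :=
  ⟨le_max_left _ _, max_le hL (min_le_left _ _)⟩

lemma cl_eq {L y : ℝ} (hy : y ∈ Icc (0:ℝ) L) : cl L y = y := by
  unfold cl
  rw [min_eq_right hy.2, max_eq_right hy.1]

lemma cl_cont (L : ℝ) : Continuous (cl L) := by
  unfold cl; fun_prop

noncomputable def ex (L T : ℝ) (f : ℝ → ℝ → ℝ) : ℝ → ℝ → ℝ := fun y t => f (cl L y) (cl T t)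

section
variable {L T : ℝ} {f : ℝ → ℝ → ℝ}

lemma ex_cont (hL : 0 ≤ L) (hT : 0 ≤ T)
    (h : ContinuousOn (fun p : ℝ × ℝ => f p.1 p.2) (Icc 0 L ×ˢ Icc 0 T)) :
    Continuous (Function.uncurry (ex L T f)) := by
  have : Continuous fun p : ℝ × ℝ => (cl L p.1, cl T p.2) :=
    ((cl_cont L).comp continuous_fst).prodMk ((cl_cont T).comp continuous_snd)
  exact h.comp_continuous this fun p => ⟨cl_mem hL _, cl_mem hT _⟩

lemma ex_eq {y : ℝ} (hy : y ∈ Icc (0:ℝ) L) {t : ℝ} (ht : t ∈ Icc (0:ℝ) T) :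
    ex L T f y t = f y t := by
  unfold ex; rw [cl_eq hy, cl_eq ht]

lemma ex_dt {f' : ℝ → ℝ → ℝ} (h : ∀ y ∈ Icc (0:ℝ) L, ∀ t ∈ Icc (0:ℝ) T,
    HasDerivWithinAt (fun s => f y s) (f' y t) (Icc 0 T) t) :
    ∀ y ∈ Icc (0:ℝ) L, ∀ t ∈ Icc (0:ℝ) T,
    HasDerivWithinAt (fun s => ex L T f y s) (ex L T f' y t) (Icc 0 T) t := by
  intro y hy t ht
  rw [ex_eq hy ht]
  exact (h y hy t ht).congr_of_mem (fun s hs => ex_eq hy hs) ht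

lemma ex_dy {f' : ℝ → ℝ → ℝ} (h : ∀ y ∈ Icc (0:ℝ) L, ∀ t ∈ Icc (0:ℝ) T,
    HasDerivWithinAt (fun s => f s t) (f' y t) (Icc 0 L) y) :
    ∀ y ∈ Icc (0:ℝ) L, ∀ t ∈ Icc (0:ℝ) T,
    HasDerivWithinAt (fun s => ex L T f s t) (ex L T f' y t) (Icc 0 L) y := by
  intro y hy t ht
  rw [ex_eq hy ht]
  exact (h y hy t ht).congr_of_mem (fun s hs => ex_eq hs ht) hy

lemma duniq {g : ℝ → ℝ} (hL : 0 < L) {y a b : ℝ} (hy : y ∈ Icc (0:ℝ) L)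
    (h1 : HasDerivWithinAt g a (Icc 0 L) y) (h2 : HasDerivWithinAt g b (Icc 0 L) y) : a = b :=
  (uniqueDiffOn_Icc hL y hy).eq_deriv _ h1 h2

lemma mixed {ft fy fyt : ℝ → ℝ → ℝ} (hL : 0 < L) 
    (cft : Continuous (Function.uncurry ft)) 
    (cfyt : Continuous (Function.uncurry fyt))
    (hft : ∀ y ∈ Icc (0:ℝ) L, ∀ t ∈ Icc (0:ℝ) T, HasDerivWithinAt (fun s => f y s) (ft y t) (Icc 0 T) t)
    (hfy : ∀ y ∈ Icc (0:ℝ) L, ∀ t ∈ Icc (0:ℝ) T, HasDerivWithinAt (fun x => f x t) (fy y t) (Icc 0 L) y)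
    (hfyt : ∀ y ∈ Icc (0:ℝ) L, ∀ t ∈ Icc (0:ℝ) T, HasDerivWithinAt (fun x => ft x t) (fyt y t) (Icc 0 L) y) :
    ∀ y ∈ Icc (0:ℝ) L, ∀ t ∈ Icc (0:ℝ) T,
      HasDerivWithinAt (fun s => fy y s) (fyt y t) (Icc 0 T) t := by
  intro y hy t ht
  have h0T : (0:ℝ) ∈ Icc (0:ℝ) T := ⟨le_rfl, ht.1.trans ht.2⟩
  have key : ∀ t ∈ Icc (0:ℝ) T, fy y t = fy y 0 + ∫ s in (0:ℝ)..t, fyt y s := by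
    intro t ht
    refine duniq hL hy (hfy y hy t ht) ?_
    have h1 : HasDerivWithinAt (fun x => ∫ s in (0:ℝ)..t, ft x s) (∫ s in (0:ℝ)..t, fyt y s)
        (Icc 0 L) y :=
      par_deriv1 (f := fun s x => ft x s) (ft := fun s x => fyt x s) ht.1 (by fun_prop) (by fun_prop)
        (fun s hs x hx => hfyt x hx s ⟨hs.1, hs.2.trans ht.2⟩) hy
    refine ((hfy y hy 0 h0T).add h1).congr_of_mem (fun x hx => ?_) hy
    have := aux_ftc (f := fun s => f x s) (f' := fun s => ft x s) (by fun_prop)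
      (fun s hs => hft x hx s hs) h0T ht
    simp only [Pi.add_apply]
    rw [this]; ring
  have cq : Continuous fun s => fyt y s := by fun_prop
  exact ((prim_deriv cq (Icc 0 T) t).const_add (fy y 0)).congr_of_mem (fun s hs => key s hs) ht
end

lemma mkSol
    {L γ μ ρbar ℓ₀ Jlow Jbar P₀ E₀ K₀ D₀ T : ℝ}
    (hL : 0 < L) (hγ : 1 < γ) (hμ : 0 < μ) (hρbar : 0 < ρbar) (hℓ₀ : 0 < ℓ₀)
    (hJlow : 0 < Jlow) (hJbar : 0 < Jbar) (hP₀ : 0 ≤ P₀)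
    (hE₀ : 0 ≤ E₀) (hK₀ : 0 ≤ K₀) (hT : 0 < T)
    {ρ₀ : ℝ → ℝ}
    {J v π Jt vy vt w πy πt Jy vyy πyt : ℝ → ℝ → ℝ}
    (hρc : ContinuousOn ρ₀ (Icc 0 L))
    (hρ : ∀ y ∈ Icc (0:ℝ) L, 0 < ρ₀ y ∧ ρ₀ y ≤ ρbar)
    (cs : ClassicalSolution L T μ γ ρ₀ J v π Jt vy vt w πy πt)
    (hJy : ∀ y ∈ Icc (0:ℝ) L, ∀ t ∈ Icc (0:ℝ) T,
        HasDerivWithinAt (fun x => J x t) (Jy y t) (Icc 0 L) y)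
    (hvyy : ∀ y ∈ Icc (0:ℝ) L, ∀ t ∈ Icc (0:ℝ) T,
        HasDerivWithinAt (fun x => vy x t) (vyy y t) (Icc 0 L) y)
    (hπyt : ∀ y ∈ Icc (0:ℝ) L, ∀ t ∈ Icc (0:ℝ) T,
        HasDerivWithinAt (fun x => πt x t) (πyt y t) (Icc 0 L) y)
    (cJy : ContinuousOn (fun p : ℝ × ℝ => Jy p.1 p.2) (Icc 0 L ×ˢ Icc 0 T))
    (cvyy : ContinuousOn (fun p : ℝ × ℝ => vyy p.1 p.2) (Icc 0 L ×ˢ Icc 0 T))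
    (cπyt : ContinuousOn (fun p : ℝ × ℝ => πyt p.1 p.2) (Icc 0 L ×ˢ Icc 0 T))
    (hv : ∀ t ∈ Icc (0:ℝ) T, v 0 t = 0 ∧ v L t = 0)
    (hπ0 : ∀ y ∈ Icc (0:ℝ) L, 0 ≤ π y 0)
    (hP : sSup ((fun y => |π y 0|) '' Icc (0:ℝ) L) ≤ P₀)
    (hJ0 : ∀ y ∈ Icc (0:ℝ) L, Jlow ≤ J y 0 ∧ J y 0 ≤ Jbar)
    (hℓ : (∫ y in (0:ℝ)..L, J y 0) = ℓ₀)
    (hE : (∫ y in (0:ℝ)..L, (ρ₀ y * (v y 0) ^ 2 / 2 + J y 0 * π y 0 / (γ - 1))) = E₀)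
    (hK : Real.sqrt (∫ y in (0:ℝ)..L, (μ * vy y 0 / J y 0 - π y 0) ^ 2) ≤ K₀)
    (hD : Real.sqrt (∫ y in (0:ℝ)..L, (Jy y 0) ^ 2)
          + Real.sqrt (∫ y in (0:ℝ)..L, (πy y 0) ^ 2) ≤ D₀) :
    Sol L T γ μ ρbar ℓ₀ Jlow Jbar P₀ E₀ K₀ D₀ (fun y => ρ₀ (cl L y))
      (ex L T J) (ex L T v) (ex L T π) (ex L T vy) (ex L T vt) (ex L T πt) (ex L T Jy) (ex L T πy)
      (ex L T vyy) (ex L T πyt)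
      (fun y t => μ * ex L T vy y t / ex L T J y t - ex L T π y t) := by
  have h0T : (0:ℝ) ∈ Icc (0:ℝ) T := ⟨le_rfl, hT.le⟩
  have Jpos : ∀ y t, 0 < ex L T J y t := fun y t => cs.Jpos _ (cl_mem hL.le y) _ (cl_mem hT.le t)
  have cJ := ex_cont hL.le hT.le cs.contJ
  have cv := ex_cont hL.le hT.le cs.contv
  have cπ := ex_cont hL.le hT.le cs.contPi
  have cvy := ex_cont hL.le hT.le cs.contvy
  have cG : Continuous (Function.uncurry
      (fun y t => μ * ex L T vy y t / ex L T J y t - ex L T π y t)) := by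
    have : ∀ p : ℝ × ℝ, ex L T J p.1 p.2 ≠ 0 := fun p => (Jpos _ _).ne'
    refine Continuous.sub (Continuous.div (by fun_prop) (by fun_prop) this) (by fun_prop)
  have dJ : ∀ y ∈ Icc (0:ℝ) L, ∀ t ∈ Icc (0:ℝ) T,
      HasDerivWithinAt (fun s => ex L T J y s) (ex L T vy y t) (Icc 0 T) t :=
    ex_dt fun y hy t ht => by rw [← cs.eq1 y hy t ht]; exact cs.hJt y hy t ht
  have dπt := ex_dt cs.hPit
  have dJy := ex_dy hJy
  have dπy := ex_dy cs.hPiy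
  have dvyy := ex_dy hvyy
  have dπyt := ex_dy hπyt
  have dG : ∀ y ∈ Icc (0:ℝ) L, ∀ t ∈ Icc (0:ℝ) T,
      HasDerivWithinAt (fun x => μ * ex L T vy x t / ex L T J x t - ex L T π x t)
        (ρ₀ (cl L y) * ex L T vt y t) (Icc 0 L) y := by
    intro y hy t ht
    rw [cl_eq hy, ex_eq hy ht]
    have e : ρ₀ y * vt y t = μ * w y t - πy y t := by have := cs.eq2 y hy t ht; linarith
    rw [e]
    refine (((cs.hw y hy t ht).const_mul μ).sub (cs.hPiy y hy t ht)).congr_of_mem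
      (fun x hx => ?_) hy
    simp only [Pi.sub_apply, ex_eq hx ht]
    ring
  have evy : ∀ y t, ex L T vy y t = ex L T J y t *
      ((μ * ex L T vy y t / ex L T J y t - ex L T π y t) + ex L T π y t) / μ := by
    intro y t
    have := (Jpos y t).ne'
    field_simp
    ring
  have eπt : ∀ y t, ex L T πt y t = (-(ex L T π y t)^2
      + (γ - 2) * ex L T π y t * (μ * ex L T vy y t / ex L T J y t - ex L T π y t)
      + (γ - 1) * (μ * ex L T vy y t / ex L T J y t - ex L T π y t)^2) / μ := by
    intro y t
    have h1 := cs.eq3 _ (cl_mem hL.le y) _ (cl_mem hT.le t)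
    change ex L T πt y t + γ * (ex L T vy y t / ex L T J y t) * ex L T π y t =
      μ * (γ - 1) * (ex L T vy y t / ex L T J y t) ^ 2 at h1
    rw [eq_div_iff hμ.ne', mul_div_assoc]
    have h2 : ex L T πt y t = μ * (γ - 1) * (ex L T vy y t / ex L T J y t) ^ 2 -
      γ * (ex L T vy y t / ex L T J y t) * ex L T π y t := by linarith
    rw [h2]
    ring
  have hD1 := Real.sqrt_nonneg (∫ y in (0:ℝ)..L, (Jy y 0) ^ 2)
  have hD2 := Real.sqrt_nonneg (∫ y in (0:ℝ)..L, (πy y 0) ^ 2)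
  refine
   { hL := hL, hT := hT, hγ := hγ, hμ := hμ, hρb := hρbar, hℓ := hℓ₀, hJl := hJlow, hJb := hJbar
     hP := hP₀, hE := hE₀
     cρ := hρc.comp_continuous (cl_cont L) fun y => cl_mem hL.le y
     cJ := cJ, cv := cv, cπ := cπ, cvy := cvy
     cvt := ex_cont hL.le hT.le cs.contvt
     cπt := ex_cont hL.le hT.le cs.contPit
     cJy := ex_cont hL.le hT.le cJy
     cπy := ex_cont hL.le hT.le cs.contPiy
     cvyy := ex_cont hL.le hT.le cvyy
     cπyt := ex_cont hL.le hT.le cπyt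
     cG := cG
     ρpos := fun y => (hρ _ (cl_mem hL.le y)).1
     ρle := fun y => (hρ _ (cl_mem hL.le y)).2
     Jpos := Jpos
     dJ := dJ
     dvt := ex_dt cs.hvt
     dπt := dπt
     dJy := mixed hL cvy (ex_cont hL.le hT.le cvyy) dJ dJy dvyy
     dπy := mixed hL (ex_cont hL.le hT.le cs.contPit) (ex_cont hL.le hT.le cπyt) dπt dπy dπyt
     dvy := ex_dy cs.hvy
     dG := dG
     evy := evy
     eπt := eπt
     evyy := ?_, eπyt := ?_, v0 := ?_, vL := ?_, π0 := ?_, J0 := ?_, iℓ := ?_, iE := ?_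
     iK := ?_, iDJ := ?_, iDπ := ?_ }
  · intro y hy t ht
    have h1 := (((dJy y hy t ht).mul ((dG y hy t ht).add (dπy y hy t ht))).div_const μ)
    exact duniq hL hy (dvyy y hy t ht) (h1.congr_of_mem (fun x hx => evy x t) hy)
  · intro y hy t ht
    have h1 := ((((dπy y hy t ht).pow 2).neg.add (((dπy y hy t ht).const_mul (γ - 2)).mul
      (dG y hy t ht))).add (((dG y hy t ht).pow 2).const_mul (γ - 1))).div_const μ
    refine (duniq hL hy (dπyt y hy t ht) (h1.congr_of_mem (fun x hx => eπt x t) hy)).trans ?_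
    simp
    ring
  · intro t ht
    rw [ex_eq ⟨le_rfl, hL.le⟩ ht]; exact (hv t ht).1
  · intro t ht
    rw [ex_eq ⟨hL.le, le_rfl⟩ ht]; exact (hv t ht).2
  · intro y hy
    have hb : BddAbove ((fun y => |π y 0|) '' Icc (0:ℝ) L) := by
      have h1 : Continuous fun y => |ex L T π y 0| := by fun_prop
      have h2 := isCompact_Icc.bddAbove_image (K := Icc (0:ℝ) L) h1.continuousOn
      have h3 : (fun y => |ex L T π y 0|) '' Icc (0:ℝ) L = (fun y => |π y 0|) '' Icc (0:ℝ) L :=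
        image_congr fun y hy => by rw [ex_eq hy h0T]
      rwa [h3] at h2
    rw [ex_eq hy h0T]
    exact ⟨hπ0 y hy, (le_abs_self _).trans ((le_csSup hb ⟨y, hy, rfl⟩).trans hP)⟩
  · intro y hy
    rw [ex_eq hy h0T]
    exact hJ0 y hy
  · rw [← hℓ]
    exact int_congr hL.le fun y hy => ex_eq hy h0T
  · rw [← hE]
    exact int_congr hL.le fun y hy => by rw [cl_eq hy, ex_eq hy h0T, ex_eq hy h0T, ex_eq hy h0T]
  · refine le_trans (le_of_eq ?_) (Real.sqrt_le_iff.1 hK).2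
    exact int_congr hL.le fun y hy => by rw [ex_eq hy h0T, ex_eq hy h0T, ex_eq hy h0T]
  · refine le_trans (le_of_eq ?_) (Real.sqrt_le_iff.1 (show √(∫ y in (0:ℝ)..L, (Jy y 0) ^ 2) ≤ D₀ by linarith)).2
    exact int_congr hL.le fun y hy => by rw [ex_eq hy h0T]
  · refine le_trans (le_of_eq ?_) (Real.sqrt_le_iff.1 (show √(∫ y in (0:ℝ)..L, (πy y 0) ^ 2) ≤ D₀ by linarith)).2
    exact int_congr hL.le fun y hy => by rw [ex_eq hy h0T]

/-- (Corollary 2.7: combined second-order a priori estimates.) The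
constant `C` depends only on `γ, μ, ρ̄, ℓ₀, J̲, J̄, m₀, ‖π₀‖_∞, E₀, ‖G₀‖₂,
‖∂_y J₀‖₂ + ‖∂_y π₀‖₂` and `T`. Here `vyy = ∂_y² v`, `Jyt = ∂_y ∂ₜ J`,
`πyt = ∂_y ∂ₜ π`. -/
theorem second_order_estimates
    (L γ μ ρbar ℓ₀ Jlow Jbar m₀ P₀ E₀ K₀ D₀ T : ℝ)
    (hL : 0 < L) (hγ : 1 < γ) (hμ : 0 < μ) (hρbar : 0 < ρbar) (hℓ₀ : 0 < ℓ₀)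
    (hJlow : 0 < Jlow) (hJbar : 0 < Jbar) (hm₀ : 0 ≤ m₀) (hP₀ : 0 ≤ P₀)
    (hE₀ : 0 ≤ E₀) (hK₀ : 0 ≤ K₀) (hD₀ : 0 ≤ D₀) (hT : 0 < T) :
    ∃ C > 0, ∀ (ρ₀ ρ₀d : ℝ → ℝ)
      (J v π Jt vy vt w πy πt Jy vyy Jyt πyt : ℝ → ℝ → ℝ),
      (∀ y ∈ Icc (0:ℝ) L, HasDerivWithinAt ρ₀ (ρ₀d y) (Icc 0 L) y) →
      ContinuousOn ρ₀d (Icc 0 L) →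
      (∀ y ∈ Icc (0:ℝ) L, 0 < ρ₀ y ∧ ρ₀ y ≤ ρbar) →
      ClassicalSolution L T μ γ ρ₀ J v π Jt vy vt w πy πt →
      (∀ y ∈ Icc (0:ℝ) L, ∀ t ∈ Icc (0:ℝ) T,
        HasDerivWithinAt (fun x => J x t) (Jy y t) (Icc 0 L) y) →
      (∀ y ∈ Icc (0:ℝ) L, ∀ t ∈ Icc (0:ℝ) T,
        HasDerivWithinAt (fun x => vy x t) (vyy y t) (Icc 0 L) y) →
      (∀ y ∈ Icc (0:ℝ) L, ∀ t ∈ Icc (0:ℝ) T,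
        HasDerivWithinAt (fun x => Jt x t) (Jyt y t) (Icc 0 L) y) →
      (∀ y ∈ Icc (0:ℝ) L, ∀ t ∈ Icc (0:ℝ) T,
        HasDerivWithinAt (fun x => πt x t) (πyt y t) (Icc 0 L) y) →
      ContinuousOn (fun p : ℝ × ℝ => Jy p.1 p.2) (Icc 0 L ×ˢ Icc 0 T) →
      ContinuousOn (fun p : ℝ × ℝ => vyy p.1 p.2) (Icc 0 L ×ˢ Icc 0 T) →
      ContinuousOn (fun p : ℝ × ℝ => Jyt p.1 p.2) (Icc 0 L ×ˢ Icc 0 T) →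
      ContinuousOn (fun p : ℝ × ℝ => πyt p.1 p.2) (Icc 0 L ×ˢ Icc 0 T) →
      (∀ t ∈ Icc (0:ℝ) T, v 0 t = 0 ∧ v L t = 0) →
      (∀ y ∈ Icc (0:ℝ) L, 0 ≤ π y 0) →
      sSup ((fun y => |π y 0|) '' Icc (0:ℝ) L) ≤ P₀ →
      (∀ y ∈ Icc (0:ℝ) L, Jlow ≤ J y 0 ∧ J y 0 ≤ Jbar) →
      (∫ y in (0:ℝ)..L, J y 0) = ℓ₀ →
      (∫ y in (0:ℝ)..L, ρ₀ y) = m₀ →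
      (∫ y in (0:ℝ)..L, (ρ₀ y * (v y 0) ^ 2 / 2 + J y 0 * π y 0 / (γ - 1))) = E₀ →
      Real.sqrt (∫ y in (0:ℝ)..L, (μ * vy y 0 / J y 0 - π y 0) ^ 2) ≤ K₀ →
      Real.sqrt (∫ y in (0:ℝ)..L, (Jy y 0) ^ 2)
          + Real.sqrt (∫ y in (0:ℝ)..L, (πy y 0) ^ 2) ≤ D₀ →
      sSup ((fun t => (∫ y in (0:ℝ)..L, (Jt y t) ^ 2)
              + ∫ y in (0:ℝ)..L, (vy y t) ^ 2) '' Icc (0:ℝ) T)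
        + (∫ t in (0:ℝ)..T,
            ((∫ y in (0:ℝ)..L, ρ₀ y * (vt y t) ^ 2)
              + (∫ y in (0:ℝ)..L, (vyy y t) ^ 2)
              + (∫ y in (0:ℝ)..L, (Jyt y t) ^ 2)
              + (sSup ((fun y => |πt y t|) '' Icc (0:ℝ) L)) ^ 2
              + (∫ y in (0:ℝ)..L, (πyt y t) ^ 2) ^ ((2:ℝ)/3)))
        ≤ C := by
  obtain ⟨C, hC, H⟩ := Sol.ex3 L T γ μ ρbar ℓ₀ Jlow Jbar P₀ E₀ K₀ D₀ hL hT hγ hμ hρbar hℓ₀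
    hJlow hJbar hP₀
  have hC23 : 0 < C ^ ((2:ℝ)/3) := Real.rpow_pos_of_pos hC _
  refine ⟨2 * C + (1 + 2 * C + C ^ 2 + C ^ ((2:ℝ)/3)) * (T + C), by positivity, ?_⟩
  intro ρ₀ ρ₀d J v π Jt vy vt w πy πt Jy vyy Jyt πyt hρd _ hρ cs hJy hvyy hJyt hπyt cJy cvyy _ cπyt
    hv hπ0 hP hJ0 hℓ _ hE hK hD
  have sol := mkSol hL hγ hμ hρbar hℓ₀ hJlow hJbar hP₀ hE₀ hK₀ hT
    (fun y hy => (hρd y hy).continuousWithinAt) hρ cs hJy hvyy hπyt cJy cvyy cπyt hv hπ0 hP hJ0 hℓ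
    hE hK hD
  obtain ⟨hY, H⟩ := H _ _ _ _ _ _ _ _ _ _ _ _ sol
  have cY := sol.cY
  have hY0 := sol.Y0
  obtain ⟨Y, hYd⟩ : ∃ Y : ℝ → ℝ, Y = fun t => ∫ y in (0:ℝ)..L, ρ₀ (cl L y) * (ex L T vt y t) ^ 2 :=
    ⟨_, rfl⟩
  have hYe : ∀ t ∈ Icc (0:ℝ) T, (∫ y in (0:ℝ)..L, ρ₀ y * (vt y t) ^ 2) = Y t := by
    intro t ht
    rw [hYd]
    exact int_congr hL.le fun y hy => by rw [cl_eq hy, ex_eq hy ht]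
  rw [← hYd] at cY
  have hY0' : ∀ t, 0 ≤ Y t := by rw [hYd]; exact hY0
  have hYi : ∫ t in (0:ℝ)..T, Y t ≤ C := by rw [hYd]; exact hY
  have hJtv : ∀ t ∈ Icc (0:ℝ) T, (∫ y in (0:ℝ)..L, (Jt y t) ^ 2) = ∫ y in (0:ℝ)..L, (vy y t) ^ 2 :=
    fun t ht => int_congr hL.le fun y hy => by rw [cs.eq1 y hy t ht]
  have hJyt' : ∀ t ∈ Icc (0:ℝ) T, (∫ y in (0:ℝ)..L, (Jyt y t) ^ 2) = ∫ y in (0:ℝ)..L, (vyy y t) ^ 2 :=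
    fun t ht => int_congr hL.le fun y hy => by
      rw [duniq hL hy (hJyt y hy t ht) ((hvyy y hy t ht).congr_of_mem
        (fun x hx => cs.eq1 x hx t ht) hy)]
  have hvy1 : ∀ t ∈ Icc (0:ℝ) T, ∫ y in (0:ℝ)..L, (vy y t) ^ 2 ≤ C := fun t ht => by
    refine le_trans (le_of_eq ?_) (H t ht).1
    exact int_congr hL.le fun y hy => by rw [ex_eq hy ht]
  have hvyy1 : ∀ t ∈ Icc (0:ℝ) T, ∫ y in (0:ℝ)..L, (vyy y t) ^ 2 ≤ C * (1 + Y t) := fun t ht => by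
    refine le_trans (le_of_eq ?_) ((H t ht).2 (1 + Y t) (by rw [hYd])).1
    exact int_congr hL.le fun y hy => by rw [ex_eq hy ht]
  have hπ1 : ∀ t ∈ Icc (0:ℝ) T, (sSup ((fun y => |πt y t|) '' Icc (0:ℝ) L)) ^ 2 ≤ C ^ 2 * (1 + Y t) := by
    intro t ht
    have hz : 0 ≤ 1 + Y t := by have := hY0' t; linarith
    have h1 : sSup ((fun y => |πt y t|) '' Icc (0:ℝ) L) ≤ C * Real.sqrt (1 + Y t) := by
      apply csSup_le ((nonempty_Icc.2 hL.le).image _)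
      rintro _ ⟨y, hy, rfl⟩
      have := ((H t ht).2 (1 + Y t) (by rw [hYd])).2.1 y hy
      rwa [ex_eq hy ht] at this
    have h0 : 0 ≤ sSup ((fun y => |πt y t|) '' Icc (0:ℝ) L) := by
      apply Real.sSup_nonneg
      rintro _ ⟨y, hy, rfl⟩
      exact abs_nonneg _
    calc _ ≤ (C * Real.sqrt (1 + Y t)) ^ 2 := by gcongr
      _ = _ := by rw [mul_pow, Real.sq_sqrt hz]
  have hπyt1 : ∀ t ∈ Icc (0:ℝ) T, (∫ y in (0:ℝ)..L, (πyt y t) ^ 2) ^ ((2:ℝ)/3) ≤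
      C ^ ((2:ℝ)/3) * (1 + Y t) := by
    intro t ht
    have hz : 0 ≤ 1 + Y t := by have := hY0' t; linarith
    have h1 : (∫ y in (0:ℝ)..L, (πyt y t) ^ 2) ≤ C * (Real.sqrt (1 + Y t) * (1 + Y t)) := by
      refine le_trans (le_of_eq ?_) ((H t ht).2 (1 + Y t) (by rw [hYd])).2.2
      exact int_congr hL.le fun y hy => by rw [ex_eq hy ht]
    have h0 : 0 ≤ ∫ y in (0:ℝ)..L, (πyt y t) ^ 2 := int_nonneg hL.le fun y _ => sq_nonneg _
    refine (Real.rpow_le_rpow h0 h1 (by norm_num)).trans (le_of_eq ?_)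
    rw [Real.mul_rpow hC.le (by positivity)]
    congr 1
    have hs := Real.sqrt_nonneg (1 + Y t)
    have e1 : Real.sqrt (1 + Y t) * (1 + Y t) = Real.sqrt (1 + Y t) ^ (3:ℝ) := by
      have := Real.mul_self_sqrt hz
      rw [show (3:ℝ) = ((3:ℕ):ℝ) by norm_num, Real.rpow_natCast]
      nth_rewrite 2 [← this]
      ring
    rw [e1, ← Real.rpow_mul hs]
    norm_num
    exact Real.sq_sqrt hz
  apply add_le_add
  · apply csSup_le ((nonempty_Icc.2 hT.le).image _)
    rintro _ ⟨t, ht, rfl⟩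
    have := hvy1 t ht
    simp only [hJtv t ht]
    linarith
  · have hB : ∫ t in (0:ℝ)..T, (1 + 2 * C + C ^ 2 + C ^ ((2:ℝ)/3)) * (1 + Y t) ≤
        (1 + 2 * C + C ^ 2 + C ^ ((2:ℝ)/3)) * (T + C) := by
      rw [int_cmul, int_add (by fun_prop) cY]
      simp only [intervalIntegral.integral_const, sub_zero, smul_eq_mul, mul_one]
      gcongr
    by_cases hI : IntervalIntegrable (fun t => ((∫ y in (0:ℝ)..L, ρ₀ y * (vt y t) ^ 2)
              + (∫ y in (0:ℝ)..L, (vyy y t) ^ 2)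
              + (∫ y in (0:ℝ)..L, (Jyt y t) ^ 2)
              + (sSup ((fun y => |πt y t|) '' Icc (0:ℝ) L)) ^ 2
              + (∫ y in (0:ℝ)..L, (πyt y t) ^ 2) ^ ((2:ℝ)/3))) volume 0 T
    · refine le_trans (intervalIntegral.integral_mono_on hT.le hI
        ((by fun_prop : Continuous fun t => (1 + 2 * C + C ^ 2 + C ^ ((2:ℝ)/3)) *
          (1 + Y t)).intervalIntegrable _ _) fun t ht => ?_) hB
      have h1 := hvyy1 t ht
      have h2 := hπ1 t ht
      have h3 := hπyt1 t ht
      rw [hJyt' t ht, hYe t ht]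
      linarith
    · rw [intervalIntegral.integral_undef hI]
      positivity
end

section
/- For all constants L > 0, γ > 1, μ > 0, ρ̄ > 0, ℓ₀ > 0, J̲ > 0, J̄ > 0, m₀ ≥ 0, P₀ ≥ 0, E₀ ≥ 0, K₀ ≥ 0, D₀ ≥ 0, T > 0 there exists a constant C > 0 with the following property. Let ρ₀ ∈ C¹([0,L]) with 0 < ρ₀ ≤ ρ̄, and let (J, v, π) be a sufficiently smooth classical solution of (E1)–(E3) on [0,L]×[0,T] with boundary condition v(0,t) = v(L,t) = 0, such that π₀ ≥ 0, ‖π₀‖_∞ ≤ P₀, J̲ ≤ J₀ ≤ J̄, ∫₀ᴸ J₀ dy = ℓ₀, ∫₀ᴸ ρ₀ dy = m₀, ∫₀ᴸ ( ρ₀ v₀²/2 + J₀ π₀/(γ−1) ) dy = E₀, ‖G₀‖₂ ≤ K₀ where G₀ := μ(∂_y v₀)/J₀ − π₀, and ‖∂_y J₀‖₂ + ‖∂_y π₀‖₂ ≤ D₀. Then the time-weighted estimate ∫₀ᵀ t ‖∂_y ∂_t v(·,t)‖₂² dt ≤ C holds. -/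
open Set MeasureTheory

namespace TW

theorem seg {f f' : ℝ → ℝ} (cf' : Continuous f') {a b t t' : ℝ}
    (hd : ∀ s ∈ Ioo a b, HasDerivAt f (f' s) s) (ht : t ∈ Ioo a b) (ht' : t' ∈ Ioo a b) :
    f t' - f t = (t' - t) * ∫ θ in (0:ℝ)..1, f' (t + (t' - t) * θ) := by
  have h1 : ∀ θ ∈ uIcc (0:ℝ) 1, HasDerivAt (fun θ => f (t + (t' - t) * θ))
      (f' (t + (t' - t) * θ) * (t' - t)) θ := by
    intro θ hθ
    rw [uIcc_of_le zero_le_one] at hθ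
    have hm : t + (t' - t) * θ ∈ Ioo a b := by
      obtain ⟨h0, h1⟩ := hθ
      obtain ⟨h2, h3⟩ := ht
      obtain ⟨h4, h5⟩ := ht'
      constructor
      · rcases le_total t t' with h | h <;> nlinarith
      · rcases le_total t t' with h | h <;> nlinarith
    have h2 : HasDerivAt (fun θ : ℝ => t + (t' - t) * θ) (t' - t) θ := by
      simpa using ((hasDerivAt_id θ).const_mul (t' - t)).const_add t
    exact (hd _ hm).comp θ h2
  have h2 := intervalIntegral.integral_eq_sub_of_hasDerivAt h1
    ((by fun_prop : Continuous fun θ => f' (t + (t' - t) * θ) * (t' - t)).intervalIntegrable _ _)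
  rw [intervalIntegral.integral_mul_const] at h2
  simp only [mul_one, mul_zero, add_zero] at h2
  rw [show t + (t' - t) = t' by ring] at h2
  linarith

theorem factor {F K : ℝ → ℝ} {t a b : ℝ} (ht : t ∈ Ioo a b)
    (h : ∀ t' ∈ Ioo a b, F t' - F t = (t' - t) * K t') (hK : Continuous K) :
    HasDerivAt F (K t) t := by
  rw [hasDerivAt_iff_tendsto_slope]
  have h1 : Filter.Tendsto K (nhdsWithin t {t}ᶜ) (nhds (K t)) :=
    (hK.tendsto t).mono_left nhdsWithin_le_nhds
  refine h1.congr' ?_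
  have h2 : ∀ᶠ x in nhdsWithin t {t}ᶜ, x ∈ Ioo a b :=
    nhdsWithin_le_nhds (Ioo_mem_nhds ht.1 ht.2)
  filter_upwards [h2, self_mem_nhdsWithin] with x hx hne
  have : x - t ≠ 0 := sub_ne_zero.mpr hne
  rw [slope_def_field, h x hx]
  field_simp

theorem cint {X : Type*} [TopologicalSpace X] {f : X → ℝ → ℝ}
    (hf : Continuous (fun z : X × ℝ => f z.1 z.2)) (a b : ℝ) :
    Continuous fun x => ∫ y in a..b, f x y :=
  intervalIntegral.continuous_parametric_intervalIntegral_of_continuous' hf a b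

theorem leib {f f' : ℝ → ℝ → ℝ} {L a b t : ℝ} (hL : 0 ≤ L)
    (cf : Continuous (fun z : ℝ × ℝ => f z.1 z.2))
    (cf' : Continuous (fun z : ℝ × ℝ => f' z.1 z.2))
    (hd : ∀ y ∈ Ioo 0 L, ∀ s ∈ Ioo a b, HasDerivAt (fun s => f y s) (f' y s) s)
    (ht : t ∈ Ioo a b) :
    HasDerivAt (fun s => ∫ y in (0:ℝ)..L, f y s) (∫ y in (0:ℝ)..L, f' y t) t := by
  have cf'' : Continuous (Function.uncurry f') := cf'
  have cf0 : Continuous (Function.uncurry f) := cf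
  have cK : Continuous (fun t' => ∫ y in (0:ℝ)..L, ∫ θ in (0:ℝ)..1, f' y (t + (t' - t) * θ)) := by
    apply cint
    apply cint
    fun_prop
  have := factor (F := fun s => ∫ y in (0:ℝ)..L, f y s) ht ?_ cK
  · simpa using this
  · intro t' ht'
    rw [← intervalIntegral.integral_sub, ← intervalIntegral.integral_const_mul]
    · apply intervalIntegral.integral_congr_Ioo_of_le hL
      intro y hy
      exact seg (f := fun s => f y s) (f' := fun s => f' y s) (by fun_prop) (hd y hy) ht ht'
    · exact (by fun_prop : Continuous fun y => f y t').intervalIntegrable _ _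
    · exact (by fun_prop : Continuous fun y => f y t).intervalIntegrable _ _

/-- integrated differential inequality -/
theorem growth {F F' N : ℝ → ℝ} {T : ℝ} (cF : Continuous F) (cN : Continuous N)
    (hd : ∀ t ∈ Ioo 0 T, HasDerivAt F (F' t) t) (hle : ∀ t ∈ Ioo 0 T, F' t ≤ N t)
    {t : ℝ} (ht : t ∈ Icc 0 T) : F t ≤ F 0 + ∫ s in (0:ℝ)..t, N s := by
  have hN : ∀ t, HasDerivAt (fun u => ∫ s in (0:ℝ)..u, N s) (N t) t := fun t =>
    intervalIntegral.integral_hasDerivAt_right (cN.intervalIntegrable _ _)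
      (cN.stronglyMeasurableAtFilter _ _) cN.continuousAt
  have hd' : ∀ t ∈ Ioo 0 T, HasDerivAt (fun u => F u - ∫ s in (0:ℝ)..u, N s) (F' t - N t) t :=
    fun t ht => (hd t ht).sub (hN t)
  have cI : Continuous (fun u => ∫ s in (0:ℝ)..u, N s) :=
    continuous_iff_continuousAt.mpr fun t => (hN t).continuousAt
  have := antitoneOn_of_deriv_nonpos (convex_Icc 0 T) (f := fun u => F u - ∫ s in (0:ℝ)..u, N s)
    (cF.sub cI).continuousOn
    (by
      rw [interior_Icc]
      exact fun t ht => (hd' t ht).differentiableAt.differentiableWithinAt)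
    (by
      rw [interior_Icc]
      intro t ht
      rw [(hd' t ht).deriv]
      linarith [hle t ht])
  have h := this (left_mem_Icc.mpr (ht.1.trans ht.2)) ht ht.1
  simp only [intervalIntegral.integral_same] at h
  linarith

theorem ftc {f f' : ℝ → ℝ} {L : ℝ} (_hL : 0 ≤ L) (cf : Continuous f) (cf' : Continuous f')
    (hd : ∀ y ∈ Ioo 0 L, HasDerivAt f (f' y) y) {y z : ℝ} (hz : 0 ≤ z) (hzy : z ≤ y) (hy : y ≤ L) :
    ∫ x in z..y, f' x = f y - f z :=
  intervalIntegral.integral_eq_sub_of_hasDerivAt_of_le hzy cf.continuousOn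
    (fun x hx => hd x ⟨lt_of_le_of_lt hz hx.1, lt_of_lt_of_le hx.2 hy⟩) (cf'.intervalIntegrable _ _)

theorem ile {f g : ℝ → ℝ} {a b : ℝ} (hab : a ≤ b) (cf : Continuous f) (cg : Continuous g)
    (h : ∀ x ∈ Icc a b, f x ≤ g x) : ∫ x in a..b, f x ≤ ∫ x in a..b, g x :=
  intervalIntegral.integral_mono_on hab (cf.intervalIntegrable _ _) (cg.intervalIntegrable _ _) h

structure Par where
  (L γ μ ρb ℓ Jl Jb m P E K T : ℝ)
  hL : 0 < L
  hγ : 1 < γ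
  hμ : 0 < μ
  hρb : 0 < ρb
  hℓ : 0 < ℓ
  hJl : 0 < Jl
  hJb : 0 < Jb
  hm : 0 ≤ m
  hP : 0 ≤ P
  hE : 0 ≤ E
  hK : 0 ≤ K
  hT : 0 < T

structure Sol (p : Par) where
  ρ : ℝ → ℝ
  (J v π vy vt vty G : ℝ → ℝ → ℝ)
  cρ0 : Continuous ρ
  cJ0 : Continuous (fun z : ℝ × ℝ => J z.1 z.2)
  cv0 : Continuous (fun z : ℝ × ℝ => v z.1 z.2)
  cπ0 : Continuous (fun z : ℝ × ℝ => π z.1 z.2)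
  cvy0 : Continuous (fun z : ℝ × ℝ => vy z.1 z.2)
  cvt0 : Continuous (fun z : ℝ × ℝ => vt z.1 z.2)
  cvty0 : Continuous (fun z : ℝ × ℝ => vty z.1 z.2)
  cG0 : Continuous (fun z : ℝ × ℝ => G z.1 z.2)
  Jpos : ∀ y t, 0 < J y t
  ρpos : ∀ y, 0 < ρ y
  ρle : ∀ y, ρ y ≤ p.ρb
  eqG : ∀ y t, p.μ * vy y t = J y t * (G y t + π y t)
  dJ : ∀ y, ∀ t ∈ Ioo 0 p.T, HasDerivAt (fun s => J y s) (vy y t) t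
  dv : ∀ y, ∀ t ∈ Ioo 0 p.T, HasDerivAt (fun s => v y s) (vt y t) t
  dπ : ∀ y, ∀ t ∈ Ioo 0 p.T, HasDerivAt (fun s => π y s)
    (((p.γ - 1) * G y t ^ 2 + (p.γ - 2) * G y t * π y t - π y t ^ 2) / p.μ) t
  yv : ∀ t, ∀ y ∈ Ioo 0 p.L, HasDerivAt (fun x => v x t) (vy y t) y
  yvt : ∀ t, ∀ y ∈ Ioo 0 p.L, HasDerivAt (fun x => vt x t) (vty y t) y
  yG : ∀ t, ∀ y ∈ Ioo 0 p.L, HasDerivAt (fun x => G x t) (ρ y * vt y t) y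
  v_0 : ∀ t, v 0 t = 0
  v_L : ∀ t, v p.L t = 0
  vt_0 : ∀ t, vt 0 t = 0
  vt_L : ∀ t, vt p.L t = 0
  π0n : ∀ y, 0 ≤ π y 0
  π0P : ∀ y, π y 0 ≤ p.P
  J0l : ∀ y, p.Jl ≤ J y 0
  J0b : ∀ y, J y 0 ≤ p.Jb
  iJ : (∫ y in (0:ℝ)..p.L, J y 0) = p.ℓ
  iρ : (∫ y in (0:ℝ)..p.L, ρ y) = p.m
  iE : (∫ y in (0:ℝ)..p.L, (ρ y * (v y 0) ^ 2 / 2 + J y 0 * π y 0 / (p.γ - 1))) = p.E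
  iG : (∫ y in (0:ℝ)..p.L, G y 0 ^ 2) ≤ p.K ^ 2

namespace Sol
variable {p : Par} (S : Sol p)

section
variable {α : Type*} [TopologicalSpace α] {f g : α → ℝ}
@[fun_prop] theorem cρ (hf : Continuous f) : Continuous (fun x => S.ρ (f x)) := S.cρ0.comp hf
@[fun_prop] theorem cJ (hf : Continuous f) (hg : Continuous g) :
    Continuous (fun x => S.J (f x) (g x)) := S.cJ0.comp (hf.prodMk hg)
@[fun_prop] theorem cv (hf : Continuous f) (hg : Continuous g) :
    Continuous (fun x => S.v (f x) (g x)) := S.cv0.comp (hf.prodMk hg)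
@[fun_prop] theorem cπ (hf : Continuous f) (hg : Continuous g) :
    Continuous (fun x => S.π (f x) (g x)) := S.cπ0.comp (hf.prodMk hg)
@[fun_prop] theorem cvy (hf : Continuous f) (hg : Continuous g) :
    Continuous (fun x => S.vy (f x) (g x)) := S.cvy0.comp (hf.prodMk hg)
@[fun_prop] theorem cvt (hf : Continuous f) (hg : Continuous g) :
    Continuous (fun x => S.vt (f x) (g x)) := S.cvt0.comp (hf.prodMk hg)
@[fun_prop] theorem cvty (hf : Continuous f) (hg : Continuous g) :
    Continuous (fun x => S.vty (f x) (g x)) := S.cvty0.comp (hf.prodMk hg)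
@[fun_prop] theorem cG (hf : Continuous f) (hg : Continuous g) :
    Continuous (fun x => S.G (f x) (g x)) := S.cG0.comp (hf.prodMk hg)
end

theorem Jne (y t : ℝ) : S.J y t ≠ 0 := (S.Jpos y t).ne'

/-- the time derivative of `G` -/
noncomputable def Gt (y t : ℝ) : ℝ := (p.μ * S.vty y t - p.γ * S.vy y t * S.G y t) / S.J y t

@[fun_prop] theorem cGt {α : Type*} [TopologicalSpace α] {f g : α → ℝ}
    (hf : Continuous f) (hg : Continuous g) :
    Continuous (fun x => S.Gt (f x) (g x)) := by
  unfold Gt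
  apply Continuous.div
  · fun_prop
  · fun_prop
  · intro x; exact S.Jne _ _

theorem vy_diff {y t : ℝ} (hy : y ∈ Ioo 0 p.L) (ht : t ∈ Icc 0 p.T) :
    S.vy y t - S.vy y 0 = ∫ s in (0:ℝ)..t, S.vty y s := by
  have h1 : HasDerivAt (fun x => ∫ s in (0:ℝ)..t, S.vt x s) (∫ s in (0:ℝ)..t, S.vty y s) y :=
    leib (f := fun s x => S.vt x s) (f' := fun s x => S.vty x s) (a := 0) (b := p.L) ht.1
      (by fun_prop) (by fun_prop) (fun s _ x hx => S.yvt s x hx) hy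
  have h2 : (fun x => ∫ s in (0:ℝ)..t, S.vt x s) = fun x => S.v x t - S.v x 0 := by
    funext x
    exact ftc (f := fun s => S.v x s) p.hT.le (by fun_prop) (by fun_prop) (S.dv x) le_rfl ht.1 ht.2
  rw [h2] at h1
  exact ((S.yv t y hy).sub (S.yv 0 y hy)).unique h1

theorem dvy {y t : ℝ} (hy : y ∈ Ioo 0 p.L) (ht : t ∈ Ioo 0 p.T) :
    HasDerivAt (fun s => S.vy y s) (S.vty y t) t := by
  have c : Continuous (fun s => S.vty y s) := by fun_prop
  have h1 : HasDerivAt (fun u => S.vy y 0 + ∫ s in (0:ℝ)..u, S.vty y s) (S.vty y t) t :=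
    (intervalIntegral.integral_hasDerivAt_right (c.intervalIntegrable _ _)
      (c.stronglyMeasurableAtFilter _ _) c.continuousAt).const_add _
  refine h1.congr_of_eventuallyEq ?_
  filter_upwards [Ioo_mem_nhds ht.1 ht.2] with u hu
  rw [← S.vy_diff hy ⟨hu.1.le, hu.2.le⟩]
  ring

theorem dG {y t : ℝ} (hy : y ∈ Ioo 0 p.L) (ht : t ∈ Ioo 0 p.T) :
    HasDerivAt (fun s => S.G y s) (S.Gt y t) t := by
  have h0 : (fun s => S.G y s) = fun s => p.μ * S.vy y s / S.J y s - S.π y s := by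
    funext s
    rw [S.eqG, mul_div_cancel_left₀ _ (S.Jne y s)]
    ring
  rw [h0]
  have h1 := ((((S.dvy hy ht).const_mul p.μ).div (S.dJ y t ht) (S.Jne y t)).sub (S.dπ y t ht))
  refine h1.congr_deriv ?_
  have hμ := p.hμ.ne'
  have hJ := S.Jne y t
  have hv : S.vy y t = S.J y t * (S.G y t + S.π y t) / p.μ := by
    rw [← S.eqG]; field_simp
  unfold Gt
  rw [hv]
  field_simp
  ring

end Sol

namespace Sol
variable {p : Par} (S : Sol p)

theorem vy_eq (y t : ℝ) : S.vy y t = S.J y t * (S.G y t + S.π y t) / p.μ := by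
  have hμ := p.hμ.ne'
  rw [← S.eqG]; field_simp

theorem π_nonneg (y : ℝ) {t : ℝ} (ht : t ∈ Icc 0 p.T) : 0 ≤ S.π y t := by
  have hμ := p.hμ
  have hγ := p.hγ
  have h := growth (F := fun s => - (S.J y s ^ p.γ * S.π y s)) (N := fun _ => 0) (T := p.T)
    (F' := fun t => - (S.J y t ^ p.γ * ((p.γ - 1) / p.μ * (S.G y t + S.π y t) ^ 2)))
    (by
      have : Continuous (fun s => S.J y s ^ p.γ) :=
        (by fun_prop : Continuous fun s => S.J y s).rpow_const (fun s => Or.inl (S.Jne y s))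
      fun_prop) continuous_const
    (fun t ht => by
      have h1 := (((S.dJ y t ht).rpow_const (p := p.γ) (Or.inl (S.Jne y t))).mul (S.dπ y t ht)).neg
      refine h1.congr_deriv ?_
      rw [Real.rpow_sub_one (S.Jne y t), S.vy_eq]
      have hJ := S.Jne y t
      field_simp
      ring)
    (fun t _ => by
      have h1 : 0 ≤ S.J y t ^ p.γ := Real.rpow_nonneg (S.Jpos y t).le _
      have h2 : 0 ≤ (p.γ - 1) / p.μ := div_nonneg (by linarith) hμ.le
      have : 0 ≤ S.J y t ^ p.γ * ((p.γ - 1) / p.μ * (S.G y t + S.π y t) ^ 2) := by positivity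
      linarith) ht
  simp only [intervalIntegral.integral_zero, add_zero] at h
  have h1 : 0 < S.J y t ^ p.γ := Real.rpow_pos_of_pos (S.Jpos y t) _
  have h2 : 0 ≤ S.J y 0 ^ p.γ * S.π y 0 :=
    mul_nonneg (Real.rpow_nonneg (S.Jpos y 0).le _) (S.π0n y)
  have h3 : 0 ≤ S.J y t ^ p.γ * S.π y t := by linarith
  exact nonneg_of_mul_nonneg_right h3 h1

/-- integration by parts in space with vanishing boundary -/
theorem iby {f f' : ℝ → ℝ} {L : ℝ} (hL : 0 ≤ L) (cf : Continuous f) (cf' : Continuous f')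
    (hd : ∀ y ∈ Ioo 0 L, HasDerivAt f (f' y) y) (h0 : f 0 = 0) (h1 : f L = 0) :
    ∫ x in (0:ℝ)..L, f' x = 0 := by
  rw [ftc hL cf cf' hd le_rfl hL le_rfl, h0, h1, sub_zero]

/-- constancy in time -/
theorem const_time {F : ℝ → ℝ} {T : ℝ} (cF : Continuous F)
    (hd : ∀ t ∈ Ioo 0 T, HasDerivAt F 0 t) {t : ℝ} (ht : t ∈ Icc 0 T) : F t = F 0 := by
  have h1 := growth cF (continuous_const (y := (0:ℝ))) hd (fun _ _ => le_rfl) ht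
  have h2 := growth (F := fun s => - F s) cF.neg (continuous_const (y := (0:ℝ)))
    (fun t ht => (hd t ht).neg) (fun _ _ => by simp) ht
  simp at h1 h2
  linarith

theorem mass {t : ℝ} (ht : t ∈ Icc 0 p.T) : ∫ y in (0:ℝ)..p.L, S.J y t = p.ℓ := by
  rw [← S.iJ]
  refine const_time (F := fun t => ∫ y in (0:ℝ)..p.L, S.J y t) (cint (by fun_prop) _ _) ?_ ht
  intro t ht
  have h := leib (f := S.J) (f' := S.vy) p.hL.le (by fun_prop) (by fun_prop)
    (fun y _ s hs => S.dJ y s hs) ht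
  rwa [iby (f := fun y => S.v y t) p.hL.le (by fun_prop) (by fun_prop) (S.yv t) (S.v_0 t) (S.v_L t)]
    at h

theorem energy {t : ℝ} (ht : t ∈ Icc 0 p.T) :
    ∫ y in (0:ℝ)..p.L, (S.ρ y * (S.v y t) ^ 2 / 2 + S.J y t * S.π y t / (p.γ - 1)) = p.E := by
  rw [← S.iE]
  refine const_time (F := fun t => ∫ y in (0:ℝ)..p.L,
    (S.ρ y * (S.v y t) ^ 2 / 2 + S.J y t * S.π y t / (p.γ - 1))) (cint (by fun_prop) _ _) ?_ ht
  intro t ht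
  have h := leib (f := fun y t => S.ρ y * (S.v y t) ^ 2 / 2 + S.J y t * S.π y t / (p.γ - 1))
    (f' := fun y t => S.vy y t * S.G y t + S.v y t * (S.ρ y * S.vt y t))
    p.hL.le (by fun_prop) (by fun_prop)
    (fun y _ s hs => by
      have h1 := ((((S.dv y s hs).pow 2).const_mul (S.ρ y)).div_const 2).add
        (((S.dJ y s hs).mul (S.dπ y s hs)).div_const (p.γ - 1))
      refine h1.congr_deriv ?_
      have := p.hμ.ne'
      have : p.γ - 1 ≠ 0 := by linarith [p.hγ]
      rw [S.vy_eq]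
      field_simp
      ring) ht
  rwa [iby (f := fun y => S.v y t * S.G y t) p.hL.le (by fun_prop) (by fun_prop)
    (fun y hy => (S.yv t y hy).mul (S.yG t y hy)) (by simp [S.v_0 t]) (by simp [S.v_L t])] at h

theorem energy_kin {t : ℝ} (ht : t ∈ Icc 0 p.T) :
    ∫ y in (0:ℝ)..p.L, S.ρ y * (S.v y t) ^ 2 ≤ 2 * p.E := by
  have h : ∫ y in (0:ℝ)..p.L, S.ρ y * (S.v y t) ^ 2 ≤ ∫ y in (0:ℝ)..p.L,
      2 * (S.ρ y * (S.v y t) ^ 2 / 2 + S.J y t * S.π y t / (p.γ - 1)) := by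
    apply ile p.hL.le (by fun_prop) (by fun_prop)
    intro y _
    have : 0 ≤ S.J y t * S.π y t / (p.γ - 1) :=
      div_nonneg (mul_nonneg (S.Jpos y t).le (S.π_nonneg y ht)) (by linarith [p.hγ])
    linarith
  rwa [intervalIntegral.integral_const_mul, S.energy ht] at h

theorem energy_int {t : ℝ} (ht : t ∈ Icc 0 p.T) :
    ∫ y in (0:ℝ)..p.L, S.J y t * S.π y t ≤ (p.γ - 1) * p.E := by
  have h : ∫ y in (0:ℝ)..p.L, S.J y t * S.π y t ≤ ∫ y in (0:ℝ)..p.L,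
      (p.γ - 1) * (S.ρ y * (S.v y t) ^ 2 / 2 + S.J y t * S.π y t / (p.γ - 1)) := by
    apply ile p.hL.le (by fun_prop) (by fun_prop)
    intro y _
    have hg : 0 < p.γ - 1 := by linarith [p.hγ]
    have : 0 ≤ (p.γ - 1) * (S.ρ y * (S.v y t) ^ 2 / 2) := by
      have := (S.ρpos y).le
      positivity
    rw [mul_add, mul_div_cancel₀ _ hg.ne']
    linarith
  rwa [intervalIntegral.integral_const_mul, S.energy ht] at h

/-- the momentum primitive -/
noncomputable def φ (y t : ℝ) : ℝ := ∫ x in (0:ℝ)..y, S.ρ x * S.v x t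

@[fun_prop] theorem cφ {α : Type*} [TopologicalSpace α] {f g : α → ℝ}
    (hf : Continuous f) (hg : Continuous g) :
    Continuous (fun x => S.φ (f x) (g x)) := by
  unfold φ
  refine intervalIntegral.continuous_parametric_intervalIntegral_of_continuous
    (f := fun a x => S.ρ x * S.v x (g a)) ?_ hf
  simp only [Function.uncurry_def]
  fun_prop

theorem φ_abs {y t : ℝ} (hy : y ∈ Icc 0 p.L) (ht : t ∈ Icc 0 p.T) :
    |S.φ y t| ≤ (p.m + 2 * p.E) / 2 := by
  have h1 : |S.φ y t| ≤ ∫ x in (0:ℝ)..y, |S.ρ x * S.v x t| :=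
    intervalIntegral.abs_integral_le_integral_abs hy.1
  have h2 : ∫ x in (0:ℝ)..y, |S.ρ x * S.v x t| ≤ ∫ x in (0:ℝ)..p.L, |S.ρ x * S.v x t| :=
    intervalIntegral.integral_mono_interval le_rfl hy.1 hy.2
      (Filter.Eventually.of_forall fun x => abs_nonneg _)
      ((by fun_prop : Continuous fun x => |S.ρ x * S.v x t|).intervalIntegrable _ _)
  have h3 : ∫ x in (0:ℝ)..p.L, |S.ρ x * S.v x t| ≤
      ∫ x in (0:ℝ)..p.L, (S.ρ x + S.ρ x * S.v x t ^ 2) / 2 := by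
    apply ile p.hL.le (by fun_prop) (by fun_prop)
    intro x _
    have hρ := S.ρpos x
    rw [abs_mul, abs_of_pos hρ]
    nlinarith [sq_nonneg (|S.v x t| - 1), sq_abs (S.v x t)]
  rw [intervalIntegral.integral_div, intervalIntegral.integral_add
    ((by fun_prop : Continuous fun x => S.ρ x).intervalIntegrable _ _)
    ((by fun_prop : Continuous fun x => S.ρ x * S.v x t ^ 2).intervalIntegrable _ _), S.iρ] at h3
  linarith [S.energy_kin ht]

theorem φ_t {y t : ℝ} (hy : y ∈ Icc 0 p.L) (ht : t ∈ Ioo 0 p.T) :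
    HasDerivAt (fun s => S.φ y s) (S.G y t - S.G 0 t) t := by
  rw [← ftc (f := fun y => S.G y t) p.hL.le (by fun_prop) (by fun_prop) (S.yG t) le_rfl hy.1 hy.2]
  exact leib (f := fun x t => S.ρ x * S.v x t) (f' := fun x t => S.ρ x * S.vt x t) hy.1
    (by fun_prop) (by fun_prop) (fun x _ s hs => (S.dv x s hs).const_mul (S.ρ x)) ht

theorem φ_y (y t : ℝ) : HasDerivAt (fun x => S.φ x t) (S.ρ y * S.v y t) y := by
  have c : Continuous (fun y => S.ρ y * S.v y t) := by fun_prop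
  exact intervalIntegral.integral_hasDerivAt_right (c.intervalIntegrable _ _)
      (c.stronglyMeasurableAtFilter _ _) c.continuousAt

noncomputable def g (t : ℝ) : ℝ := ∫ s in (0:ℝ)..t, S.G 0 s

theorem dg (t : ℝ) : HasDerivAt S.g (S.G 0 t) t := by
  have c : Continuous (fun t => S.G 0 t) := by fun_prop
  exact intervalIntegral.integral_hasDerivAt_right (c.intervalIntegrable _ _)
      (c.stronglyMeasurableAtFilter _ _) c.continuousAt

theorem cg : Continuous S.g := continuous_iff_continuousAt.mpr fun t => (S.dg t).continuousAt

theorem Jφ_abs {t : ℝ} (ht : t ∈ Icc 0 p.T) :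
    |∫ y in (0:ℝ)..p.L, S.J y t * S.φ y t| ≤ p.ℓ * ((p.m + 2 * p.E) / 2) := by
  calc _ ≤ ∫ y in (0:ℝ)..p.L, |S.J y t * S.φ y t| :=
        intervalIntegral.abs_integral_le_integral_abs p.hL.le
    _ ≤ ∫ y in (0:ℝ)..p.L, S.J y t * ((p.m + 2 * p.E) / 2) := by
        apply ile p.hL.le (by fun_prop) (by fun_prop)
        intro y hy
        rw [abs_mul, abs_of_pos (S.Jpos y t)]
        exact mul_le_mul_of_nonneg_left (S.φ_abs hy ht) (S.Jpos y t).le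
    _ = _ := by rw [intervalIntegral.integral_mul_const, S.mass ht]

theorem g_lower {t : ℝ} (ht : t ∈ Icc 0 p.T) :
    - (p.ℓ * (p.m + 2 * p.E) + p.T * ((p.γ + 1) * p.E)) ≤ p.ℓ * S.g t := by
  have h := growth (T := p.T)
    (F := fun t => - ((∫ y in (0:ℝ)..p.L, S.J y t * S.φ y t) + p.ℓ * S.g t))
    (N := fun _ => (p.γ + 1) * p.E)
    (F' := fun t => (∫ y in (0:ℝ)..p.L, S.ρ y * S.v y t ^ 2) + ∫ y in (0:ℝ)..p.L, S.J y t * S.π y t)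
    (by
      have h1 : Continuous (fun t => ∫ y in (0:ℝ)..p.L, S.J y t * S.φ y t) :=
        cint (by fun_prop) _ _
      have h2 := S.cg
      fun_prop) continuous_const
    (fun t ht => by
      have h1 := leib (f := fun y t => S.J y t * S.φ y t)
        (f' := fun y t => S.vy y t * S.φ y t + S.J y t * (S.G y t - S.G 0 t))
        p.hL.le (by fun_prop) (by fun_prop)
        (fun y hy s hs => (S.dJ y s hs).mul (S.φ_t ⟨hy.1.le, hy.2.le⟩ hs)) ht
      have h2 := (h1.add ((S.dg t).const_mul p.ℓ)).neg
      refine h2.congr_deriv ?_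
      have e0 := iby (f := fun y => S.v y t) p.hL.le (by fun_prop) (by fun_prop) (S.yv t)
        (S.v_0 t) (S.v_L t)
      have e1 := iby (f := fun y => S.v y t * S.φ y t) p.hL.le (by fun_prop)
        (f' := fun y => S.vy y t * S.φ y t + S.v y t * (S.ρ y * S.v y t)) (by fun_prop)
        (fun y hy => (S.yv t y hy).mul (S.φ_y y t)) (by simp [S.v_0 t]) (by simp [S.v_L t])
      have e2 : (fun y => S.vy y t * S.φ y t + S.J y t * (S.G y t - S.G 0 t)) = fun y =>
          (S.vy y t * S.φ y t + S.v y t * (S.ρ y * S.v y t)) + p.μ * S.vy y t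
            - S.ρ y * S.v y t ^ 2 - S.J y t * S.π y t - S.J y t * S.G 0 t := by
        funext y
        rw [S.eqG]
        ring
      rw [e2, intervalIntegral.integral_sub, intervalIntegral.integral_sub,
        intervalIntegral.integral_sub, intervalIntegral.integral_add, e1,
        intervalIntegral.integral_const_mul, e0, intervalIntegral.integral_mul_const,
        S.mass ⟨ht.1.le, ht.2.le⟩]
      · ring
      all_goals (apply Continuous.intervalIntegrable; fun_prop))
    (fun t ht => by
      have h1 := S.energy_kin ⟨ht.1.le, ht.2.le⟩
      have h2 := S.energy_int ⟨ht.1.le, ht.2.le⟩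
      linarith) ht
  have hg0 : S.g 0 = 0 := by simp [g]
  simp only [hg0, mul_zero, add_zero, intervalIntegral.integral_const, sub_zero, smul_eq_mul] at h
  have a1 := abs_le.mp (S.Jφ_abs ht)
  have a2 := abs_le.mp (S.Jφ_abs (t := 0) ⟨le_rfl, p.hT.le⟩)
  have a3 : t * ((p.γ + 1) * p.E) ≤ p.T * ((p.γ + 1) * p.E) :=
    mul_le_mul_of_nonneg_right ht.2 (mul_nonneg (by linarith [p.hγ]) p.hE)
  linarith

theorem J_lower (p : Par) : ∃ c > 0, ∀ (S : Sol p), ∀ y ∈ Icc 0 p.L, ∀ t ∈ Icc 0 p.T,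
    c ≤ S.J y t := by
  refine ⟨Real.exp ((p.μ * Real.log p.Jl - (p.m + 2 * p.E)
    - (p.ℓ * (p.m + 2 * p.E) + p.T * ((p.γ + 1) * p.E)) / p.ℓ) / p.μ), Real.exp_pos _, ?_⟩
  intro S y hy t ht
  rw [← Real.le_log_iff_exp_le (S.Jpos y t), div_le_iff₀ p.hμ]
  have h := growth (T := p.T) (F := fun t => - (p.μ * Real.log (S.J y t) - S.φ y t - S.g t))
    (F' := fun t => - S.π y t) (N := fun _ => 0)
    (by
      have h1 : Continuous fun t => Real.log (S.J y t) :=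
        (by fun_prop : Continuous fun t => S.J y t).log (fun t => S.Jne y t)
      have h2 := S.cg
      fun_prop) continuous_const
    (fun t ht => by
      have h1 := (((((S.dJ y t ht).log (S.Jne y t)).const_mul p.μ).sub (S.φ_t hy ht)).sub
        (S.dg t)).neg
      refine h1.congr_deriv ?_
      have := S.Jne y t
      have := p.hμ.ne'
      rw [S.vy_eq]
      field_simp
      ring)
    (fun t ht => by
      have := S.π_nonneg y ⟨ht.1.le, ht.2.le⟩
      linarith) ht
  have hg0 : S.g 0 = 0 := by simp [g]
  simp only [hg0, intervalIntegral.integral_zero, add_zero, sub_zero] at h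
  have a1 := abs_le.mp (S.φ_abs hy ht)
  have a2 := abs_le.mp (S.φ_abs hy (t := 0) ⟨le_rfl, p.hT.le⟩)
  have a3 : - ((p.ℓ * (p.m + 2 * p.E) + p.T * ((p.γ + 1) * p.E)) / p.ℓ) ≤ S.g t := by
    rw [← neg_div, div_le_iff₀ p.hℓ]
    linarith [S.g_lower ht]
  have a4 : p.μ * Real.log p.Jl ≤ p.μ * Real.log (S.J y 0) :=
    mul_le_mul_of_nonneg_left (Real.log_le_log p.hJl (S.J0l y)) p.hμ.le
  linarith

end Sol

namespace Sol
variable {p : Par} (S : Sol p)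

noncomputable def X (t : ℝ) : ℝ := ∫ y in (0:ℝ)..p.L, S.J y t * S.G y t ^ 2
noncomputable def Y (t : ℝ) : ℝ := ∫ y in (0:ℝ)..p.L, S.ρ y * S.vt y t ^ 2

theorem cX : Continuous S.X := cint (by fun_prop) _ _
theorem cY : Continuous S.Y := cint (by fun_prop) _ _

theorem X_nonneg (t : ℝ) : 0 ≤ S.X t :=
  intervalIntegral.integral_nonneg p.hL.le fun y _ => mul_nonneg (S.Jpos y t).le (sq_nonneg _)
theorem Y_nonneg (t : ℝ) : 0 ≤ S.Y t :=
  intervalIntegral.integral_nonneg p.hL.le fun y _ => mul_nonneg (S.ρpos y).le (sq_nonneg _)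

theorem G_sup {c : ℝ} (hc : 0 < c) (hJ : ∀ y ∈ Icc 0 p.L, ∀ t ∈ Icc 0 p.T, c ≤ S.J y t)
    {δ : ℝ} (hδ : 0 < δ) {y t : ℝ} (hy : y ∈ Icc 0 p.L) (ht : t ∈ Icc 0 p.T) :
    S.G y t ^ 2 ≤ δ * S.Y t + (1 / p.L + p.ρb / δ) / c * S.X t := by
  have hρb := p.hρb
  have hL := p.hL
  have cR : Continuous fun x => δ * (S.ρ x * S.vt x t ^ 2) + p.ρb / δ * S.G x t ^ 2 := by fun_prop
  have hb : ∀ x, |2 * S.G x t * (S.ρ x * S.vt x t)| ≤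
      δ * (S.ρ x * S.vt x t ^ 2) + p.ρb / δ * S.G x t ^ 2 := by
    intro x
    have h1 := S.ρpos x
    have h2 : S.ρ x / δ * S.G x t ^ 2 ≤ p.ρb / δ * S.G x t ^ 2 := by
      have := S.ρle x
      gcongr
    have h3 : 0 ≤ S.ρ x / δ * (δ * |S.vt x t| - |S.G x t|) ^ 2 := by positivity
    have h4 : S.ρ x / δ * (δ * |S.vt x t| - |S.G x t|) ^ 2 =
      δ * (S.ρ x * S.vt x t ^ 2) + S.ρ x / δ * S.G x t ^ 2 - 2 * |S.G x t| * (S.ρ x * |S.vt x t|) := by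
      rw [← sq_abs (S.vt x t), ← sq_abs (S.G x t)]
      field_simp
      ring
    rw [abs_mul, abs_mul, abs_mul, abs_of_pos h1, abs_two]
    linarith
  have hn : ∀ x, 0 ≤ δ * (S.ρ x * S.vt x t ^ 2) + p.ρb / δ * S.G x t ^ 2 :=
    fun x => (abs_nonneg _).trans (hb x)
  have key : ∀ a b, 0 ≤ a → a ≤ b → b ≤ p.L → |S.G b t ^ 2 - S.G a t ^ 2| ≤
      ∫ x in (0:ℝ)..p.L, (δ * (S.ρ x * S.vt x t ^ 2) + p.ρb / δ * S.G x t ^ 2) := by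
    intro a b ha hab hbL
    rw [← ftc (f := fun x => S.G x t ^ 2) (f' := fun x => 2 * S.G x t * (S.ρ x * S.vt x t)) hL.le
      (by fun_prop) (by fun_prop) (fun x hx => by
        refine ((S.yG t x hx).pow 2).congr_deriv ?_
        ring) ha hab hbL]
    calc _ ≤ ∫ x in a..b, |2 * S.G x t * (S.ρ x * S.vt x t)| :=
          intervalIntegral.abs_integral_le_integral_abs hab
      _ ≤ ∫ x in a..b, (δ * (S.ρ x * S.vt x t ^ 2) + p.ρb / δ * S.G x t ^ 2) :=
          ile hab (by fun_prop) cR fun x _ => hb x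
      _ ≤ _ := intervalIntegral.integral_mono_interval ha hab hbL
          (Filter.Eventually.of_forall hn) (cR.intervalIntegrable _ _)
  set R := ∫ x in (0:ℝ)..p.L, (δ * (S.ρ x * S.vt x t ^ 2) + p.ρb / δ * S.G x t ^ 2) with hR
  have h2 : ∀ z ∈ Icc 0 p.L, S.G y t ^ 2 ≤ S.G z t ^ 2 + R := by
    intro z hz
    rcases le_total z y with h | h
    · have := (abs_le.mp (key z y hz.1 h hy.2)).2
      linarith
    · have := (abs_le.mp (key y z hy.1 h hz.2)).1
      linarith
  have h3 := ile (f := fun _ => S.G y t ^ 2) hL.le (by fun_prop) (by fun_prop) h2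
  have i1 : IntervalIntegrable (fun x => S.G x t ^ 2) volume 0 p.L :=
    (by fun_prop : Continuous fun x => S.G x t ^ 2).intervalIntegrable _ _
  have i2 : IntervalIntegrable (fun x => S.ρ x * S.vt x t ^ 2) volume 0 p.L :=
    (by fun_prop : Continuous fun x => S.ρ x * S.vt x t ^ 2).intervalIntegrable _ _
  rw [intervalIntegral.integral_add i1 (by simp)] at h3
  simp only [intervalIntegral.integral_const, sub_zero, smul_eq_mul] at h3
  rw [intervalIntegral.integral_add (i2.const_mul _) (i1.const_mul _),
    intervalIntegral.integral_const_mul, intervalIntegral.integral_const_mul] at hR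
  change R = δ * S.Y t + _ at hR
  have h4 : c * ∫ x in (0:ℝ)..p.L, S.G x t ^ 2 ≤ S.X t := by
    rw [← intervalIntegral.integral_const_mul]
    exact ile hL.le (by fun_prop) (by fun_prop)
      fun x hx => mul_le_mul_of_nonneg_right (hJ x hx t ht) (sq_nonneg _)
  set I := ∫ x in (0:ℝ)..p.L, S.G x t ^ 2
  have h5 : I ≤ S.X t / c := by rw [le_div_iff₀ hc]; linarith
  have h6 : S.G y t ^ 2 ≤ (1 / p.L) * I + R := by
    have : S.G y t ^ 2 ≤ (I + p.L * R) / p.L := by rw [le_div_iff₀ hL]; linarith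
    calc _ ≤ _ := this
      _ = _ := by field_simp
  have h7 : (1 / p.L + p.ρb / δ) * I ≤ (1 / p.L + p.ρb / δ) * (S.X t / c) :=
    mul_le_mul_of_nonneg_left h5 (by positivity)
  calc _ ≤ δ * S.Y t + (1 / p.L + p.ρb / δ) * I := by rw [hR] at h6; linarith
    _ ≤ δ * S.Y t + (1 / p.L + p.ρb / δ) * (S.X t / c) := by linarith
    _ = _ := by ring

theorem dX {t : ℝ} (ht : t ∈ Ioo 0 p.T) : HasDerivAt S.X
    (∫ y in (0:ℝ)..p.L, (2 * (2 * p.γ - 1) * (S.ρ y * S.v y t * S.vt y t * S.G y t)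
      - 2 * p.μ * (S.ρ y * S.vt y t ^ 2))) t := by
  have h := leib (f := fun y t => S.J y t * S.G y t ^ 2)
    (f' := fun y t => S.vy y t * S.G y t ^ 2 + S.J y t * (2 * S.G y t * S.Gt y t))
    p.hL.le (by fun_prop) (by fun_prop) (fun y hy s hs => by
      refine ((S.dJ y s hs).mul ((S.dG hy hs).pow 2)).congr_deriv ?_
      simp) ht
  refine h.congr_deriv ?_
  have e1 := iby (f := fun y => S.v y t * S.G y t ^ 2) p.hL.le (by fun_prop)
    (f' := fun y => S.vy y t * S.G y t ^ 2 + S.v y t * (2 * S.G y t * (S.ρ y * S.vt y t)))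
    (by fun_prop) (fun y hy => by
      refine ((S.yv t y hy).mul ((S.yG t y hy).pow 2)).congr_deriv ?_
      simp) (by simp [S.v_0 t]) (by simp [S.v_L t])
  have e2 := iby (f := fun y => S.vt y t * S.G y t) p.hL.le (by fun_prop)
    (f' := fun y => S.vty y t * S.G y t + S.vt y t * (S.ρ y * S.vt y t))
    (by fun_prop) (fun y hy => (S.yvt t y hy).mul (S.yG t y hy))
    (by simp [S.vt_0 t]) (by simp [S.vt_L t])
  have e3 : (fun y => S.vy y t * S.G y t ^ 2 + S.J y t * (2 * S.G y t * S.Gt y t)) = fun y =>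
      (1 - 2 * p.γ) * (S.vy y t * S.G y t ^ 2 + S.v y t * (2 * S.G y t * (S.ρ y * S.vt y t)))
      + 2 * p.μ * (S.vty y t * S.G y t + S.vt y t * (S.ρ y * S.vt y t))
      + (2 * (2 * p.γ - 1) * (S.ρ y * S.v y t * S.vt y t * S.G y t)
      - 2 * p.μ * (S.ρ y * S.vt y t ^ 2)) := by
    funext y
    have := S.Jne y t
    unfold Gt
    field_simp
    ring
  rw [e3, intervalIntegral.integral_add, intervalIntegral.integral_add,
    intervalIntegral.integral_const_mul, intervalIntegral.integral_const_mul, e1, e2]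
  · ring
  all_goals (apply Continuous.intervalIntegrable; fun_prop)

theorem XY_bound (p : Par) : ∃ A > 0, ∀ S : Sol p, (∀ t ∈ Icc 0 p.T, S.X t ≤ A) ∧
    ∫ t in (0:ℝ)..p.T, S.Y t ≤ A := by
  obtain ⟨c, hc, hJ⟩ := J_lower p
  have hμ := p.hμ
  have hγ := p.hγ
  have hE := p.hE
  have hJb := p.hJb
  have hL := p.hL
  have hρb := p.hρb
  obtain ⟨κ, hκ⟩ : ∃ κ, κ = 2 * (2 * p.γ - 1) := ⟨_, rfl⟩
  have hκ0 : 0 < κ := by linarith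
  obtain ⟨δ, hδ⟩ : ∃ δ, δ = p.μ ^ 2 / (2 * κ ^ 2 * (p.E + 1)) := ⟨_, rfl⟩
  have hδ0 : 0 < δ := by rw [hδ]; positivity
  have hδ1 : κ ^ 2 * p.E / p.μ * δ ≤ p.μ / 2 := by
    have : κ ^ 2 * p.E / p.μ * δ = p.μ / 2 * (p.E / (p.E + 1)) := by
      rw [hδ]; field_simp
    rw [this]
    have : p.E / (p.E + 1) ≤ 1 := by rw [div_le_one (by linarith)]; linarith
    nlinarith
  obtain ⟨c2, hc2⟩ : ∃ c2, c2 = (1 / p.L + p.ρb / δ) / c := ⟨_, rfl⟩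
  have hc20 : 0 < c2 := by rw [hc2]; positivity
  obtain ⟨C, hC⟩ : ∃ C, C = κ ^ 2 * p.E / p.μ * c2 := ⟨_, rfl⟩
  have hC0 : 0 ≤ C := by rw [hC]; positivity
  refine ⟨Real.exp (C * p.T) * (p.Jb * p.K ^ 2) * (1 + 1 / p.μ) + 1, by positivity, ?_⟩
  intro S
  have hX' : ∀ t ∈ Ioo 0 p.T, (∫ y in (0:ℝ)..p.L,
      (2 * (2 * p.γ - 1) * (S.ρ y * S.v y t * S.vt y t * S.G y t)
      - 2 * p.μ * (S.ρ y * S.vt y t ^ 2))) ≤ C * S.X t - p.μ * S.Y t := by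
    intro t ht
    have ht' : t ∈ Icc 0 p.T := ⟨ht.1.le, ht.2.le⟩
    obtain ⟨B, hB⟩ : ∃ B, B = δ * S.Y t + c2 * S.X t := ⟨_, rfl⟩
    have hG : ∀ y ∈ Icc 0 p.L, S.G y t ^ 2 ≤ B := by
      intro y hy
      rw [hB, hc2]
      exact S.G_sup hc (hJ S) hδ0 hy ht'
    have hB0 : 0 ≤ B := (sq_nonneg _).trans (hG 0 ⟨le_rfl, hL.le⟩)
    have h1 := ile (f := fun y => (2 * (2 * p.γ - 1) * (S.ρ y * S.v y t * S.vt y t * S.G y t)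
      - 2 * p.μ * (S.ρ y * S.vt y t ^ 2)))
      (g := fun y => κ ^ 2 / (2 * p.μ) * B * (S.ρ y * S.v y t ^ 2)
        - (3 / 2 * p.μ) * (S.ρ y * S.vt y t ^ 2)) hL.le (by fun_prop) (by fun_prop) (by
      intro y hy
      rw [← hκ]
      have hρ := S.ρpos y
      have h2 : κ ^ 2 / (2 * p.μ) * S.G y t ^ 2 * (S.ρ y * S.v y t ^ 2) ≤
          κ ^ 2 / (2 * p.μ) * B * (S.ρ y * S.v y t ^ 2) := by
        have := hG y hy
        gcongr
      have h3 : 0 ≤ S.ρ y / (2 * p.μ) * (κ * S.v y t * S.G y t - p.μ * S.vt y t) ^ 2 := by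
        positivity
      have h4 : S.ρ y / (2 * p.μ) * (κ * S.v y t * S.G y t - p.μ * S.vt y t) ^ 2 =
        κ ^ 2 / (2 * p.μ) * S.G y t ^ 2 * (S.ρ y * S.v y t ^ 2)
        + p.μ / 2 * (S.ρ y * S.vt y t ^ 2)
        - κ * (S.ρ y * S.v y t * S.vt y t * S.G y t) := by
        field_simp
        ring
      linarith)
    refine h1.trans ?_
    rw [intervalIntegral.integral_sub, intervalIntegral.integral_const_mul,
      intervalIntegral.integral_const_mul]
    · change _ - 3 / 2 * p.μ * S.Y t ≤ _
      have h2 : κ ^ 2 / (2 * p.μ) * B * (∫ y in (0:ℝ)..p.L, S.ρ y * S.v y t ^ 2) ≤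
          κ ^ 2 / (2 * p.μ) * B * (2 * p.E) :=
        mul_le_mul_of_nonneg_left (S.energy_kin ht') (by positivity)
      have h3 : κ ^ 2 / (2 * p.μ) * B * (2 * p.E) =
          (κ ^ 2 * p.E / p.μ * δ) * S.Y t + C * S.X t := by
        rw [hB, hC]; field_simp
      have h4 := mul_le_mul_of_nonneg_right hδ1 (S.Y_nonneg t)
      linarith
    all_goals (apply Continuous.intervalIntegrable; fun_prop)
  have cX := S.cX
  have cY := S.cY
  have hX0 : S.X 0 ≤ p.Jb * p.K ^ 2 := by
    calc S.X 0 ≤ ∫ y in (0:ℝ)..p.L, p.Jb * S.G y 0 ^ 2 :=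
          ile hL.le (by fun_prop) (by fun_prop)
            fun y _ => mul_le_mul_of_nonneg_right (S.J0b y) (sq_nonneg _)
      _ = p.Jb * ∫ y in (0:ℝ)..p.L, S.G y 0 ^ 2 := intervalIntegral.integral_const_mul _ _
      _ ≤ _ := mul_le_mul_of_nonneg_left S.iG hJb.le
  have main : ∀ t ∈ Icc 0 p.T, Real.exp (-(C * t)) * S.X t ≤
      S.X 0 - p.μ * Real.exp (-(C * p.T)) * ∫ s in (0:ℝ)..t, S.Y s := by
    intro t ht
    have h := growth (T := p.T) (F := fun t => Real.exp (-(C * t)) * S.X t)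
      (N := fun t => - (p.μ * Real.exp (-(C * p.T))) * S.Y t) (by fun_prop) (by fun_prop)
      (fun t ht => by
        have h1 : HasDerivAt (fun t : ℝ => -(C * t)) (-C) t := by
          exact (((hasDerivAt_id t).const_mul C).neg).congr_deriv (by simp)
        exact h1.exp.mul (S.dX ht))
      (fun t ht => by
        have h1 := hX' t ht
        have h2 := Real.exp_pos (-(C * t))
        have h3 := mul_le_mul_of_nonneg_left h1 h2.le
        have h4 : Real.exp (-(C * p.T)) ≤ Real.exp (-(C * t)) := by
          apply Real.exp_le_exp.mpr
          have := mul_le_mul_of_nonneg_left ht.2.le hC0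
          linarith
        have h5 := mul_le_mul_of_nonneg_right h4 (mul_nonneg hμ.le (S.Y_nonneg t))
        linarith) ht
    rw [intervalIntegral.integral_const_mul] at h
    simp only [mul_zero, neg_zero, Real.exp_zero, one_mul] at h
    linarith
  have hexp : Real.exp (C * p.T) * Real.exp (-(C * p.T)) = 1 := by
    rw [← Real.exp_add]; simp
  have hD : Real.exp (C * p.T) * S.X 0 ≤ Real.exp (C * p.T) * (p.Jb * p.K ^ 2) :=
    mul_le_mul_of_nonneg_left hX0 (Real.exp_pos _).le
  have hDn : 0 ≤ Real.exp (C * p.T) * (p.Jb * p.K ^ 2) := by positivity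
  have hDm : 0 ≤ Real.exp (C * p.T) * (p.Jb * p.K ^ 2) * (1 / p.μ) := by positivity
  constructor
  · intro t ht
    have h1 := main t ht
    have h2 : 0 ≤ ∫ s in (0:ℝ)..t, S.Y s :=
      intervalIntegral.integral_nonneg ht.1 fun s _ => S.Y_nonneg s
    have h3 : 0 ≤ p.μ * Real.exp (-(C * p.T)) * ∫ s in (0:ℝ)..t, S.Y s := by positivity
    have h4 : Real.exp (-(C * p.T)) * S.X t ≤ Real.exp (-(C * t)) * S.X t := by
      apply mul_le_mul_of_nonneg_right _ (S.X_nonneg t)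
      apply Real.exp_le_exp.mpr
      have := mul_le_mul_of_nonneg_left ht.2 hC0
      linarith
    have h5 : S.X t ≤ Real.exp (C * p.T) * S.X 0 := by
      calc S.X t = Real.exp (C * p.T) * (Real.exp (-(C * p.T)) * S.X t) := by
            rw [← mul_assoc, hexp, one_mul]
        _ ≤ _ := mul_le_mul_of_nonneg_left (by linarith) (Real.exp_pos _).le
    linarith
  · have h1 := main p.T ⟨p.hT.le, le_rfl⟩
    have h2 : 0 ≤ Real.exp (-(C * p.T)) * S.X p.T := mul_nonneg (Real.exp_pos _).le (S.X_nonneg _)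
    have h3 : ∫ s in (0:ℝ)..p.T, S.Y s ≤ Real.exp (C * p.T) * S.X 0 * (1 / p.μ) := by
      calc _ = Real.exp (C * p.T) * (p.μ * Real.exp (-(C * p.T)) * ∫ s in (0:ℝ)..p.T, S.Y s)
            * (1 / p.μ) := by
            rw [show Real.exp (C * p.T) * (p.μ * Real.exp (-(C * p.T)) * ∫ s in (0:ℝ)..p.T, S.Y s)
              = (Real.exp (C * p.T) * Real.exp (-(C * p.T))) * (p.μ * ∫ s in (0:ℝ)..p.T, S.Y s) by
              ring, hexp]
            field_simp
        _ ≤ _ := by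
            apply mul_le_mul_of_nonneg_right _ (by positivity)
            exact mul_le_mul_of_nonneg_left (by linarith) (Real.exp_pos _).le
    have h4 := mul_le_mul_of_nonneg_right hD (by positivity : 0 ≤ 1 / p.μ)
    linarith

/-- integrable majorant of `‖G‖_∞²` -/
theorem N_bound (p : Par) : ∃ A > 0, ∀ S : Sol p, (∀ t ∈ Icc 0 p.T, S.X t ≤ A) ∧
    (∫ t in (0:ℝ)..p.T, S.Y t ≤ A) ∧ ∃ N : ℝ → ℝ, Continuous N ∧ (∀ t, 0 ≤ N t) ∧
    (∀ y ∈ Icc 0 p.L, ∀ t ∈ Icc 0 p.T, S.G y t ^ 2 ≤ N t) ∧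
    ∀ t ∈ Icc 0 p.T, ∫ s in (0:ℝ)..t, N s ≤ A := by
  obtain ⟨c, hc, hJ⟩ := J_lower p
  obtain ⟨A, hA, h⟩ := XY_bound p
  have hL := p.hL
  have hρb := p.hρb
  have hT := p.hT
  obtain ⟨c3, hc3⟩ : ∃ c3, c3 = (1 / p.L + p.ρb / 1) / c := ⟨_, rfl⟩
  have hc30 : 0 < c3 := by rw [hc3]; positivity
  have hp : 0 < c3 * A * p.T := by positivity
  refine ⟨A + c3 * A * p.T, by positivity, fun S => ⟨fun t ht => by linarith [(h S).1 t ht],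
    by linarith [(h S).2], fun t => 1 * S.Y t + c3 * S.X t, ?_, ?_, ?_, ?_⟩⟩
  · have := S.cX
    have := S.cY
    fun_prop
  · intro t
    have := S.X_nonneg t
    have := S.Y_nonneg t
    positivity
  · intro y hy t ht
    rw [hc3]
    exact S.G_sup hc (hJ S) one_pos hy ht
  · intro t ht
    have cX := S.cX
    have cY := S.cY
    rw [intervalIntegral.integral_add, intervalIntegral.integral_const_mul,
      intervalIntegral.integral_const_mul]
    · have h1 : ∫ s in (0:ℝ)..t, S.Y s ≤ ∫ s in (0:ℝ)..p.T, S.Y s :=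
        intervalIntegral.integral_mono_interval le_rfl ht.1 ht.2
          (Filter.Eventually.of_forall S.Y_nonneg) (cY.intervalIntegrable _ _)
      have h2 : ∫ s in (0:ℝ)..t, S.X s ≤ ∫ s in (0:ℝ)..p.T, S.X s :=
        intervalIntegral.integral_mono_interval le_rfl ht.1 ht.2
          (Filter.Eventually.of_forall S.X_nonneg) (cX.intervalIntegrable _ _)
      have h3 : ∫ s in (0:ℝ)..p.T, S.X s ≤ ∫ s in (0:ℝ)..p.T, A :=
        ile hT.le cX continuous_const (h S).1
      simp only [intervalIntegral.integral_const, sub_zero, smul_eq_mul] at h3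
      have h4 := mul_le_mul_of_nonneg_left (h2.trans h3) hc30.le
      linarith [(h S).2]
    all_goals (apply Continuous.intervalIntegrable; fun_prop)

end Sol

namespace Sol
variable {p : Par} (S : Sol p)

theorem upper (p : Par) : ∃ A > 0, ∃ B > 0, ∀ S : Sol p, (∀ t ∈ Icc 0 p.T, S.X t ≤ A) ∧
    (∫ t in (0:ℝ)..p.T, S.Y t ≤ A) ∧
    (∀ y ∈ Icc 0 p.L, ∀ t ∈ Icc 0 p.T, S.π y t ≤ B) ∧
    (∀ y ∈ Icc 0 p.L, ∀ t ∈ Icc 0 p.T, S.J y t ≤ B) ∧ ∃ N : ℝ → ℝ, Continuous N ∧ (∀ t, 0 ≤ N t) ∧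
    (∀ y ∈ Icc 0 p.L, ∀ t ∈ Icc 0 p.T, S.G y t ^ 2 ≤ N t) ∧
    ∀ t ∈ Icc 0 p.T, ∫ s in (0:ℝ)..t, N s ≤ A := by
  obtain ⟨A, hA, h⟩ := N_bound p
  have hμ := p.hμ
  have hγ := p.hγ
  have hT := p.hT
  have hP := p.hP
  obtain ⟨k, hk⟩ : ∃ k, k = ((p.γ - 1) + (p.γ - 2) ^ 2 / 4) / p.μ := ⟨_, rfl⟩
  have hk0 : 0 < k := by
    rw [hk]
    apply div_pos _ hμ
    nlinarith [sq_nonneg (p.γ - 2)]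
  obtain ⟨B1, hB1⟩ : ∃ B1, B1 = p.P + k * A := ⟨_, rfl⟩
  have hB10 : 0 < B1 := by rw [hB1]; positivity
  obtain ⟨B2, hB2⟩ : ∃ B2, B2 = Real.exp (Real.log p.Jb + ((1 + B1) * p.T + A) / p.μ) := ⟨_, rfl⟩
  have hB20 : 0 < B2 := by rw [hB2]; positivity
  refine ⟨A, hA, B1 + B2, by positivity, fun S => ?_⟩
  obtain ⟨hX, hY, N, cN, hN0, hGN, hNA⟩ := h S
  have hπ : ∀ y ∈ Icc 0 p.L, ∀ t ∈ Icc 0 p.T, S.π y t ≤ B1 := by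
    intro y hy t ht
    have h1 := growth (T := p.T) (F := fun t => S.π y t) (N := fun t => k * N t)
      (by fun_prop) (by fun_prop) (S.dπ y) (fun t ht => by
        have h2 := mul_le_mul_of_nonneg_left (hGN y hy t ⟨ht.1.le, ht.2.le⟩) hk0.le
        refine le_trans ?_ h2
        rw [hk, div_mul_eq_mul_div]
        apply div_le_div_of_nonneg_right _ hμ.le
        nlinarith [sq_nonneg ((p.γ - 2) / 2 * S.G y t - S.π y t)]) ht
    rw [intervalIntegral.integral_const_mul] at h1
    have h2 := mul_le_mul_of_nonneg_left (hNA t ht) hk0.le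
    linarith [S.π0P y]
  refine ⟨hX, hY, fun y hy t ht => by linarith [hπ y hy t ht], ?_, N, cN, hN0, hGN, hNA⟩
  intro y hy t ht
  have h1 := growth (T := p.T) (F := fun t => Real.log (S.J y t))
    (F' := fun t => (S.G y t + S.π y t) / p.μ)
    (N := fun t => ((1 + B1) + N t) / p.μ)
    ((by fun_prop : Continuous fun t => S.J y t).log (fun t => S.Jne y t)) (by fun_prop)
    (fun t ht => by
      refine ((S.dJ y t ht).log (S.Jne y t)).congr_deriv ?_
      have := S.Jne y t
      rw [S.vy_eq]
      field_simp)
    (fun t ht => by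
      have ht' : t ∈ Icc 0 p.T := ⟨ht.1.le, ht.2.le⟩
      apply div_le_div_of_nonneg_right _ hμ.le
      have h2 := hGN y hy t ht'
      have h3 := hπ y hy t ht'
      nlinarith [sq_nonneg (S.G y t - 1)]) ht
  rw [intervalIntegral.integral_div, intervalIntegral.integral_add (by simp)
    (cN.intervalIntegrable _ _)] at h1
  simp only [intervalIntegral.integral_const, sub_zero, smul_eq_mul] at h1
  have h2 : Real.log (S.J y 0) ≤ Real.log p.Jb := Real.log_le_log (S.Jpos y 0) (S.J0b y)
  have h3 : (t * (1 + B1) + ∫ s in (0:ℝ)..t, N s) / p.μ ≤ ((1 + B1) * p.T + A) / p.μ := by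
    apply div_le_div_of_nonneg_right _ hμ.le
    have := mul_le_mul_of_nonneg_right ht.2 (by linarith : 0 ≤ 1 + B1)
    linarith [hNA t ht]
  have h4 : S.J y t ≤ B2 := by
    rw [hB2, ← Real.log_le_iff_le_exp (S.Jpos y t)]
    linarith
  linarith

theorem dY {t : ℝ} (ht : t ∈ Ioo 0 p.T) : HasDerivAt S.Y
    (∫ y in (0:ℝ)..p.L, - (2 * S.vty y t * S.Gt y t)) t := by
  have cK : Continuous (fun t' => ∫ y in (0:ℝ)..p.L, - ((S.vty y t + S.vty y t') *
      ∫ θ in (0:ℝ)..1, S.Gt y (t + (t' - t) * θ))) := by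
    apply cint
    have : Continuous (fun z : ℝ × ℝ => ∫ θ in (0:ℝ)..1, S.Gt z.2 (t + (z.1 - t) * θ)) := by
      apply cint
      fun_prop
    fun_prop
  have := factor (F := S.Y) ht ?_ cK
  · refine this.congr_deriv ?_
    congr 1
    funext y
    simp only [sub_self, zero_mul, add_zero, intervalIntegral.integral_const, sub_zero, one_smul]
    ring
  · intro t' ht'
    have e := iby (f := fun y => (S.G y t' - S.G y t) * (S.vt y t' + S.vt y t)) p.hL.le
      (f' := fun y => (S.ρ y * S.vt y t' - S.ρ y * S.vt y t) * (S.vt y t' + S.vt y t) +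
        (S.G y t' - S.G y t) * (S.vty y t' + S.vty y t)) (by fun_prop) (by fun_prop)
      (fun y hy => ((S.yG t' y hy).sub (S.yG t y hy)).mul ((S.yvt t' y hy).add (S.yvt t y hy)))
      (by simp [S.vt_0]) (by simp [S.vt_L])
    have e1 : S.Y t' - S.Y t = ∫ y in (0:ℝ)..p.L,
        - ((S.G y t' - S.G y t) * (S.vty y t' + S.vty y t)) := by
      rw [← sub_eq_zero, Y, Y, ← intervalIntegral.integral_sub, ← intervalIntegral.integral_sub]
      · rw [← e]
        congr 1
        funext y
        ring
      all_goals (apply Continuous.intervalIntegrable; fun_prop)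
    rw [e1, ← intervalIntegral.integral_const_mul]
    apply intervalIntegral.integral_congr_Ioo_of_le p.hL.le
    intro y hy
    have := seg (f := fun s => S.G y s) (f' := fun s => S.Gt y s) (by fun_prop)
      (fun s hs => S.dG hy hs) ht ht'
    simp only [this]
    ring

theorem final (p : Par) : ∃ C > 0, ∀ S : Sol p,
    (∫ t in (0:ℝ)..p.T, t * ∫ y in (0:ℝ)..p.L, (S.vty y t) ^ 2) ≤ C := by
  obtain ⟨A, hA, B, hB, h⟩ := upper p
  have hμ := p.hμ
  have hγ := p.hγ
  have hT := p.hT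
  have hL := p.hL
  obtain ⟨b, hb⟩ : ∃ b, b = 2 * p.γ ^ 2 / p.μ ^ 3 := ⟨_, rfl⟩
  have hb0 : 0 < b := by rw [hb]; positivity
  refine ⟨(A + p.T * b * A * (A + p.T * B ^ 2)) / (p.μ / B), by positivity, fun S => ?_⟩
  obtain ⟨hX, hY, hπ, hJ, N, cN, hN0, hGN, hNA⟩ := h S
  have cY := S.cY
  have cZ : Continuous fun t => ∫ y in (0:ℝ)..p.L, (S.vty y t) ^ 2 := cint (by fun_prop) _ _
  have hY' : ∀ t ∈ Ioo 0 p.T, (∫ y in (0:ℝ)..p.L, - (2 * S.vty y t * S.Gt y t)) ≤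
      - (p.μ / B) * (∫ y in (0:ℝ)..p.L, (S.vty y t) ^ 2) + b * A * (N t + B ^ 2) := by
    intro t ht
    have ht' : t ∈ Icc 0 p.T := ⟨ht.1.le, ht.2.le⟩
    have hn := hN0 t
    have h1 := ile (f := fun y => - (2 * S.vty y t * S.Gt y t))
      (g := fun y => - (p.μ / B) * (S.vty y t) ^ 2 +
        b * (N t + B ^ 2) * (S.J y t * S.G y t ^ 2)) hL.le (by fun_prop) (by fun_prop) (by
      intro y hy
      have hj := S.Jpos y t
      have hjB := hJ y hy t ht'
      have hg := hGN y hy t ht'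
      have hp1 := hπ y hy t ht'
      have hp0 := S.π_nonneg y ht'
      have a1 : p.μ / B * S.vty y t ^ 2 ≤ p.μ / S.J y t * S.vty y t ^ 2 := by
        gcongr
      have a2 : 0 ≤ (p.μ * S.vty y t - p.γ * S.vy y t * S.G y t) ^ 2 / (p.μ * S.J y t) := by
        positivity
      have a3 : - (2 * S.vty y t * S.Gt y t) = - (p.μ / S.J y t * S.vty y t ^ 2)
          - (p.μ * S.vty y t - p.γ * S.vy y t * S.G y t) ^ 2 / (p.μ * S.J y t)
          + (p.γ * S.vy y t * S.G y t) ^ 2 / (p.μ * S.J y t) := by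
        unfold Gt
        field_simp
        ring
      have a4 : (p.γ * S.vy y t * S.G y t) ^ 2 / (p.μ * S.J y t) =
          b / 2 * (S.G y t + S.π y t) ^ 2 * (S.J y t * S.G y t ^ 2) := by
        rw [S.vy_eq, hb]
        field_simp
      have a5 : (S.G y t + S.π y t) ^ 2 ≤ 2 * (N t + B ^ 2) := by
        have : S.π y t ^ 2 ≤ B ^ 2 := by gcongr
        nlinarith [sq_nonneg (S.G y t - S.π y t)]
      have a6 : b / 2 * (S.G y t + S.π y t) ^ 2 * (S.J y t * S.G y t ^ 2) ≤
          b / 2 * (2 * (N t + B ^ 2)) * (S.J y t * S.G y t ^ 2) := by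
        gcongr
      linarith)
    refine h1.trans ?_
    rw [intervalIntegral.integral_add, intervalIntegral.integral_const_mul,
      intervalIntegral.integral_const_mul]
    · have h2 : b * (N t + B ^ 2) * S.X t ≤ b * (N t + B ^ 2) * A :=
        mul_le_mul_of_nonneg_left (hX t ht') (by positivity)
      unfold X at h2
      linarith
    all_goals (apply Continuous.intervalIntegrable; fun_prop)
  have hg := growth (T := p.T) (F := fun t => t * S.Y t)
    (N := fun t => S.Y t + (- (p.μ / B) * (t * ∫ y in (0:ℝ)..p.L, (S.vty y t) ^ 2)
      + p.T * b * A * (N t + B ^ 2))) (by fun_prop) (by fun_prop)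
    (fun t ht => (hasDerivAt_id t).mul (S.dY ht))
    (fun t ht => by
      have h1 := mul_le_mul_of_nonneg_left (hY' t ht) ht.1.le
      have hn := hN0 t
      have h2 : t * (b * A * (N t + B ^ 2)) ≤ p.T * (b * A * (N t + B ^ 2)) :=
        mul_le_mul_of_nonneg_right ht.2.le (by positivity)
      simp only [id]
      linarith) ⟨hT.le, le_rfl⟩
  rw [intervalIntegral.integral_add, intervalIntegral.integral_add,
    intervalIntegral.integral_const_mul, intervalIntegral.integral_const_mul,
    intervalIntegral.integral_add] at hg
  · simp only [intervalIntegral.integral_const, sub_zero, smul_eq_mul, zero_mul, zero_add] at hg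
    have h1 : 0 ≤ p.T * S.Y p.T := mul_nonneg hT.le (S.Y_nonneg _)
    have h2 : p.T * b * A * ((∫ s in (0:ℝ)..p.T, N s) + p.T * B ^ 2) ≤
        p.T * b * A * (A + p.T * B ^ 2) := by
      apply mul_le_mul_of_nonneg_left _ (by positivity)
      linarith [hNA p.T ⟨hT.le, le_rfl⟩]
    rw [le_div_iff₀ (by positivity)]
    linarith
  all_goals (apply Continuous.intervalIntegrable; fun_prop)

end Sol
end TW

namespace TW

/-- clamp to `[0, L]` -/
noncomputable def cl (L y : ℝ) : ℝ := max 0 (min y L)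

theorem cl_mem {L : ℝ} (hL : 0 ≤ L) (y : ℝ) : cl L y ∈ Icc 0 L :=
  ⟨le_max_left _ _, max_le hL (min_le_right _ _)⟩

theorem cl_eq {L y : ℝ} (hy : y ∈ Icc 0 L) : cl L y = y := by
  unfold cl
  rw [min_eq_left hy.2, max_eq_right hy.1]

theorem cl_cont (L : ℝ) : Continuous (cl L) := by
  unfold cl
  fun_prop

theorem cl_ext {L T : ℝ} (hL : 0 ≤ L) (hT : 0 ≤ T) {f : ℝ → ℝ → ℝ}
    (hf : ContinuousOn (fun p : ℝ × ℝ => f p.1 p.2) (Icc 0 L ×ˢ Icc 0 T)) :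
    Continuous (fun z : ℝ × ℝ => f (cl L z.1) (cl T z.2)) :=
  hf.comp_continuous (f := fun z : ℝ × ℝ => (cl L z.1, cl T z.2))
    (((cl_cont L).comp continuous_fst).prodMk ((cl_cont T).comp continuous_snd))
    (fun z => ⟨cl_mem hL _, cl_mem hT _⟩)

theorem cl_deriv {T t d : ℝ} {f : ℝ → ℝ} (ht : t ∈ Ioo 0 T)
    (h : HasDerivWithinAt f d (Icc 0 T) t) : HasDerivAt (fun s => f (cl T s)) d t := by
  refine (h.hasDerivAt (Icc_mem_nhds ht.1 ht.2)).congr_of_eventuallyEq ?_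
  filter_upwards [Icc_mem_nhds ht.1 ht.2] with s hs
  rw [cl_eq hs]

end TW

/-- (Proposition 2.8: time-weighted estimate
`∫₀ᵀ t ‖∂_y ∂ₜ v‖₂² dt ≤ C`.) The constant `C` depends only on
`γ, μ, ρ̄, ℓ₀, J̲, J̄, m₀, ‖π₀‖_∞, E₀, ‖G₀‖₂, ‖∂_y J₀‖₂ + ‖∂_y π₀‖₂` and `T`.
Here `vty = ∂_y ∂ₜ v`. -/
theorem time_weighted_estimate
    (L γ μ ρbar ℓ₀ Jlow Jbar m₀ P₀ E₀ K₀ D₀ T : ℝ)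
    (hL : 0 < L) (hγ : 1 < γ) (hμ : 0 < μ) (hρbar : 0 < ρbar) (hℓ₀ : 0 < ℓ₀)
    (hJlow : 0 < Jlow) (hJbar : 0 < Jbar) (hm₀ : 0 ≤ m₀) (hP₀ : 0 ≤ P₀)
    (hE₀ : 0 ≤ E₀) (hK₀ : 0 ≤ K₀) (hD₀ : 0 ≤ D₀) (hT : 0 < T) :
    ∃ C > 0, ∀ (ρ₀ ρ₀d : ℝ → ℝ) (J v π Jt vy vt w πy πt Jy vty : ℝ → ℝ → ℝ),
      (∀ y ∈ Icc (0:ℝ) L, HasDerivWithinAt ρ₀ (ρ₀d y) (Icc 0 L) y) →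
      ContinuousOn ρ₀d (Icc 0 L) →
      (∀ y ∈ Icc (0:ℝ) L, 0 < ρ₀ y ∧ ρ₀ y ≤ ρbar) →
      ClassicalSolution L T μ γ ρ₀ J v π Jt vy vt w πy πt →
      (∀ y ∈ Icc (0:ℝ) L, ∀ t ∈ Icc (0:ℝ) T,
        HasDerivWithinAt (fun x => J x t) (Jy y t) (Icc 0 L) y) →
      (∀ y ∈ Icc (0:ℝ) L, ∀ t ∈ Icc (0:ℝ) T,
        HasDerivWithinAt (fun x => vt x t) (vty y t) (Icc 0 L) y) →
      ContinuousOn (fun p : ℝ × ℝ => Jy p.1 p.2) (Icc 0 L ×ˢ Icc 0 T) →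
      ContinuousOn (fun p : ℝ × ℝ => vty p.1 p.2) (Icc 0 L ×ˢ Icc 0 T) →
      (∀ t ∈ Icc (0:ℝ) T, v 0 t = 0 ∧ v L t = 0) →
      (∀ y ∈ Icc (0:ℝ) L, 0 ≤ π y 0) →
      sSup ((fun y => |π y 0|) '' Icc (0:ℝ) L) ≤ P₀ →
      (∀ y ∈ Icc (0:ℝ) L, Jlow ≤ J y 0 ∧ J y 0 ≤ Jbar) →
      (∫ y in (0:ℝ)..L, J y 0) = ℓ₀ →
      (∫ y in (0:ℝ)..L, ρ₀ y) = m₀ →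
      (∫ y in (0:ℝ)..L, (ρ₀ y * (v y 0) ^ 2 / 2 + J y 0 * π y 0 / (γ - 1))) = E₀ →
      Real.sqrt (∫ y in (0:ℝ)..L, (μ * vy y 0 / J y 0 - π y 0) ^ 2) ≤ K₀ →
      Real.sqrt (∫ y in (0:ℝ)..L, (Jy y 0) ^ 2)
          + Real.sqrt (∫ y in (0:ℝ)..L, (πy y 0) ^ 2) ≤ D₀ →
      (∫ t in (0:ℝ)..T, t * ∫ y in (0:ℝ)..L, (vty y t) ^ 2) ≤ C := by
  obtain ⟨C, hC, h⟩ := TW.Sol.final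
    ⟨L, γ, μ, ρbar, ℓ₀, Jlow, Jbar, m₀, P₀, E₀, K₀, T,
      hL, hγ, hμ, hρbar, hℓ₀, hJlow, hJbar, hm₀, hP₀, hE₀, hK₀, hT⟩
  refine ⟨C, hC, ?_⟩
  intro ρ₀ ρ₀d J v π Jt vy vt w πy πt Jy vty hρd _ hρ S _ hvty _ cvty hbv hπ0 hsup hJ0 iJ iρ iE iG _
  have mL : ∀ y, TW.cl L y ∈ Icc 0 L := TW.cl_mem hL.le
  have mT : ∀ t, TW.cl T t ∈ Icc 0 T := TW.cl_mem hT.le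
  have eL : ∀ y ∈ Icc 0 L, TW.cl L y = y := fun y hy => TW.cl_eq hy
  have eT : ∀ t ∈ Icc 0 T, TW.cl T t = t := fun t ht => TW.cl_eq ht
  have e0L : TW.cl L 0 = 0 := eL 0 ⟨le_rfl, hL.le⟩
  have eLL : TW.cl L L = L := eL L ⟨hL.le, le_rfl⟩
  have e0T : TW.cl T 0 = 0 := eT 0 ⟨le_rfl, hT.le⟩
  have hvt0 : ∀ t ∈ Icc 0 T, ∀ y ∈ Icc 0 L, (∀ s ∈ Icc 0 T, v y s = 0) → vt y t = 0 := by
    intro t ht y hy h0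
    have h1 : HasDerivWithinAt (fun s => v y s) 0 (Icc 0 T) t :=
      (hasDerivWithinAt_const t (Icc 0 T) (0:ℝ)).congr (fun s hs => h0 s hs) (h0 t ht)
    exact (uniqueDiffOn_Icc hT t ht).eq_deriv _ (S.hvt y hy t ht) h1
  have iL : ∀ f g : ℝ → ℝ, (∀ y ∈ Icc 0 L, f y = g y) →
      ∫ y in (0:ℝ)..L, f y = ∫ y in (0:ℝ)..L, g y := by
    intro f g hfg
    apply intervalIntegral.integral_congr
    intro y hy
    rw [uIcc_of_le hL.le] at hy
    exact hfg y hy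
  have cq : ContinuousOn (fun p : ℝ × ℝ => vy p.1 p.2 / J p.1 p.2) (Icc 0 L ×ˢ Icc 0 T) :=
    S.contvy.div S.contJ (fun z hz => (S.Jpos z.1 hz.1 z.2 hz.2).ne')
  have cGG : ContinuousOn (fun p : ℝ × ℝ => μ * (vy p.1 p.2 / J p.1 p.2) - π p.1 p.2)
      (Icc 0 L ×ˢ Icc 0 T) := (cq.const_mul μ).sub S.contPi
  have key := h
    { ρ := fun y => ρ₀ (TW.cl L y)
      J := fun y t => J (TW.cl L y) (TW.cl T t)
      v := fun y t => v (TW.cl L y) (TW.cl T t)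
      π := fun y t => π (TW.cl L y) (TW.cl T t)
      vy := fun y t => vy (TW.cl L y) (TW.cl T t)
      vt := fun y t => vt (TW.cl L y) (TW.cl T t)
      vty := fun y t => vty (TW.cl L y) (TW.cl T t)
      G := fun y t => μ * (vy (TW.cl L y) (TW.cl T t) / J (TW.cl L y) (TW.cl T t))
        - π (TW.cl L y) (TW.cl T t)
      cρ0 := (show ContinuousOn ρ₀ (Icc 0 L) from
        fun y hy => (hρd y hy).continuousWithinAt).comp_continuous (TW.cl_cont L) mL
      cJ0 := TW.cl_ext hL.le hT.le S.contJ
      cv0 := TW.cl_ext hL.le hT.le S.contv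
      cπ0 := TW.cl_ext hL.le hT.le S.contPi
      cvy0 := TW.cl_ext hL.le hT.le S.contvy
      cvt0 := TW.cl_ext hL.le hT.le S.contvt
      cvty0 := TW.cl_ext hL.le hT.le cvty
      cG0 := TW.cl_ext (f := fun y t => μ * (vy y t / J y t) - π y t) hL.le hT.le cGG
      Jpos := fun y t => S.Jpos _ (mL y) _ (mT t)
      ρpos := fun y => (hρ _ (mL y)).1
      ρle := fun y => (hρ _ (mL y)).2
      eqG := fun y t => by
        have := (S.Jpos _ (mL y) _ (mT t)).ne'
        field_simp
        ring
      dJ := fun y t ht => by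
        have h1 := TW.cl_deriv (f := fun s => J (TW.cl L y) s) ht
          (S.hJt _ (mL y) t ⟨ht.1.le, ht.2.le⟩)
        rw [S.eq1 _ (mL y) t ⟨ht.1.le, ht.2.le⟩] at h1
        simpa only [eT t ⟨ht.1.le, ht.2.le⟩] using h1
      dv := fun y t ht => by
        have h1 := TW.cl_deriv (f := fun s => v (TW.cl L y) s) ht
          (S.hvt _ (mL y) t ⟨ht.1.le, ht.2.le⟩)
        simpa only [eT t ⟨ht.1.le, ht.2.le⟩] using h1
      dπ := fun y t ht => by
        have h1 := TW.cl_deriv (f := fun s => π (TW.cl L y) s) ht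
          (S.hPit _ (mL y) t ⟨ht.1.le, ht.2.le⟩)
        refine h1.congr_deriv ?_
        simp only [eT t ⟨ht.1.le, ht.2.le⟩]
        have h2 := S.eq3 _ (mL y) t ⟨ht.1.le, ht.2.le⟩
        generalize vy (TW.cl L y) t / J (TW.cl L y) t = q at h2 ⊢
        rw [eq_sub_of_add_eq h2]
        field_simp
        ring
      yv := fun t y hy => by
        have h1 := TW.cl_deriv (f := fun x => v x (TW.cl T t)) hy
          (S.hvy y ⟨hy.1.le, hy.2.le⟩ _ (mT t))
        simpa only [eL y ⟨hy.1.le, hy.2.le⟩] using h1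
      yvt := fun t y hy => by
        have h1 := TW.cl_deriv (f := fun x => vt x (TW.cl T t)) hy
          (hvty y ⟨hy.1.le, hy.2.le⟩ _ (mT t))
        simpa only [eL y ⟨hy.1.le, hy.2.le⟩] using h1
      yG := fun t y hy => by
        have h1 := TW.cl_deriv
          (f := fun x => μ * (vy x (TW.cl T t) / J x (TW.cl T t)) - π x (TW.cl T t)) hy
          (((S.hw y ⟨hy.1.le, hy.2.le⟩ _ (mT t)).const_mul μ).sub
            (S.hPiy y ⟨hy.1.le, hy.2.le⟩ _ (mT t)))
        refine h1.congr_deriv ?_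
        simp only [eL y ⟨hy.1.le, hy.2.le⟩]
        linarith [S.eq2 y ⟨hy.1.le, hy.2.le⟩ _ (mT t)]
      v_0 := fun t => by
        simp only [e0L]
        exact (hbv _ (mT t)).1
      v_L := fun t => by
        simp only [eLL]
        exact (hbv _ (mT t)).2
      vt_0 := fun t => by
        simp only [e0L]
        exact hvt0 _ (mT t) 0 ⟨le_rfl, hL.le⟩ fun s hs => (hbv s hs).1
      vt_L := fun t => by
        simp only [eLL]
        exact hvt0 _ (mT t) L ⟨hL.le, le_rfl⟩ fun s hs => (hbv s hs).2
      π0n := fun y => by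
        simp only [e0T]
        exact hπ0 _ (mL y)
      π0P := fun y => by
        simp only [e0T]
        have c0 : ContinuousOn (fun y => |π y 0|) (Icc 0 L) := by
          have : ContinuousOn (fun y => π y 0) (Icc 0 L) :=
            fun y hy => (S.hPiy y hy 0 ⟨le_rfl, hT.le⟩).continuousWithinAt
          exact this.abs
        exact (le_abs_self _).trans ((le_csSup (isCompact_Icc.bddAbove_image c0)
          (mem_image_of_mem (fun y => |π y 0|) (mL y))).trans hsup)
      J0l := fun y => by
        simp only [e0T]
        exact (hJ0 _ (mL y)).1
      J0b := fun y => by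
        simp only [e0T]
        exact (hJ0 _ (mL y)).2
      iJ := (iL _ _ fun y hy => by simp only [e0T, eL y hy]).trans iJ
      iρ := (iL _ _ fun y hy => by simp only [eL y hy]).trans iρ
      iE := (iL _ _ fun y hy => by simp only [e0T, eL y hy]).trans iE
      iG := by
        refine le_of_eq_of_le (iL _ _ fun y hy => ?_) (Real.sqrt_le_iff.mp iG).2
        simp only [e0T, eL y hy]
        ring }
  refine le_of_eq_of_le ?_ key
  apply intervalIntegral.integral_congr
  intro t ht
  rw [uIcc_of_le hT.le] at ht
  simp only
  congr 1
  exact iL _ _ fun y hy => by simp only [eT t ht, eL y hy]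
end
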